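/- arXiv:1708.05343 — 2 statements merged into one kernel-verified Lean document; each statement's English description precedes it below -/
import Mathlib

section
/- Let d ≥ 1, let a, b ∈ ℝ, c > 0, and let b₁,…,b_d > 0 and p₁,…,p_d > 0 be real numbers such that max{p_j, c/b_j} ≥ 1 for each j = 1,…,d. Define V(m) = a·m + b·m² + (1 + c·m)·∏_{j=1}^{d} (1 + b_j·m)^{p_j} (with real powers, for m in a neighborhood of 0 where all factors are positive). If b ≥ −1 then V belongs to the class 𝒱; if b ≥ 0 then V belongs to the class 𝒱∞. -/
open MeasureTheory Filter

noncomputable section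

/-- The Cauchy–Stieltjes kernel density `f(x,m) = V(m)/(V(m)+m(m-x))`. -/
def cskKernel (V : ℝ → ℝ) (m x : ℝ) : ℝ := V m / (V m + m * (m - x))

/-- `ν` is a non-degenerate, compactly supported probability measure on `ℝ` with mean `0`. -/
def IsCSKGenerator (ν : Measure ℝ) : Prop :=
  IsProbabilityMeasure ν ∧
  (∃ R : ℝ, ν (Set.Icc (-R) R)ᶜ = 0) ∧
  (∀ a : ℝ, ν ≠ Measure.dirac a) ∧
  (∫ x, x ∂ν) = 0

/-- `V` is the variance function of the CSK family generated by `ν`: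
`V` is real-analytic near `0`, `V 0 > 0`, and for all `m` near `0` the kernel
`f(x,m)` is a.e. nonnegative, integrates to `1`, and has mean `m`. -/
def IsCSKVarianceFun (ν : Measure ℝ) (V : ℝ → ℝ) : Prop :=
  AnalyticAt ℝ V 0 ∧ 0 < V 0 ∧
  ∃ ε > 0, ∀ m : ℝ, |m| < ε →
    (∀ᵐ x ∂ν, 0 ≤ cskKernel V m x) ∧
    (∫ x, cskKernel V m x ∂ν) = 1 ∧
    (∫ x, x * cskKernel V m x ∂ν) = m

/-- The class `𝒱` of variance functions of CSK families generated by
non-degenerate compactly supported probability measures with mean `0` and variance `1`. -/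
def memV (V : ℝ → ℝ) : Prop :=
  ∃ ν : Measure ℝ, IsCSKGenerator ν ∧ (∫ x, x ^ 2 ∂ν) = 1 ∧ IsCSKVarianceFun ν V

/-- The class `𝒱∞`: those `V` such that `m ↦ V (c * m)` is in `𝒱` for every real `c`. -/
def memVinf (V : ℝ → ℝ) : Prop := ∀ c : ℝ, memV (fun m => V (c * m))

/-! For `m ≠ 0` near `0` put `z = (V m + m ^ 2) / m`. Then `cskKernel V m x = (V m / m) / (z - x)`,
so the kernel has total mass `1` if and only if the Cauchy transform `G_ν` satisfies
`G_ν(z) = m / V m`, and its mean is then automatically `m`. Taking `G_ν = 1 / (z - G_λ)`, it is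
enough to find a compactly supported probability measure `λ` with `G_λ(P m / m) = m` for
`P m = V m + m ^ 2`, that is, `P m = 1 + m R_λ(m)` with `R_λ` the `R`-transform of `λ`.

The functions `P` arising in this way are closed under `P ↦ P(t m) + a m` (affine images of `λ`),
`P ↦ P + B m ^ 2` with `B ≥ 0` (free convolution with a semicircle law) and
`P ↦ (1 + m) P(m / (1 + m))` (`G / (1 - G)` is again a Cauchy transform). They contain the products
`∏ ((1 - σ m) / (1 - m)) ^ q` with `0 ≤ σ ≤ 1` and `q ≥ 0`, which the last operation, followed by a
dilation, turns into `(1 + c m) ∏ (1 + b m) ^ q` with `b = c (1 - σ) ≤ c`. If some `b` exceeds `c`,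
exchange the largest factor with `1 + c m`; its exponent is at least `1`.

In each case the measure exists because the required function is conjugation symmetric, maps the
upper half-plane to the closed lower one and behaves like `1 / z` at infinity. In the Joukowski
coordinate `z = s + 1 / s` this makes it a typically real function on the unit disc, to which
Robertson's integral representation applies. Functions given only implicitly are limits of a
contracting iteration whose steps stay in this class.
-/

namespace CSK
open Topology ComplexConjugate Bornology Complex

/-- The complement in `ℂ` of a set of reals: the natural domain of the Cauchy transform of a
measure on that set. -/
def realCompl (K : Set ℝ) : Set ℂ := ((↑) '' K)ᶜ

/-- The Cauchy transform `G_μ(z) = ∫ (z - x)⁻¹ dμ(x)`. The measure lives on the subtype `K`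
because for compact `K` continuous functions on `K` are integrable and the probability measures
on `K` form a compact space. -/
def cauchyTransform {K : Set ℝ} (μ : Measure K) (z : ℂ) : ℂ := ∫ x, (z - ((x : ℝ) : ℂ))⁻¹ ∂μ

section CauchyTransform

variable {K : Set ℝ} {z w : ℂ} {x R : ℝ}

lemma mem_realCompl : z ∈ realCompl K ↔ ∀ x ∈ K, z ≠ x := by
  simp [realCompl, eq_comm]

lemma ofReal_mem_realCompl : (x : ℂ) ∈ realCompl K ↔ x ∉ K := by
  simp [realCompl]

lemma mem_realCompl_of_im_ne_zero (hz : z.im ≠ 0) : z ∈ realCompl K :=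
  mem_realCompl.2 fun x _ h => hz (by simp [h])

lemma mem_realCompl_of_lt_norm (hR : K ⊆ Metric.closedBall 0 R) (hz : R < ‖z‖) :
    z ∈ realCompl K := by
  refine mem_realCompl.2 fun x hx h => hz.not_ge ?_
  simpa [h] using hR hx

lemma sub_ofReal_ne_zero (hz : z ∈ realCompl K) (x : K) : z - ((x : ℝ) : ℂ) ≠ 0 :=
  sub_ne_zero.2 (mem_realCompl.1 hz x x.2)

lemma sub_le_norm_sub_ofReal (hR : K ⊆ Metric.closedBall 0 R) (z : ℂ) (x : K) :
    ‖z‖ - R ≤ ‖z - ((x : ℝ) : ℂ)‖ := by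
  have hx : |(x : ℝ)| ≤ R := by simpa using hR x.2
  have := norm_sub_norm_le z ((x : ℝ) : ℂ)
  rw [norm_real, Real.norm_eq_abs] at this
  linarith

lemma continuous_inv_sub_ofReal (hz : z ∈ realCompl K) :
    Continuous fun x : K => (z - ((x : ℝ) : ℂ))⁻¹ :=
  Continuous.inv₀ (by fun_prop) (sub_ofReal_ne_zero hz)

lemma im_inv_sub_ofReal (z : ℂ) (x : ℝ) : ((z - x)⁻¹).im = -z.im / normSq (z - x) := by
  simp [inv_im]

lemma cauchyTransform_conj (μ : Measure K) (z : ℂ) :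
    cauchyTransform μ (conj z) = conj (cauchyTransform μ z) := by
  simp [cauchyTransform, ← integral_conj]

lemma cauchyTransform_dirac (x : K) (z : ℂ) :
    cauchyTransform (Measure.dirac x) z = (z - ((x : ℝ) : ℂ))⁻¹ :=
  integral_dirac _ x

lemma measurable_inv_sub_ofReal (z : ℂ) : Measurable fun x : K => (z - ((x : ℝ) : ℂ))⁻¹ := by
  fun_prop

lemma cauchyTransform_map_affine {K' : Set ℝ} (μ : Measure K) {φ : K → K'} (hφ : Measurable φ)
    {a t : ℝ} (hφt : ∀ x, (φ x : ℝ) = a + t * x) (z : ℂ) :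
    cauchyTransform (μ.map φ) (a + t * z) = t⁻¹ * cauchyTransform μ z := by
  rw [cauchyTransform, integral_map hφ.aemeasurable
    (measurable_inv_sub_ofReal _).aestronglyMeasurable, cauchyTransform, ← integral_const_mul]
  congr with x
  rw [hφt, ofReal_inv, ← mul_inv]
  push_cast
  ring

lemma cauchyTransform_eq_neg_resolventTransform (μ : Measure K) (z : ℂ) :
    cauchyTransform μ z = -resolventTransform (μ.map Subtype.val) z := by
  rw [resolventTransform_apply, integral_map (by fun_prop)
    measurable_resolvent.aestronglyMeasurable, ← integral_neg]
  simp [cauchyTransform, resolvent, ← inv_neg]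

lemma norm_cauchyTransform_le (μ : Measure K) [IsProbabilityMeasure μ]
    (hR : K ⊆ Metric.closedBall 0 R) (hz : R < ‖z‖) : ‖cauchyTransform μ z‖ ≤ (‖z‖ - R)⁻¹ := by
  have hker (x : K) : ‖(z - ((x : ℝ) : ℂ))⁻¹‖ ≤ (‖z‖ - R)⁻¹ := by
    rw [norm_inv]
    exact inv_anti₀ (sub_pos.2 hz) (sub_le_norm_sub_ofReal hR z x)
  simpa [cauchyTransform] using norm_integral_le_of_norm_le_const (μ := μ) (.of_forall hker)

variable [CompactSpace K]

lemma integrable_of_continuous {E : Type*} [NormedAddCommGroup E] {μ : Measure K}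
    [IsFiniteMeasure μ] {f : K → E} (hf : Continuous f) : Integrable f μ :=
  hf.integrable_of_hasCompactSupport (.of_compactSpace f)

lemma integral_neg_of_continuous {μ : Measure K} [IsProbabilityMeasure μ] {f : K → ℝ}
    (hf : Continuous f) (hneg : ∀ x, f x < 0) : ∫ x, f x ∂μ < 0 := by
  rw [← neg_pos, ← integral_neg, integral_pos_iff_support_of_nonneg
    (fun x => (neg_pos.2 (hneg x)).le) (integrable_of_continuous hf).neg,
    Function.support_eq_univ fun x => (neg_pos.2 (hneg x)).ne']
  simp

lemma differentiableOn_cauchyTransform (μ : Measure K) [IsFiniteMeasure μ] :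
    DifferentiableOn ℂ (cauchyTransform μ) (realCompl K) := by
  have hK : IsClosed K := (isCompact_iff_compactSpace.2 ‹_›).isClosed
  have hsupp : (μ.map Subtype.val).support ⊆ K :=
    Measure.support_subset_of_isClosed hK <| by
      rw [mem_ae_map_iff (by fun_prop) hK.measurableSet]
      simp
  rw [funext (cauchyTransform_eq_neg_resolventTransform μ)]
  intro z hz
  refine (hasDerivAt_resolventTransform z ?_).differentiableAt.fun_neg.differentiableWithinAt
  exact fun h => hz (Set.image_mono hsupp h)

lemma map_cauchyTransform (μ : Measure K) [IsFiniteMeasure μ] (ℓ : ℂ →L[ℝ] ℝ)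
    (hz : z ∈ realCompl K) :
    ℓ (cauchyTransform μ z) = ∫ x : K, ℓ ((z - ((x : ℝ) : ℂ))⁻¹) ∂μ :=
  (ℓ.integral_comp_comm (integrable_of_continuous (continuous_inv_sub_ofReal hz))).symm

lemma im_mul_cauchyTransform_nonpos (μ : Measure K) [IsFiniteMeasure μ] (hK : ∀ x ∈ K, 0 ≤ x)
    (hz : 0 < z.im) : (z * cauchyTransform μ z).im ≤ 0 := by
  have hzK : z ∈ realCompl K := mem_realCompl_of_im_ne_zero hz.ne'
  let ℓ : ℂ →L[ℝ] ℝ := imCLM.comp (ContinuousLinearMap.mul ℝ ℂ z)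
  rw [show (z * cauchyTransform μ z).im = ℓ (cauchyTransform μ z) from rfl,
    map_cauchyTransform μ ℓ hzK]
  refine integral_nonpos fun x => ?_
  have hx : z * (z - ((x : ℝ) : ℂ))⁻¹ = 1 + (x : ℝ) * (z - ((x : ℝ) : ℂ))⁻¹ := by
    field [sub_ofReal_ne_zero hzK x]
  have him : ℓ ((z - ((x : ℝ) : ℂ))⁻¹) = x * (-z.im / normSq (z - ((x : ℝ) : ℂ))) := by
    rw [← im_inv_sub_ofReal, ← im_ofReal_mul]
    simpa [ℓ] using congrArg im hx
  rw [Pi.zero_apply, him]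
  exact mul_nonpos_of_nonneg_of_nonpos (hK x x.2)
    (div_nonpos_of_nonpos_of_nonneg (neg_nonpos.2 hz.le) (normSq_nonneg _))

lemma tendsto_mul_cauchyTransform (μ : Measure K) [IsFiniteMeasure μ] :
    Tendsto (fun z => z * cauchyTransform μ z) (cobounded ℂ) (𝓝 (μ.real Set.univ : ℂ)) := by
  obtain ⟨R, hR⟩ : ∃ R, K ⊆ Metric.closedBall 0 R :=
    (isCompact_iff_compactSpace.2 ‹_›).isBounded.subset_closedBall 0
  have hlarge : ∀ᶠ z : ℂ in cobounded ℂ, 2 * |R| + 1 ≤ ‖z‖ :=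
    tendsto_norm_cobounded_atTop.eventually_ge_atTop _
  have : (cobounded ℂ).IsCountablyGenerated := by
    rw [← comap_norm_atTop]; infer_instance
  have hlim : ((μ.real Set.univ : ℝ) : ℂ) = ∫ _ : K, (1 : ℂ) ∂μ := by simp
  simp_rw [hlim, cauchyTransform, ← integral_const_mul]
  refine tendsto_integral_filter_of_dominated_convergence (fun _ => 2)
    (.of_forall fun z => ((measurable_inv_sub_ofReal z).const_mul z).aestronglyMeasurable)
    ?_ (integrable_const _) (.of_forall fun x => ?_)
  · filter_upwards [hlarge] with z hz
    refine .of_forall fun x => ?_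
    have hker := sub_le_norm_sub_ofReal hR z x
    rw [norm_mul, norm_inv, ← div_eq_mul_inv, div_le_iff₀] <;>
      linarith [le_abs_self R, abs_nonneg R]
  · have hinv : Tendsto (fun z : ℂ => (1 - ((x : ℝ) : ℂ) * z⁻¹)⁻¹) (cobounded ℂ)
        (𝓝 (1 - ((x : ℝ) : ℂ) * 0)⁻¹) :=
      ((tendsto_inv₀_cobounded.const_mul _).const_sub 1).inv₀ (by simp)
    rw [mul_zero, sub_zero, inv_one] at hinv
    refine hinv.congr' ?_
    filter_upwards [hlarge] with z hz
    have hz0 : z ≠ 0 := norm_pos_iff.1 (by linarith [abs_nonneg R])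
    rw [← mul_inv_cancel₀ hz0, ← sub_mul, mul_inv, inv_inv, mul_comm]

/-- Uses the weak compactness of the set of probability measures on `K`. -/
lemma exists_cauchyTransform_eq_of_tendsto (μ : ℕ → ProbabilityMeasure K) :
    ∃ ν : ProbabilityMeasure K, ∀ z ∈ realCompl K, ∀ l : ℂ,
      Tendsto (fun n => cauchyTransform (μ n : Measure K) z) atTop (𝓝 l) →
        cauchyTransform (ν : Measure K) z = l := by
  obtain ⟨ν, -, hν⟩ := isCompact_univ.ultrafilter_le_nhds ((hyperfilter ℕ).map μ) (by simp)
  refine ⟨ν, fun z hz l hl => ?_⟩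
  have hμ : Tendsto μ (hyperfilter ℕ : Filter ℕ) (𝓝 ν) := hν
  rw [ProbabilityMeasure.tendsto_iff_forall_integral_rclike_tendsto ℂ] at hμ
  exact tendsto_nhds_unique
    (hμ (BoundedContinuousFunction.mkOfCompact ⟨_, continuous_inv_sub_ofReal hz⟩))
    (hl.mono_left Nat.hyperfilter_le_atTop)

variable (μ : Measure K) [IsProbabilityMeasure μ]

lemma cauchyTransform_im_neg (hz : 0 < z.im) : (cauchyTransform μ z).im < 0 := by
  have hzK : z ∈ realCompl K := mem_realCompl_of_im_ne_zero hz.ne'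
  rw [← imCLM_apply, map_cauchyTransform μ imCLM hzK]
  refine integral_neg_of_continuous (imCLM.cont.comp (continuous_inv_sub_ofReal hzK)) fun x => ?_
  rw [imCLM_apply, im_inv_sub_ofReal]
  exact div_neg_of_neg_of_pos (neg_neg_of_pos hz) (normSq_pos.2 (sub_ofReal_ne_zero hzK x))

lemma cauchyTransform_re_neg (hx : ∀ y ∈ K, x < y) : (cauchyTransform μ x).re < 0 := by
  have hxK : (x : ℂ) ∈ realCompl K := ofReal_mem_realCompl.2 fun h => (hx x h).false
  rw [← reCLM_apply, map_cauchyTransform μ reCLM hxK]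
  refine integral_neg_of_continuous (reCLM.cont.comp (continuous_inv_sub_ofReal hxK)) fun y => ?_
  rw [← ofReal_sub, ← ofReal_inv, reCLM_apply, ofReal_re]
  exact inv_lt_zero.2 (sub_neg.2 (hx y y.2))

lemma norm_cauchyTransform_sub_le (hR : K ⊆ Metric.closedBall 0 R) (hz : R < ‖z‖)
    (hw : R < ‖w‖) : ‖cauchyTransform μ z - cauchyTransform μ w‖ ≤
      ‖z - w‖ / ((‖z‖ - R) * (‖w‖ - R)) := by
  have hzK := mem_realCompl_of_lt_norm hR hz
  have hwK := mem_realCompl_of_lt_norm hR hw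
  have hker (x : K) : ‖(z - ((x : ℝ) : ℂ))⁻¹ - (w - ((x : ℝ) : ℂ))⁻¹‖ ≤
      ‖z - w‖ / ((‖z‖ - R) * (‖w‖ - R)) := by
    rw [inv_sub_inv (sub_ofReal_ne_zero hzK x) (sub_ofReal_ne_zero hwK x), sub_sub_sub_cancel_right,
      norm_div, norm_mul, norm_sub_rev]
    have := sub_pos.2 hz
    have := sub_pos.2 hw
    gcongr <;> exact sub_le_norm_sub_ofReal hR _ x
  rw [cauchyTransform, cauchyTransform, ← integral_sub
    (integrable_of_continuous (continuous_inv_sub_ofReal hzK))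
    (integrable_of_continuous (continuous_inv_sub_ofReal hwK))]
  simpa using norm_integral_le_of_norm_le_const (μ := μ) (.of_forall hker)

end CauchyTransform

/-- Functions with the analytic properties of the Cauchy transform of a probability measure on
`K`. On a segment they are exactly these transforms, see
`IsCauchyType.exists_cauchyTransform_eq`. -/
structure IsCauchyType (K : Set ℝ) (f : ℂ → ℂ) : Prop where
  differentiableOn : DifferentiableOn ℂ f (realCompl K)
  map_conj : ∀ z ∈ realCompl K, f (conj z) = conj (f z)
  im_nonpos : ∀ z : ℂ, 0 < z.im → (f z).im ≤ 0
  tendsto_mul : Tendsto (fun z => z * f z) (cobounded ℂ) (𝓝 1)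

lemma isCauchyType_cauchyTransform {K : Set ℝ} [CompactSpace K] (μ : Measure K)
    [IsProbabilityMeasure μ] : IsCauchyType K (cauchyTransform μ) where
  differentiableOn := differentiableOn_cauchyTransform μ
  map_conj z _ := cauchyTransform_conj μ z
  im_nonpos _ hz := (cauchyTransform_im_neg μ hz).le
  tendsto_mul := by simpa using tendsto_mul_cauchyTransform μ

lemma IsCauchyType.tendsto_zero {K : Set ℝ} {f : ℂ → ℂ} (hf : IsCauchyType K f) :
    Tendsto f (cobounded ℂ) (𝓝 0) := by
  have h := hf.tendsto_mul.mul (tendsto_inv₀_cobounded (α := ℂ))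
  rw [mul_zero] at h
  refine h.congr' ?_
  filter_upwards [eventually_ne_cobounded (0 : ℂ)] with z hz
  field

lemma tendsto_add_mul_cobounded (a : ℂ) {t : ℂ} (ht : t ≠ 0) :
    Tendsto (fun z => a + t * z) (cobounded ℂ) (cobounded ℂ) :=
  (tendsto_const_add_cobounded a).comp (tendsto_mul_left_cobounded ht)

lemma IsCauchyType.comp_affine {K K' : Set ℝ} {f : ℂ → ℂ} (hf : IsCauchyType K' f) {a t : ℝ}
    (ht : 0 < t) (hK : ∀ x ∈ K', ∃ y ∈ K, a + t * y = x) :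
    IsCauchyType K fun z => t * f (a + t * z) := by
  have htC : (t : ℂ) ≠ 0 := ofReal_ne_zero.2 ht.ne'
  have hmem : ∀ z ∈ realCompl K, (a + t * z : ℂ) ∈ realCompl K' := by
    refine fun z hz => mem_realCompl.2 fun x hx h => ?_
    obtain ⟨y, hy, rfl⟩ := hK x hx
    push_cast at h
    exact mem_realCompl.1 hz y hy (mul_left_cancel₀ htC (add_left_cancel h))
  refine ⟨(hf.differentiableOn.comp (by fun_prop) hmem).const_mul _, fun z hz => ?_,
    fun z hz => ?_, ?_⟩
  · simpa using congrArg ((t : ℂ) * ·) (hf.map_conj _ (hmem z hz))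
  · rw [im_ofReal_mul]
    exact mul_nonpos_of_nonneg_of_nonpos ht.le (hf.im_nonpos _ (by simpa using mul_pos ht hz))
  · have hlim := tendsto_add_mul_cobounded a htC
    have h := (hf.tendsto_mul.comp hlim).sub ((hf.tendsto_zero.comp hlim).const_mul (a : ℂ))
    rw [mul_zero, sub_zero] at h
    refine h.congr fun z => ?_
    simp only [Function.comp_apply]
    ring

lemma tendsto_cobounded_of_tendsto_mul {𝕜 : Type*} [NormedField 𝕜] {f : 𝕜 → 𝕜}
    (hf : Tendsto (fun x => x * f x) (𝓝[≠] 0) (𝓝 1)) : Tendsto f (𝓝[≠] 0) (cobounded 𝕜) := by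
  have h : Tendsto (fun x => ‖x * f x‖ * ‖x⁻¹‖) (𝓝[≠] 0) atTop :=
    (norm_one (α := 𝕜) ▸ hf.norm).pos_mul_atTop one_pos
      (tendsto_norm_atTop_iff_cobounded.2 tendsto_inv₀_nhdsNE_zero)
  refine tendsto_norm_atTop_iff_cobounded.1 (h.congr' ?_)
  filter_upwards [self_mem_nhdsWithin] with x (hx : x ≠ 0)
  rw [← norm_mul, mul_right_comm, mul_inv_cancel₀ hx, one_mul]

/-- The Joukowski map, which sends the punctured unit disc onto the complement of `[-2, 2]`. -/
def joukowski (s : ℂ) : ℂ := s + s⁻¹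

section Joukowski

variable {s t ζ : ℂ}

lemma joukowski_eq_joukowski (hs : s ≠ 0) (ht : t ≠ 0) (h : joukowski s = joukowski t) :
    s = t ∨ s = t⁻¹ := by
  rw [joukowski, joukowski] at h
  have : (s - t) * (s - t⁻¹) = 0 := by
    field_simp at h ⊢
    linear_combination h
  simpa [sub_eq_zero] using this

lemma joukowski_of_norm_eq_one (hs : ‖s‖ = 1) : joukowski s = (2 * s.re : ℝ) := by
  rw [joukowski, inv_eq_conj hs, add_conj]

lemma im_joukowski (s : ℂ) : (joukowski s).im = s.im * (1 - (normSq s)⁻¹) := by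
  rw [joukowski, add_im, inv_im]
  ring

lemma joukowski_conj (s : ℂ) : joukowski (conj s) = conj (joukowski s) := by
  simp [joukowski]

lemma joukowski_inv (s : ℂ) : joukowski s⁻¹ = joukowski s := by
  rw [joukowski, inv_inv, add_comm, joukowski]

lemma one_sub_inv_normSq_neg (hs0 : s ≠ 0) (hs : ‖s‖ < 1) : 1 - (normSq s)⁻¹ < 0 := by
  rw [sub_neg, one_lt_inv₀ (normSq_pos.2 hs0), normSq_eq_norm_sq]
  exact pow_lt_one₀ (norm_nonneg s) hs two_ne_zero

lemma joukowski_mem_realCompl (hs0 : s ≠ 0) (hs : ‖s‖ < 1) :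
    joukowski s ∈ realCompl (Set.Icc (-2) 2) := by
  refine mem_realCompl.2 fun x hx hsx => ?_
  set E : ℂ := exp (Real.arccos (x / 2) * I)
  have hE : ‖E‖ = 1 := norm_exp_ofReal_mul_I _
  have hEx : joukowski E = x := by
    rw [joukowski_of_norm_eq_one hE, exp_ofReal_mul_I_re,
      Real.cos_arccos (by linarith [hx.1]) (by linarith [hx.2]), mul_div_cancel₀ _ two_ne_zero]
  rcases joukowski_eq_joukowski hs0 (exp_ne_zero _) (hsx.trans hEx.symm) with h | h
  · exact hs.ne (h ▸ hE)
  · exact hs.ne (by rw [h, norm_inv, hE, inv_one])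

lemma exists_joukowski_eq {z : ℂ} (hz : z ∈ realCompl (Set.Icc (-2) 2)) :
    ∃ s, s ≠ 0 ∧ ‖s‖ < 1 ∧ joukowski s = z := by
  obtain ⟨s, hs⟩ := exists_quadratic_eq_zero (a := (1 : ℂ)) (b := -z) (c := 1) one_ne_zero
    (IsAlgClosed.exists_eq_mul_self _)
  have hs0 : s ≠ 0 := by rintro rfl; simp at hs
  have hsz : joukowski s = z := by
    rw [joukowski]
    field_simp
    linear_combination hs
  rcases lt_trichotomy ‖s‖ 1 with h | h | h
  · exact ⟨s, hs0, h, hsz⟩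
  · rw [← hsz, joukowski_of_norm_eq_one h, ofReal_mem_realCompl] at hz
    have := abs_le.1 (h ▸ abs_re_le_norm s)
    exact (hz ⟨by linarith, by linarith⟩).elim
  · exact ⟨s⁻¹, inv_ne_zero hs0, norm_inv s ▸ inv_lt_one_of_one_lt₀ h, (joukowski_inv s).trans hsz⟩

lemma differentiableAt_joukowski (hs : s ≠ 0) : DifferentiableAt ℂ joukowski s :=
  differentiableAt_id.add (differentiableAt_inv hs)

lemma tendsto_mul_joukowski : Tendsto (fun s => s * joukowski s) (𝓝[≠] 0) (𝓝 1) := by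
  have h : Tendsto (fun s : ℂ => s ^ 2 + 1) (𝓝 0) (𝓝 (0 ^ 2 + 1)) := by
    apply Continuous.tendsto
    fun_prop
  rw [zero_pow two_ne_zero, zero_add] at h
  refine (h.mono_left nhdsWithin_le_nhds).congr' ?_
  filter_upwards [self_mem_nhdsWithin] with s (hs : s ≠ 0)
  rw [joukowski]
  field

lemma tendsto_joukowski_cobounded : Tendsto joukowski (𝓝[≠] 0) (cobounded ℂ) :=
  tendsto_cobounded_of_tendsto_mul tendsto_mul_joukowski

lemma sub_joukowski (hs : s ≠ 0) (hζ : ζ ≠ 0) :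
    joukowski s - joukowski ζ = (1 - s * ζ) * (ζ - s) / (s * ζ) := by
  rw [joukowski, joukowski]
  field

end Joukowski

section TypicallyReal

open Real (circleAverage)

variable {f : ℂ → ℂ} {s ζ : ℂ}

lemma one_sub_mul_ne_zero (hs : ‖s‖ < 1) (hζ : ‖ζ‖ ≤ 1) : 1 - s * ζ ≠ 0 := by
  refine sub_ne_zero.2 fun h => ?_
  have : ‖s * ζ‖ < 1 := norm_mul s ζ ▸ mul_lt_one_of_nonneg_of_lt_one_left (norm_nonneg _) hs hζ
  simp [← h] at this

lemma continuousOn_sphere_of_diffContOnCl {c : ℂ} {R : ℝ} (hR : R ≠ 0)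
    (hf : DiffContOnCl ℂ f (Metric.ball c R)) : ContinuousOn f (Metric.sphere c R) := by
  refine hf.continuousOn.mono ?_
  rw [closure_ball _ hR]
  exact Metric.sphere_subset_closedBall

lemma circleAverage_div_one_sub (hf : DiffContOnCl ℂ f (Metric.ball 0 1)) (hs : ‖s‖ < 1) :
    circleAverage (fun ζ => (1 - s * ζ)⁻¹ • f ζ) 0 1 = f 0 := by
  have hd : DiffContOnCl ℂ (fun ζ => (1 - s * ζ)⁻¹ • f ζ) (Metric.ball 0 1) := by
    refine DiffContOnCl.smul (DiffContOnCl.inv ?_ fun ζ hζ => ?_) hf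
    · exact (by fun_prop : Differentiable ℂ fun ζ => 1 - s * ζ).diffContOnCl
    · rw [closure_ball _ one_ne_zero, mem_closedBall_zero_iff] at hζ
      exact one_sub_mul_ne_zero hs hζ
  have h := DiffContOnCl.circleAverage (R := 1) (by simpa using hd)
  rwa [mul_zero, sub_zero, inv_one, one_mul] at h

lemma circleAverage_mul_joukowski_kernel (hf : DiffContOnCl ℂ f (Metric.ball 0 1)) (hs0 : s ≠ 0)
    (hs : ‖s‖ < 1) : circleAverage (fun ζ => f ζ * ((ζ - ζ⁻¹) * (joukowski s - joukowski ζ)⁻¹)) 0 1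
      = f 0 - f s := by
  have hcont : ContinuousOn f (Metric.sphere 0 |1|) := by
    rw [abs_one]
    exact continuousOn_sphere_of_diffContOnCl one_ne_zero hf
  have hne : ∀ ζ ∈ Metric.sphere (0 : ℂ) |1|, ζ ≠ 0 ∧ ζ - s ≠ 0 ∧ 1 - s * ζ ≠ 0 := by
    intro ζ hζ
    rw [abs_one, mem_sphere_zero_iff_norm] at hζ
    refine ⟨norm_ne_zero_iff.1 (by simp [hζ]), sub_ne_zero.2 ?_, one_sub_mul_ne_zero hs hζ.le⟩
    rintro rfl
    exact hs.ne hζ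
  have hpoisson := DiffContOnCl.circleAverage_smul_div (R := 1) (c := 0) (f := f) (w := s)
    (by simpa using hf) (by simpa using hs)
  rw [← circleAverage_div_one_sub hf hs, ← hpoisson, ← Real.circleAverage_fun_sub]
  · refine Real.circleAverage_congr_sphere fun ζ hζ => ?_
    obtain ⟨hζ0, hζs, hsζ⟩ := hne ζ hζ
    simp only [smul_eq_mul, sub_zero]
    rw [sub_joukowski hs0 hζ0]
    rw [mul_comm] at hsζ
    field
  · exact ContinuousOn.circleIntegrable' ((ContinuousOn.inv₀ (by fun_prop)
      fun ζ hζ => (hne ζ hζ).2.2).smul hcont)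
  · exact ContinuousOn.circleIntegrable' ((ContinuousOn.div (by fun_prop) (by fun_prop)
      fun ζ hζ => (hne ζ hζ).2.1).smul hcont)

lemma joukowski_sub_joukowski_ne_zero (hs0 : s ≠ 0) (hs : ‖s‖ < 1) (hζ : ‖ζ‖ = 1) :
    joukowski s - joukowski ζ ≠ 0 := by
  have h := abs_le.1 (hζ ▸ abs_re_le_norm ζ)
  rw [sub_ne_zero, joukowski_of_norm_eq_one hζ]
  exact mem_realCompl.1 (joukowski_mem_realCompl hs0 hs) _ ⟨by linarith, by linarith⟩

lemma continuousOn_inv_joukowski_sub (hs0 : s ≠ 0) (hs : ‖s‖ < 1) :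
    ContinuousOn (fun ζ => (joukowski s - joukowski ζ)⁻¹) (Metric.sphere 0 1) := by
  refine ContinuousOn.inv₀ (continuousOn_const.sub fun ζ hζ => ?_) fun ζ hζ =>
    joukowski_sub_joukowski_ne_zero hs0 hs (mem_sphere_zero_iff_norm.1 hζ)
  exact (differentiableAt_joukowski (ne_zero_of_mem_unit_sphere ⟨ζ, hζ⟩)).continuousAt
    |>.continuousWithinAt

lemma circleAverage_im_mul_im_joukowski_kernel (hf : DiffContOnCl ℂ f (Metric.ball 0 1))
    (hconj : ∀ ζ : ℂ, ‖ζ‖ = 1 → f (conj ζ) = conj (f ζ)) (hs0 : s ≠ 0) (hs : ‖s‖ < 1) :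
    circleAverage (fun ζ => ((f ζ).im * ζ.im) • (joukowski s - joukowski ζ)⁻¹) 0 1
      = (f s - f 0) / 2 := by
  let h : ℂ → ℂ := fun ζ => f ζ * ((ζ - ζ⁻¹) * (joukowski s - joukowski ζ)⁻¹)
  have hinv : ContinuousOn (fun ζ : ℂ => ζ⁻¹) (Metric.sphere 0 1) :=
    continuousOn_inv₀.mono fun ζ hζ => ne_zero_of_mem_unit_sphere ⟨ζ, hζ⟩
  have hmaps : Set.MapsTo (fun ζ : ℂ => ζ⁻¹) (Metric.sphere 0 1) (Metric.sphere 0 1) := by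
    intro ζ hζ
    simpa using hζ
  have hcont : ContinuousOn h (Metric.sphere 0 |1|) := by
    rw [abs_one]
    exact (continuousOn_sphere_of_diffContOnCl one_ne_zero hf).mul
      ((continuousOn_id.sub hinv).mul (continuousOn_inv_joukowski_sub hs0 hs))
  have hcont' : ContinuousOn (fun ζ => h ζ⁻¹) (Metric.sphere 0 |1|) := by
    rw [abs_one] at hcont ⊢
    exact hcont.comp hinv hmaps
  have havg : circleAverage h 0 1 = f 0 - f s := circleAverage_mul_joukowski_kernel hf hs0 hs
  calc circleAverage (fun ζ => ((f ζ).im * ζ.im) • (joukowski s - joukowski ζ)⁻¹) 0 1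
      = circleAverage (fun ζ => (-1 / 4 : ℂ) • (h ζ + h ζ⁻¹)) 0 1 := by
        refine Real.circleAverage_congr_sphere fun ζ hζ => ?_
        rw [abs_one, mem_sphere_zero_iff_norm] at hζ
        have hfζ : f ζ - f ζ⁻¹ = (2 * (f ζ).im : ℝ) * I := by
          rw [inv_eq_conj hζ, hconj ζ hζ, sub_conj]
        have hζζ : ζ - ζ⁻¹ = (2 * ζ.im : ℝ) * I := by rw [inv_eq_conj hζ, sub_conj]
        have hh : h ζ + h ζ⁻¹ =
            (f ζ - f ζ⁻¹) * (ζ - ζ⁻¹) * (joukowski s - joukowski ζ)⁻¹ := by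
          simp only [h, joukowski_inv, inv_inv]
          ring
        simp only [hh, hfζ, hζζ, real_smul, smul_eq_mul]
        push_cast
        linear_combination ((f ζ).im * ζ.im * (joukowski s - joukowski ζ)⁻¹) * I_sq
    _ = (-1 / 4 : ℂ) • (circleAverage h 0 1 + circleAverage h 0 1) := by
        rw [Real.circleAverage_fun_smul, Real.circleAverage_fun_add hcont.circleIntegrable'
          hcont'.circleIntegrable', Real.circleAverage_zero_one_congr_inv]
    _ = (f s - f 0) / 2 := by
        rw [havg, smul_eq_mul]
        ring

lemma exists_integral_eq_circleAverage {X : Type*} [TopologicalSpace X] [MeasurableSpace X]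
    [BorelSpace X] {c : ℂ} {R : ℝ} {w : ℂ → ℝ} (hw : ContinuousOn w (Metric.sphere c |R|))
    (hw0 : ∀ ζ ∈ Metric.sphere c |R|, 0 ≤ w ζ) {φ : ℂ → X} (hφ : Continuous φ) :
    ∃ μ : Measure X, IsFiniteMeasure μ ∧ ∀ g : X → ℂ, Continuous g →
      ∫ x, g x ∂μ = circleAverage (fun ζ => w ζ • g (φ ζ)) c R := by
  have hmem (θ : ℝ) : circleMap c R θ ∈ Metric.sphere c |R| := circleMap_mem_sphere' c R θ
  have hwc : Continuous fun θ => (2 * Real.pi)⁻¹ * w (circleMap c R θ) :=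
    continuous_const.mul (hw.comp_continuous (continuous_circleMap c R) hmem)
  have hφc : Continuous fun θ => φ (circleMap c R θ) := hφ.comp (continuous_circleMap c R)
  refine ⟨((volume.restrict (Set.Ioc 0 (2 * Real.pi))).withDensity fun θ =>
    ENNReal.ofReal ((2 * Real.pi)⁻¹ * w (circleMap c R θ))).map fun θ => φ (circleMap c R θ),
    ?_, fun g hg => ?_⟩
  · have := isFiniteMeasure_withDensity_ofReal (hwc.integrableOn_Ioc (a := 0)
      (b := 2 * Real.pi) (μ := volume)).hasFiniteIntegral
    exact Measure.isFiniteMeasure_map _ _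
  · rw [integral_map hφc.measurable.aemeasurable hg.measurable.aestronglyMeasurable,
      integral_withDensity_eq_integral_toReal_smul hwc.measurable.ennreal_ofReal
        (.of_forall fun _ => ENNReal.ofReal_lt_top), Real.circleAverage_def,
      intervalIntegral.integral_of_le Real.two_pi_pos.le, ← integral_smul]
    congr with θ
    rw [ENNReal.toReal_ofReal (mul_nonneg (by positivity) (hw0 _ (hmem θ))), mul_smul]

lemma exists_isFiniteMeasure_cauchyTransform_joukowski (hf : DiffContOnCl ℂ f (Metric.ball 0 1))
    (hf0 : f 0 = 0) (hconj : ∀ ζ : ℂ, ‖ζ‖ = 1 → f (conj ζ) = conj (f ζ))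
    (him : ∀ ζ : ℂ, ‖ζ‖ = 1 → 0 ≤ (f ζ).im * ζ.im) :
    ∃ μ : Measure (Set.Icc (-2 : ℝ) 2), IsFiniteMeasure μ ∧ ∀ s, s ≠ 0 → ‖s‖ < 1 →
      cauchyTransform μ (joukowski s) = f s := by
  have hw : ContinuousOn (fun ζ => 2 * ((f ζ).im * ζ.im)) (Metric.sphere 0 |1|) := by
    rw [abs_one]
    exact continuousOn_const.mul ((continuous_im.comp_continuousOn
      (continuousOn_sphere_of_diffContOnCl one_ne_zero hf)).mul continuous_im.continuousOn)
  have h22 : (-2 : ℝ) ≤ 2 := by norm_num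
  obtain ⟨μ, hμfin, hμ⟩ := exists_integral_eq_circleAverage hw
    (fun ζ hζ => mul_nonneg zero_le_two (him ζ (by simpa using hζ)))
    (φ := fun ζ => Set.projIcc (-2) 2 h22 (2 * ζ.re)) (continuous_projIcc.comp (by fun_prop))
  refine ⟨μ, hμfin, fun s hs0 hs => ?_⟩
  rw [cauchyTransform, hμ _ (continuous_inv_sub_ofReal (joukowski_mem_realCompl hs0 hs))]
  calc _ = circleAverage
        (fun ζ => (2 : ℝ) • ((f ζ).im * ζ.im) • (joukowski s - joukowski ζ)⁻¹) 0 1 := by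
        refine Real.circleAverage_congr_sphere fun ζ hζ => ?_
        rw [abs_one, mem_sphere_zero_iff_norm] at hζ
        have hre := abs_le.1 (hζ ▸ abs_re_le_norm ζ)
        rw [Set.projIcc_of_mem _ ⟨by linarith, by linarith⟩, joukowski_of_norm_eq_one hζ, mul_smul]
    _ = f s := by
        rw [Real.circleAverage_fun_smul, circleAverage_im_mul_im_joukowski_kernel hf hconj hs0 hs,
          hf0, sub_zero, real_smul]
        push_cast
        ring

/-- Comparing the two sides of the representation at infinity shows that `μ` has mass one. -/
lemma exists_cauchyTransform_joukowski_of_diffContOnCl (hf : DiffContOnCl ℂ f (Metric.ball 0 1))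
    (hf0 : f 0 = 0) (hf' : HasDerivAt f 1 0)
    (hconj : ∀ ζ : ℂ, ‖ζ‖ = 1 → f (conj ζ) = conj (f ζ))
    (him : ∀ ζ : ℂ, ‖ζ‖ = 1 → 0 ≤ (f ζ).im * ζ.im) :
    ∃ μ : ProbabilityMeasure (Set.Icc (-2 : ℝ) 2), ∀ s, s ≠ 0 → ‖s‖ < 1 →
      cauchyTransform (μ : Measure (Set.Icc (-2 : ℝ) 2)) (joukowski s) = f s := by
  obtain ⟨μ, _, hG⟩ := exists_isFiniteMeasure_cauchyTransform_joukowski hf hf0 hconj him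
  have hmass : Tendsto (fun s => joukowski s * cauchyTransform μ (joukowski s)) (𝓝[≠] 0) (𝓝 1) := by
    have h := tendsto_mul_joukowski.mul (hasDerivAt_iff_tendsto_slope_zero.1 hf')
    rw [mul_one] at h
    refine h.congr' ?_
    filter_upwards [self_mem_nhdsWithin, mem_nhdsWithin_of_mem_nhds
      (Metric.ball_mem_nhds (0 : ℂ) one_pos)] with s (hs0 : s ≠ 0) hs
    rw [hG s hs0 (mem_ball_zero_iff.1 hs), hf0, zero_add, sub_zero, smul_eq_mul]
    field
  have hone : (μ.real Set.univ : ℂ) = 1 := tendsto_nhds_unique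
    ((tendsto_mul_cauchyTransform μ).comp tendsto_joukowski_cobounded) hmass
  have : IsProbabilityMeasure μ := ⟨by
    rwa [ofReal_eq_one, Measure.real, ENNReal.toReal_eq_one_iff] at hone⟩
  exact ⟨⟨μ, this⟩, hG⟩

lemma exists_cauchyTransform_joukowski_dilation (hf : DifferentiableOn ℂ f (Metric.ball 0 1))
    (hf0 : f 0 = 0) (hf' : HasDerivAt f 1 0)
    (hconj : ∀ s : ℂ, ‖s‖ < 1 → f (conj s) = conj (f s))
    (him : ∀ s : ℂ, ‖s‖ < 1 → 0 ≤ (f s).im * s.im) {r : ℝ} (hr : r ∈ Set.Ioo 0 1) :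
    ∃ μ : ProbabilityMeasure (Set.Icc (-2 : ℝ) 2), ∀ s, s ≠ 0 → ‖s‖ < 1 →
      cauchyTransform (μ : Measure (Set.Icc (-2 : ℝ) 2)) (joukowski s) = (r : ℂ)⁻¹ * f (r * s) := by
  have hr0 : (r : ℂ) ≠ 0 := ofReal_ne_zero.2 hr.1.ne'
  have hlt {s : ℂ} (hs : ‖s‖ ≤ 1) : ‖(r : ℂ) * s‖ < 1 := by
    rw [norm_mul, norm_real, Real.norm_of_nonneg hr.1.le]
    exact mul_lt_one_of_nonneg_of_lt_one_left hr.1.le hr.2 hs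
  apply exists_cauchyTransform_joukowski_of_diffContOnCl
  · refine (DifferentiableOn.diffContOnCl_ball (U := (fun s => (r : ℂ) * s) ⁻¹' Metric.ball 0 1)
      ((hf.comp (f := fun s => (r : ℂ) * s) (by fun_prop) fun s hs => hs).const_mul _)
      fun s hs => ?_)
    exact mem_ball_zero_iff.2 (hlt (mem_closedBall_zero_iff.1 hs))
  · rw [mul_zero, hf0, mul_zero]
  · have h := (HasDerivAt.comp (h₂ := f) (h := fun s => (r : ℂ) * s) 0 (by simpa using hf')
      ((hasDerivAt_id 0).const_mul _)).const_mul (r : ℂ)⁻¹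
    simpa [hr0] using h
  · intro s hs
    simpa using congrArg ((r : ℂ)⁻¹ * ·) (hconj _ (hlt hs.le))
  · intro s hs
    have h := him _ (hlt hs.le)
    rw [im_ofReal_mul, mul_left_comm] at h
    rw [← ofReal_inv, im_ofReal_mul, mul_assoc]
    exact mul_nonneg (inv_nonneg.2 hr.1.le) (nonneg_of_mul_nonneg_right h hr.1)

/-- Robertson's representation of typically real functions: for the dilations `s ↦ f (r * s) / r`
the measure has a density given by boundary values, and then `r → 1`. -/
lemma exists_cauchyTransform_joukowski (hf : DifferentiableOn ℂ f (Metric.ball 0 1))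
    (hf0 : f 0 = 0) (hf' : HasDerivAt f 1 0)
    (hconj : ∀ s : ℂ, ‖s‖ < 1 → f (conj s) = conj (f s))
    (him : ∀ s : ℂ, ‖s‖ < 1 → 0 ≤ (f s).im * s.im) :
    ∃ μ : ProbabilityMeasure (Set.Icc (-2 : ℝ) 2), ∀ s, s ≠ 0 → ‖s‖ < 1 →
      cauchyTransform (μ : Measure (Set.Icc (-2 : ℝ) 2)) (joukowski s) = f s := by
  obtain ⟨r, -, hr, hr1⟩ := exists_seq_strictMono_tendsto' (one_pos (α := ℝ))
  choose μ hμ using fun n =>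
    exists_cauchyTransform_joukowski_dilation hf hf0 hf' hconj him (hr n)
  obtain ⟨ν, hν⟩ := exists_cauchyTransform_eq_of_tendsto μ
  refine ⟨ν, fun s hs0 hs => hν _ (joukowski_mem_realCompl hs0 hs) _ ?_⟩
  simp only [hμ _ s hs0 hs]
  have hrC : Tendsto (fun n => (r n : ℂ)) atTop (𝓝 1) := (continuous_ofReal.tendsto 1).comp hr1
  have hfs : ContinuousAt f s := (hf.differentiableAt
    (Metric.isOpen_ball.mem_nhds (mem_ball_zero_iff.2 hs))).continuousAt
  simpa using (hrC.inv₀ one_ne_zero).mul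
    (hfs.tendsto.comp (by simpa using hrC.mul_const s))

end TypicallyReal

section Representation

variable {f : ℂ → ℂ}

lemma IsCauchyType.hasDerivAt_update_comp_joukowski {K : Set ℝ} (hf : IsCauchyType K f) :
    HasDerivAt (Function.update (f ∘ joukowski) 0 0) 1 0 := by
  rw [hasDerivAt_iff_tendsto_slope_zero]
  have h : Tendsto (fun s => (joukowski s * f (joukowski s)) / (s * joukowski s)) (𝓝[≠] 0)
      (𝓝 (1 / 1)) :=
    (hf.tendsto_mul.comp tendsto_joukowski_cobounded).div tendsto_mul_joukowski one_ne_zero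
  rw [div_one] at h
  refine h.congr' ?_
  filter_upwards [self_mem_nhdsWithin, tendsto_joukowski_cobounded.eventually
    (eventually_ne_cobounded 0)] with s (hs : s ≠ 0) hJ
  rw [zero_add, Function.update_of_ne hs, Function.update_self, sub_zero, smul_eq_mul,
    Function.comp_apply]
  field

lemma IsCauchyType.differentiableOn_update_comp_joukowski
    (hf : IsCauchyType (Set.Icc (-2) 2) f) :
    DifferentiableOn ℂ (Function.update (f ∘ joukowski) 0 0) (Metric.ball 0 1) := by
  rw [← differentiableOn_compl_singleton_and_continuousAt_iff
    (Metric.ball_mem_nhds (0 : ℂ) one_pos)]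
  refine ⟨?_, hf.hasDerivAt_update_comp_joukowski.continuousAt⟩
  refine DifferentiableOn.congr (f := f ∘ joukowski) ?_ fun s hs => Function.update_of_ne hs.2 _ _
  exact hf.differentiableOn.comp
    (fun s hs => (differentiableAt_joukowski hs.2).differentiableWithinAt)
    fun s hs => joukowski_mem_realCompl hs.2 (mem_ball_zero_iff.1 hs.1)

lemma IsCauchyType.im_mul_im_nonpos {K : Set ℝ} (hf : IsCauchyType K f) (z : ℂ) :
    (f z).im * z.im ≤ 0 := by
  rcases lt_trichotomy z.im 0 with hz | hz | hz
  · have hpos : 0 < (conj z).im := by simpa using hz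
    have h := hf.im_nonpos _ hpos
    rw [hf.map_conj z (mem_realCompl_of_im_ne_zero hz.ne), conj_im] at h
    exact mul_nonpos_of_nonneg_of_nonpos (neg_nonpos.1 h) hz.le
  · rw [hz, mul_zero]
  · exact mul_nonpos_of_nonpos_of_nonneg (hf.im_nonpos z hz) hz.le

lemma IsCauchyType.exists_cauchyTransform_joukowski_eq
    (hf : IsCauchyType (Set.Icc (-2) 2) f) :
    ∃ μ : ProbabilityMeasure (Set.Icc (-2 : ℝ) 2), ∀ z ∈ realCompl (Set.Icc (-2) 2),
      cauchyTransform (μ : Measure (Set.Icc (-2 : ℝ) 2)) z = f z := by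
  let g : ℂ → ℂ := Function.update (f ∘ joukowski) 0 0
  have hg0 : g 0 = 0 := Function.update_self _ _ _
  have hg {s : ℂ} (hs : s ≠ 0) : g s = f (joukowski s) := Function.update_of_ne hs _ _
  have hconj : ∀ s : ℂ, ‖s‖ < 1 → g (conj s) = conj (g s) := by
    intro s hs
    rcases eq_or_ne s 0 with rfl | hs0
    · rw [map_zero, hg0, map_zero]
    · rw [hg hs0, hg ((map_ne_zero _).2 hs0), joukowski_conj,
        hf.map_conj _ (joukowski_mem_realCompl hs0 hs)]
  have him : ∀ s : ℂ, ‖s‖ < 1 → 0 ≤ (g s).im * s.im := by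
    intro s hs
    rcases eq_or_ne s 0 with rfl | hs0
    · simp
    have h := hf.im_mul_im_nonpos (joukowski s)
    rw [im_joukowski, ← mul_assoc] at h
    exact hg hs0 ▸ nonneg_of_mul_nonpos_left h (one_sub_inv_normSq_neg hs0 hs)
  obtain ⟨μ, hμ⟩ := exists_cauchyTransform_joukowski hf.differentiableOn_update_comp_joukowski
    hg0 hf.hasDerivAt_update_comp_joukowski hconj him
  refine ⟨μ, fun z hz => ?_⟩
  obtain ⟨s, hs0, hs, rfl⟩ := exists_joukowski_eq hz
  exact (hμ s hs0 hs).trans (hg hs0)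

theorem IsCauchyType.exists_cauchyTransform_eq {α β : ℝ} (hαβ : α < β)
    (hf : IsCauchyType (Set.Icc α β) f) :
    ∃ μ : ProbabilityMeasure (Set.Icc α β), ∀ z ∈ realCompl (Set.Icc α β),
      cauchyTransform (μ : Measure (Set.Icc α β)) z = f z := by
  obtain ⟨a, t, ht, rfl, rfl⟩ : ∃ a t, 0 < t ∧ α = a + t * -2 ∧ β = a + t * 2 :=
    ⟨(α + β) / 2, (β - α) / 4, by linarith, by ring, by ring⟩
  have htC : (t : ℂ) ≠ 0 := ofReal_ne_zero.2 ht.ne'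
  have hmaps : ∀ y ∈ Set.Icc (-2 : ℝ) 2, a + t * y ∈ Set.Icc (a + t * -2) (a + t * 2) := by
    rintro y ⟨hy, hy'⟩
    constructor <;> gcongr
  have hsurj : ∀ x ∈ Set.Icc (a + t * -2) (a + t * 2), ∃ y ∈ Set.Icc (-2 : ℝ) 2, a + t * y = x := by
    rintro x ⟨hx, hx'⟩
    refine ⟨(x - a) / t, ⟨(le_div_iff₀ ht).2 ?_, (div_le_iff₀ ht).2 ?_⟩, by field⟩ <;> linarith
  obtain ⟨μ, hμ⟩ := (hf.comp_affine ht hsurj).exists_cauchyTransform_joukowski_eq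
  let φ : Set.Icc (-2 : ℝ) 2 → Set.Icc (a + t * -2) (a + t * 2) :=
    fun y => ⟨a + t * y, hmaps y y.2⟩
  have hφ : Measurable φ := by fun_prop
  refine ⟨μ.map hφ.aemeasurable, fun z hz => ?_⟩
  have hzw : z = a + t * ((z - a) / t) := by field
  have hw : (z - a) / t ∈ realCompl (Set.Icc (-2) 2) := by
    refine mem_realCompl.2 fun y hy h => mem_realCompl.1 hz _ (hmaps y hy) ?_
    rw [hzw, h]
    push_cast
    rfl
  rw [hzw, ProbabilityMeasure.toMeasure_map, cauchyTransform_map_affine _ hφ (fun _ => rfl),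
    hμ _ hw, ofReal_inv, inv_mul_cancel_left₀ htC]

end Representation

section Iteration

lemma tendsto_iterate_of_lipschitzOnWith {X : Type*} [PseudoMetricSpace X] {f : X → X} {s : Set X}
    {κ : NNReal} (hκ : κ < 1) (hmaps : Set.MapsTo f s s) (hf : LipschitzOnWith κ f s) {x m : X}
    (hx : x ∈ s) (hm : m ∈ s) (hfix : f m = m) : Tendsto (fun n => f^[n] x) atTop (𝓝 m) := by
  have hdist (n : ℕ) : dist (f^[n] x) m ≤ κ ^ n * dist x m := by
    induction n with
    | zero => simp
    | succ n ih =>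
      rw [Function.iterate_succ_apply']
      calc dist (f (f^[n] x)) m = dist (f (f^[n] x)) (f m) := by rw [hfix]
        _ ≤ κ * dist (f^[n] x) m := hf.dist_le_mul _ (hmaps.iterate n hx) _ hm
        _ ≤ κ * (κ ^ n * dist x m) := by gcongr
        _ = κ ^ (n + 1) * dist x m := by ring
  refine tendsto_iff_dist_tendsto_zero.2 (squeeze_zero (fun _ => dist_nonneg) hdist ?_)
  simpa using (tendsto_pow_atTop_nhds_zero_of_lt_one κ.coe_nonneg (by exact_mod_cast hκ)).mul_const
    (dist x m)

/-- Starting from the point mass at `0`, each step `G z ↦ Φ z (G z)` yields the Cauchy transform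
of another measure by `IsCauchyType.exists_cauchyTransform_eq`; a weak limit point of these
measures has the required transform. The sets `D z` carry the estimates, available only outside a
disc, that keep the iteration going. -/
theorem exists_cauchyTransform_eq_of_tendsto_iterate {α β R : ℝ} (hαβ : α < β)
    (h0 : (0 : ℝ) ∈ Set.Icc α β) (hR : Set.Icc α β ⊆ Metric.closedBall 0 R) {D : ℂ → Set ℂ}
    {Φ : ℂ → ℂ → ℂ} (hD : ∀ z, R < ‖z‖ → z⁻¹ ∈ D z)
    (hmaps : ∀ z, R < ‖z‖ → Set.MapsTo (Φ z) (D z) (D z))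
    (hΦ : ∀ μ : ProbabilityMeasure (Set.Icc α β),
      (∀ z, R < ‖z‖ → cauchyTransform (μ : Measure (Set.Icc α β)) z ∈ D z) →
        IsCauchyType (Set.Icc α β) fun z => Φ z (cauchyTransform (μ : Measure (Set.Icc α β)) z)) :
    ∃ μ : ProbabilityMeasure (Set.Icc α β), ∀ z ∈ realCompl (Set.Icc α β), ∀ m,
      Tendsto (fun n => (Φ z)^[n] z⁻¹) atTop (𝓝 m) →
        cauchyTransform (μ : Measure (Set.Icc α β)) z = m := by
  let G (μ : ProbabilityMeasure (Set.Icc α β)) : ℂ → ℂ :=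
    cauchyTransform (μ : Measure (Set.Icc α β))
  have hexists (n : ℕ) : ∃ μ, (∀ z, R < ‖z‖ → G μ z ∈ D z) ∧
      ∀ z ∈ realCompl (Set.Icc α β), G μ z = (Φ z)^[n] z⁻¹ := by
    induction n with
    | zero =>
      let δ₀ : ProbabilityMeasure (Set.Icc α β) := ⟨Measure.dirac ⟨0, h0⟩, inferInstance⟩
      have hδ₀ (z : ℂ) : G δ₀ z = z⁻¹ := (cauchyTransform_dirac _ z).trans (by simp)
      exact ⟨δ₀, fun z hz => hδ₀ z ▸ hD z hz, fun z _ => hδ₀ z⟩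
    | succ n ih =>
      obtain ⟨μ, hμD, hμ⟩ := ih
      obtain ⟨ν, hν⟩ := (hΦ μ hμD).exists_cauchyTransform_eq hαβ
      refine ⟨ν, fun z hz => ?_, fun z hz => ?_⟩
      · exact Set.mem_of_eq_of_mem (hν z (mem_realCompl_of_lt_norm hR hz)) (hmaps z hz (hμD z hz))
      · rw [Function.iterate_succ_apply', ← hμ z hz]
        exact hν z hz
  choose μ _ hμ using hexists
  obtain ⟨ν, hν⟩ := exists_cauchyTransform_eq_of_tendsto μ
  exact ⟨ν, fun z hz m hm => hν z hz m (hm.congr fun n => (hμ n z hz).symm)⟩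

end Iteration

/-- `P m = 1 + m R(m)` for the `R`-transform `R` of a compactly supported probability measure
`μ`; equivalently, `m ↦ P m / m` inverts the Cauchy transform of `μ` near `∞`. -/
def IsFreeCumulantFun (P : ℝ → ℝ) : Prop :=
  ContinuousAt P 0 ∧ P 0 = 1 ∧ ∃ K : Set ℝ, IsCompact K ∧ ∃ μ : ProbabilityMeasure K,
    ∀ᶠ m in 𝓝[≠] 0, cauchyTransform (μ : Measure K) (P m / m : ℝ) = m

lemma IsFreeCumulantFun.congr {P P' : ℝ → ℝ} (hP : IsFreeCumulantFun P) (h : P =ᶠ[𝓝 0] P') :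
    IsFreeCumulantFun P' := by
  obtain ⟨hcont, hP0, K, hK, μ, hμ⟩ := hP
  refine ⟨hcont.congr h, h.eq_of_nhds ▸ hP0, K, hK, μ, ?_⟩
  filter_upwards [hμ, h.filter_mono nhdsWithin_le_nhds] with m hm hPm
  rwa [← hPm]

lemma tendsto_ofReal_div_cobounded {P : ℝ → ℝ} (hP : ContinuousAt P 0) (hP0 : P 0 = 1) :
    Tendsto (fun m => ((P m / m : ℝ) : ℂ)) (𝓝[≠] 0) (cobounded ℂ) := by
  have h : Tendsto (fun m => P m / m) (𝓝[≠] 0) (cobounded ℝ) := by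
    refine tendsto_cobounded_of_tendsto_mul ?_
    refine Tendsto.congr' ?_ (hP0 ▸ hP.tendsto.mono_left nhdsWithin_le_nhds)
    filter_upwards [self_mem_nhdsWithin] with m (hm : m ≠ 0)
    rw [mul_div_cancel₀ _ hm]
  rw [← tendsto_norm_atTop_iff_cobounded] at h ⊢
  simpa only [norm_real] using h

lemma eventually_lt_norm_ofReal_div {P : ℝ → ℝ} (hP : ContinuousAt P 0) (hP0 : P 0 = 1) (R : ℝ) :
    ∀ᶠ m in 𝓝[≠] 0, R < ‖((P m / m : ℝ) : ℂ)‖ :=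
  (tendsto_norm_cobounded_atTop.comp (tendsto_ofReal_div_cobounded hP hP0)).eventually_gt_atTop R

section Argument

variable {z u : ℂ}

lemma arg_mem_Ioo_of_im_pos (hz : 0 < z.im) : z.arg ∈ Set.Ioo 0 Real.pi := by
  refine ⟨(arg_nonneg_iff.2 hz.le).lt_of_ne' fun h => hz.ne' (arg_eq_zero_iff.1 h).2, ?_⟩
  exact (arg_le_pi z).lt_of_ne fun h => hz.ne' (arg_eq_pi_iff.1 h).2

lemma arg_add_arg_mem_Ioo (hz : 0 < z.im) (hu : u.im < 0) :
    z.arg + u.arg ∈ Set.Ioo (-Real.pi) Real.pi := by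
  have hz' := arg_mem_Ioo_of_im_pos hz
  have hu' := arg_neg_iff.2 hu
  exact ⟨by linarith [hz'.1, neg_pi_lt_arg u], by linarith [hz'.2]⟩

lemma arg_mul_of_im_pos_of_im_neg (hz : 0 < z.im) (hu : u.im < 0) :
    (z * u).arg = z.arg + u.arg := by
  refine arg_mul ?_ ?_ (Set.Ioo_subset_Ioc_self (arg_add_arg_mem_Ioo hz hu))
  · rintro rfl
    exact hz.ne rfl
  · rintro rfl
    exact hu.ne rfl

lemma mul_mem_slitPlane (hz : 0 < z.im) (hu : u.im < 0) : z * u ∈ slitPlane := by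
  refine mem_slitPlane_iff_arg.2 ⟨?_, mul_ne_zero ?_ ?_⟩
  · exact arg_mul_of_im_pos_of_im_neg hz hu ▸ (arg_add_arg_mem_Ioo hz hu).2.ne
  · rintro rfl
    exact hz.ne rfl
  · rintro rfl
    exact hu.ne rfl

lemma arg_nonpos_of_im_nonpos (hz : z ∈ slitPlane) (him : z.im ≤ 0) : z.arg ≤ 0 := by
  rcases him.lt_or_eq with h | h
  · exact (arg_neg_iff.2 h).le
  · refine (arg_eq_zero_iff.2 ⟨?_, h⟩).le
    rcases mem_slitPlane_iff.1 hz with hre | him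
    · exact hre.le
    · exact (him h).elim

lemma conj_mem_slitPlane : conj z ∈ slitPlane ↔ z ∈ slitPlane := by
  simp [mem_slitPlane_iff]

lemma log_conj_of_mem_slitPlane (hz : z ∈ slitPlane) : log (conj z) = conj (log z) :=
  log_conj z (mem_slitPlane_iff_arg.1 hz).1

lemma one_sub_mem_slitPlane_of_im_ne_zero (hu : u.im ≠ 0) : 1 - u ∈ slitPlane :=
  mem_slitPlane_iff.2 (.inr (by simpa using hu))

lemma im_exp_nonpos (h0 : -Real.pi ≤ z.im) (h1 : z.im ≤ 0) : (exp z).im ≤ 0 := by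
  rw [exp_im]
  exact mul_nonpos_of_nonneg_of_nonpos (Real.exp_pos _).le
    (Real.sin_nonpos_of_nonpos_of_neg_pi_le h1 h0)

lemma setOf_one_sub_mem_slitPlane_mem_nhds : {u : ℂ | 1 - u ∈ slitPlane} ∈ 𝓝 0 :=
  (isOpen_slitPlane.preimage (by fun_prop)).mem_nhds (by simp)

end Argument

/-- The functions `L` for which `exp (-L)` is shown below to be a free cumulant function. The upper
bound, which involves the arguments of points near the negative axis, controls the branch of the
logarithm in `multStep`. -/
structure IsPickExponent (Q : ℝ) (L : ℂ → ℂ) : Prop where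
  differentiableOn : DifferentiableOn ℂ L {u | 1 - u ∈ slitPlane}
  map_conj : ∀ u, 1 - u ∈ slitPlane → L (conj u) = conj (L u)
  map_zero : L 0 = 0
  im_nonneg : ∀ u : ℂ, u.im < 0 → 0 ≤ (L u).im
  im_le : ∀ u : ℂ, u.im < 0 → (L u).im ≤ Q * (Real.pi + u.arg)

/-- The iteration map whose fixed point equation `multStep θ L z u = u` amounts to
`z * u = exp (-L u)`. -/
def multStep (θ : ℝ) (L : ℂ → ℂ) (z u : ℂ) : ℂ := exp ((1 - θ) * log (z * u) - θ * L u) / z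

section MultStep

variable {L : ℂ → ℂ} {Q θ : ℝ} {z u : ℂ}

lemma IsPickExponent.im_multStep_nonpos (hL : IsPickExponent Q L) (hθ0 : 0 < θ) (hθ1 : θ ≤ 1)
    (hθQ : θ * Q ≤ 1 - θ) (hz : 0 < z.im) (hu : u.im < 0) (hzu : (z * u).im ≤ 0) :
    (multStep θ L z u).im ≤ 0 := by
  have hz0 : z ≠ 0 := by
    rintro rfl
    exact hz.ne rfl
  have harg := arg_mul_of_im_pos_of_im_neg hz hu
  have hargle : (z * u).arg ≤ 0 := arg_nonpos_of_im_nonpos (mul_mem_slitPlane hz hu) hzu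
  have hexp : multStep θ L z u = exp ((1 - θ) * log (z * u) - θ * L u - log z) := by
    rw [multStep, exp_sub _ (log z), exp_log hz0]
  have him : ((1 - θ) * log (z * u) - θ * L u - log z : ℂ).im =
      (1 - θ) * (z.arg + u.arg) - θ * (L u).im - z.arg := by
    rw [sub_im, sub_im, ← ofReal_one, ← ofReal_sub, im_ofReal_mul, im_ofReal_mul, log_im, log_im,
      harg]
  have hzarg := arg_mem_Ioo_of_im_pos hz
  have hLle : θ * (L u).im ≤ (1 - θ) * (Real.pi + u.arg) :=
    calc θ * (L u).im ≤ θ * (Q * (Real.pi + u.arg)) :=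
          mul_le_mul_of_nonneg_left (hL.im_le u hu) hθ0.le
      _ = θ * Q * (Real.pi + u.arg) := by ring
      _ ≤ (1 - θ) * (Real.pi + u.arg) :=
          mul_le_mul_of_nonneg_right hθQ (by linarith [neg_pi_lt_arg u])
  rw [hexp]
  apply im_exp_nonpos <;> rw [him]
  · have := mul_nonneg hθ0.le (sub_nonneg.2 hzarg.2.le)
    linarith
  · have h1 : (1 - θ) * (z.arg + u.arg) ≤ 0 :=
      mul_nonpos_of_nonneg_of_nonpos (sub_nonneg.2 hθ1) (harg ▸ hargle)
    have h2 := mul_nonneg hθ0.le (hL.im_nonneg u hu)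
    linarith [hzarg.1]

lemma IsPickExponent.multStep_conj (hL : IsPickExponent Q L) (hzu : z * u ∈ slitPlane)
    (hu : 1 - u ∈ slitPlane) : multStep θ L (conj z) (conj u) = conj (multStep θ L z u) := by
  rw [multStep, ← map_mul, log_conj_of_mem_slitPlane hzu, hL.map_conj u hu, multStep, map_div₀,
    ← exp_conj]
  simp

lemma IsPickExponent.differentiableOn_multStep (hL : IsPickExponent Q L) {G : ℂ → ℂ} {s : Set ℂ}
    (hG : DifferentiableOn ℂ G s) (hs0 : ∀ z ∈ s, z ≠ 0) (hs : ∀ z ∈ s, z * G z ∈ slitPlane)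
    (hs' : ∀ z ∈ s, 1 - G z ∈ slitPlane) : DifferentiableOn ℂ (fun z => multStep θ L z (G z)) s :=
  ((((differentiableOn_id.mul hG).clog hs).const_mul _).sub
    ((hL.differentiableOn.comp hG hs').const_mul _)).cexp.div differentiableOn_id hs0

lemma IsPickExponent.tendsto_mul_multStep (hL : IsPickExponent Q L) {K : Set ℝ} {G : ℂ → ℂ}
    (hG : IsCauchyType K G) :
    Tendsto (fun z => z * multStep θ L z (G z)) (cobounded ℂ) (𝓝 1) := by
  have hlog : Tendsto (fun z => log (z * G z)) (cobounded ℂ) (𝓝 0) := by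
    simpa [Function.comp_def] using
      (continuousAt_clog one_mem_slitPlane).tendsto.comp hG.tendsto_mul
  have hLG : Tendsto (fun z => L (G z)) (cobounded ℂ) (𝓝 0) := by
    have := (hL.differentiableOn.differentiableAt
      setOf_one_sub_mem_slitPlane_mem_nhds).continuousAt.tendsto
    rw [hL.map_zero] at this
    exact this.comp hG.tendsto_zero
  have hexp := (continuous_exp.tendsto _).comp
    ((hlog.const_mul (1 - θ : ℂ)).sub (hLG.const_mul (θ : ℂ)))
  rw [mul_zero, mul_zero, sub_zero, exp_zero] at hexp
  refine hexp.congr' ?_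
  filter_upwards [eventually_ne_cobounded (0 : ℂ)] with z hz
  rw [multStep, mul_div_cancel₀ _ hz]
  rfl

lemma mul_cauchyTransform_mem_slitPlane {R : ℝ} (μ : Measure (Set.Icc 0 R))
    [IsProbabilityMeasure μ] (hμ : ∀ x : ℝ, R < x →
      x * cauchyTransform μ x ∈ slitPlane ∧ 1 - cauchyTransform μ x ∈ slitPlane)
    (hz : z ∈ realCompl (Set.Icc 0 R)) :
    z * cauchyTransform μ z ∈ slitPlane ∧ 1 - cauchyTransform μ z ∈ slitPlane := by
  have hpos (w : ℂ) (hw : 0 < w.im) :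
      w * cauchyTransform μ w ∈ slitPlane ∧ 1 - cauchyTransform μ w ∈ slitPlane :=
    have hG := cauchyTransform_im_neg μ hw
    ⟨mul_mem_slitPlane hw hG, one_sub_mem_slitPlane_of_im_ne_zero hG.ne⟩
  rcases lt_trichotomy z.im 0 with hz' | hz' | hz'
  · obtain ⟨h1, h2⟩ := hpos (conj z) (by simpa using hz')
    rw [cauchyTransform_conj] at h1 h2
    rw [← map_mul, conj_mem_slitPlane] at h1
    rw [← map_one conj, ← map_sub, conj_mem_slitPlane] at h2
    exact ⟨h1, h2⟩
  · obtain ⟨x, rfl⟩ : ∃ x : ℝ, (x : ℂ) = z := ⟨z.re, ext rfl hz'.symm⟩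
    rw [ofReal_mem_realCompl, Set.mem_Icc, not_and_or, not_le, not_le] at hz
    rcases hz with hx | hx
    · have hre := cauchyTransform_re_neg μ fun y (hy : y ∈ Set.Icc 0 R) => hx.trans_le hy.1
      refine ⟨mem_slitPlane_iff.2 (.inl ?_), mem_slitPlane_iff.2 (.inl ?_)⟩
      · rw [re_ofReal_mul]
        exact mul_pos_of_neg_of_neg hx hre
      · rw [sub_re, one_re]
        linarith
    · exact hμ x hx
  · exact hpos z hz'

lemma IsPickExponent.isCauchyType_multStep (hL : IsPickExponent Q L) (hθ0 : 0 < θ) (hθ1 : θ ≤ 1)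
    (hθQ : θ * Q ≤ 1 - θ) {R : ℝ} (hR : 0 ≤ R) (μ : Measure (Set.Icc 0 R)) [IsProbabilityMeasure μ]
    (hμ : ∀ x : ℝ, R < x →
      x * cauchyTransform μ x ∈ slitPlane ∧ 1 - cauchyTransform μ x ∈ slitPlane) :
    IsCauchyType (Set.Icc 0 R) fun z => multStep θ L z (cauchyTransform μ z) := by
  have hslit (z : ℂ) (hz : z ∈ realCompl (Set.Icc 0 R)) :=
    mul_cauchyTransform_mem_slitPlane μ hμ hz
  refine ⟨hL.differentiableOn_multStep (differentiableOn_cauchyTransform μ) ?_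
    (fun z hz => (hslit z hz).1) fun z hz => (hslit z hz).2, fun z hz => ?_, fun z hz => ?_,
    hL.tendsto_mul_multStep (isCauchyType_cauchyTransform μ)⟩
  · rintro z hz rfl
    exact mem_realCompl.1 hz 0 ⟨le_rfl, hR⟩ ofReal_zero.symm
  · rw [cauchyTransform_conj, hL.multStep_conj (hslit z hz).1 (hslit z hz).2]
  · exact hL.im_multStep_nonpos hθ0 hθ1 hθQ hz (cauchyTransform_im_neg μ hz)
      (im_mul_cauchyTransform_nonpos μ (fun x hx => hx.1) hz)

end MultStep

/-- `multStep θ L z` in the coordinate `x = log (z * u)`. -/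
def logStep (θ : ℝ) (L : ℂ → ℂ) (z x : ℂ) : ℂ := (1 - θ) * x - θ * L (exp x / z)

section LogStep

variable {L : ℂ → ℂ} {Q θ : ℝ} {x y z : ℂ}

lemma multStep_exp_div (hz : z ≠ 0) (hx : |x.im| < Real.pi) :
    multStep θ L z (exp x / z) = exp (logStep θ L z x) / z := by
  rw [multStep, mul_div_cancel₀ _ hz, log_exp (abs_lt.1 hx).1 (abs_lt.1 hx).2.le, logStep]

lemma norm_exp_le_two (hx : ‖x‖ ≤ 1 / 2) : ‖exp x‖ ≤ 2 := by
  have h := norm_exp_sub_one_le (hx.trans one_half_lt_one.le)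
  have h' := norm_le_norm_add_norm_sub' (exp x) 1
  rw [norm_one] at h'
  linarith

lemma norm_exp_sub_exp_le (hx : ‖x‖ ≤ 1 / 2) (hy : ‖y‖ ≤ 1 / 2) :
    ‖exp x - exp y‖ ≤ 4 * ‖x - y‖ := by
  have hxy : ‖x - y‖ ≤ 1 := (norm_sub_le x y).trans (by linarith)
  calc ‖exp x - exp y‖ = ‖exp y‖ * ‖exp (x - y) - 1‖ := by
        rw [← norm_mul, mul_sub, ← exp_add, add_sub_cancel, mul_one]
    _ ≤ 2 * (2 * ‖x - y‖) := by
        gcongr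
        · exact norm_exp_le_two hy
        · exact norm_exp_sub_one_le hxy
    _ = 4 * ‖x - y‖ := by ring

lemma abs_im_lt_pi_div_two (hx : ‖x‖ ≤ 1 / 2) : |x.im| < Real.pi / 2 := by
  linarith [abs_im_le_norm x, Real.pi_gt_three]

lemma exp_mem_slitPlane_of_norm_le (hx : ‖x‖ ≤ 1 / 2) : exp x ∈ slitPlane := by
  refine mem_slitPlane_iff.2 (.inl ?_)
  rw [exp_re]
  exact mul_pos (Real.exp_pos _)
    (Real.cos_pos_of_mem_Ioo (abs_lt.1 (abs_im_lt_pi_div_two hx)))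

lemma norm_exp_div_lt {R : ℝ} (hR : 0 < R) (hz : R < ‖z‖) (hx : ‖x‖ ≤ 1 / 2) :
    ‖exp x / z‖ < 2 / R := by
  rw [norm_div]
  calc ‖exp x‖ / ‖z‖ ≤ 2 / ‖z‖ := by
        gcongr
        exact norm_exp_le_two hx
    _ < 2 / R := by gcongr

lemma mul_exp_div_mem_slitPlane {R : ℝ} (hR : 2 ≤ R) (hz : R < ‖z‖) (hx : ‖x‖ ≤ 1 / 2) :
    z * (exp x / z) ∈ slitPlane ∧ 1 - exp x / z ∈ slitPlane := by
  have hR0 : 0 < R := two_pos.trans_le hR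
  constructor
  · rw [mul_div_cancel₀ _ (norm_pos_iff.1 (hR0.trans hz))]
    exact exp_mem_slitPlane_of_norm_le hx
  · rw [sub_eq_add_neg]
    refine mem_slitPlane_of_norm_lt_one ?_
    rw [norm_neg]
    exact (norm_exp_div_lt hR0 hz hx).trans_le ((div_le_one hR0).2 hR)

lemma IsPickExponent.exists_lipschitzOnWith (hL : IsPickExponent Q L) :
    ∃ C : NNReal, ∃ δ > 0, LipschitzOnWith C L (Metric.ball 0 δ) := by
  have hdiff := hL.differentiableOn.analyticAt setOf_one_sub_mem_slitPlane_mem_nhds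
  obtain ⟨C, t, ht, hC⟩ := hdiff.contDiffAt.exists_lipschitzOnWith
  obtain ⟨δ, hδ, hδt⟩ := Metric.mem_nhds_iff.1 ht
  exact ⟨C, δ, hδ, hC.mono hδt⟩

lemma norm_logStep_sub_le {C : NNReal} {δ R : ℝ} (hC : LipschitzOnWith C L (Metric.ball 0 δ))
    (hθ0 : 0 ≤ θ) (hθ1 : θ ≤ 1) (hR : 0 < R) (hRδ : 2 / R ≤ δ) (hRC : 8 * C ≤ R) (hz : R < ‖z‖)
    (hx : ‖x‖ ≤ 1 / 2) (hy : ‖y‖ ≤ 1 / 2) :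
    ‖logStep θ L z x - logStep θ L z y‖ ≤ (1 - θ / 2) * ‖x - y‖ := by
  have hball {w : ℂ} (hw : ‖w‖ ≤ 1 / 2) : exp w / z ∈ Metric.ball 0 δ :=
    mem_ball_zero_iff.2 ((norm_exp_div_lt hR hz hw).trans_le hRδ)
  have hLip : ‖L (exp x / z) - L (exp y / z)‖ ≤ 1 / 2 * ‖x - y‖ :=
    calc ‖L (exp x / z) - L (exp y / z)‖ ≤ C * ‖exp x / z - exp y / z‖ :=
          hC.norm_sub_le (hball hx) (hball hy)
      _ ≤ C * (4 * ‖x - y‖ / R) := by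
          rw [← sub_div, norm_div]
          gcongr
          exact norm_exp_sub_exp_le hx hy
      _ = 8 * C / R * (1 / 2 * ‖x - y‖) := by ring
      _ ≤ 1 * (1 / 2 * ‖x - y‖) := by
          gcongr
          exact (div_le_one hR).2 hRC
      _ = 1 / 2 * ‖x - y‖ := one_mul _
  calc ‖logStep θ L z x - logStep θ L z y‖
      = ‖((1 - θ : ℝ) : ℂ) * (x - y) - θ * (L (exp x / z) - L (exp y / z))‖ := by
        rw [logStep, logStep]
        push_cast
        ring_nf
    _ ≤ (1 - θ) * ‖x - y‖ + θ * ‖L (exp x / z) - L (exp y / z)‖ := by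
        refine (norm_sub_le _ _).trans_eq ?_
        rw [norm_mul, norm_mul, norm_real, norm_real, Real.norm_of_nonneg (sub_nonneg.2 hθ1),
          Real.norm_of_nonneg hθ0]
    _ ≤ (1 - θ) * ‖x - y‖ + θ * (1 / 2 * ‖x - y‖) := by gcongr
    _ = (1 - θ / 2) * ‖x - y‖ := by ring

lemma norm_logStep_zero_le {C : NNReal} {δ R : ℝ} (hC : LipschitzOnWith C L (Metric.ball 0 δ))
    (hL0 : L 0 = 0) (hθ0 : 0 ≤ θ) (hR : 0 < R) (hRδ : 2 / R ≤ δ) (hRC : 8 * C ≤ R)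
    (hz : R < ‖z‖) : ‖logStep θ L z 0‖ ≤ θ / 4 := by
  have hδ : 0 < δ := (div_pos two_pos hR).trans_le hRδ
  have hz' : ‖1 / z‖ < 2 / R := exp_zero ▸ norm_exp_div_lt hR hz (by simp)
  have hLip : ‖L (1 / z)‖ ≤ C * ‖1 / z‖ := by
    simpa [hL0] using hC.norm_sub_le (mem_ball_zero_iff.2 (hz'.trans_le hRδ))
      (Metric.mem_ball_self hδ)
  calc ‖logStep θ L z 0‖ = θ * ‖L (1 / z)‖ := by
        rw [logStep, mul_zero, zero_sub, norm_neg, norm_mul, exp_zero, norm_real,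
          Real.norm_of_nonneg hθ0]
    _ ≤ θ * (C * (2 / R)) := by
        gcongr
        exact hLip.trans (by gcongr)
    _ = 8 * C / R * (θ / 4) := by ring
    _ ≤ 1 * (θ / 4) := by
        gcongr
        exact (div_le_one hR).2 hRC
    _ = θ / 4 := one_mul _

lemma IsPickExponent.exists_contracting_logStep (hL : IsPickExponent Q L) (hθ0 : 0 < θ)
    (hθ1 : θ ≤ 1) : ∃ R ≥ 2, ∃ κ < (1 : NNReal), ∀ z : ℂ, R < ‖z‖ →
      Set.MapsTo (logStep θ L z) (Metric.closedBall 0 (1 / 2)) (Metric.closedBall 0 (1 / 2)) ∧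
      LipschitzOnWith κ (logStep θ L z) (Metric.closedBall 0 (1 / 2)) := by
  obtain ⟨C, δ, hδ, hC⟩ := hL.exists_lipschitzOnWith
  obtain ⟨R, hR2, hRδ, hRC⟩ : ∃ R : ℝ, 2 ≤ R ∧ 2 / δ ≤ R ∧ 8 * C ≤ R :=
    ⟨max 2 (max (2 / δ) (8 * C)), by simp, by simp, by simp⟩
  have hR : 0 < R := two_pos.trans_le hR2
  rw [div_le_comm₀ hδ hR] at hRδ
  have hκ : 0 ≤ 1 - θ / 2 := by linarith
  refine ⟨R, hR2, (1 - θ / 2).toNNReal, Real.toNNReal_lt_one.2 (by linarith), fun z hz =>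
    ⟨fun x hx => ?_, LipschitzOnWith.of_dist_le_mul fun x hx y hy => ?_⟩⟩
  · rw [mem_closedBall_zero_iff] at hx ⊢
    have h := norm_logStep_sub_le hC hθ0.le hθ1 hR hRδ hRC hz hx (y := 0) (by simp)
    have h0 := norm_logStep_zero_le hC hL.map_zero hθ0.le hR hRδ hRC hz
    rw [sub_zero] at h
    have := norm_le_norm_add_norm_sub' (logStep θ L z x) (logStep θ L z 0)
    nlinarith
  · rw [mem_closedBall_zero_iff] at hx hy
    rw [dist_eq_norm, dist_eq_norm, Real.coe_toNNReal _ hκ]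
    exact norm_logStep_sub_le hC hθ0.le hθ1 hR hRδ hRC hz hx hy

lemma tendsto_iterate_multStep {κ : NNReal} (hκ : κ < 1) (hz : z ≠ 0)
    (hmaps : Set.MapsTo (logStep θ L z) (Metric.closedBall 0 (1 / 2)) (Metric.closedBall 0 (1 / 2)))
    (hlip : LipschitzOnWith κ (logStep θ L z) (Metric.closedBall 0 (1 / 2)))
    (hx : ‖x‖ ≤ 1 / 2) (hfix : logStep θ L z x = x) :
    Tendsto (fun n => (multStep θ L z)^[n] z⁻¹) atTop (𝓝 (exp x / z)) := by
  have h0 : (0 : ℂ) ∈ Metric.closedBall (0 : ℂ) (1 / 2) := by simp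
  have horbit (n : ℕ) : (multStep θ L z)^[n] z⁻¹ = exp ((logStep θ L z)^[n] 0) / z := by
    induction n with
    | zero => rw [Function.iterate_zero_apply, Function.iterate_zero_apply, exp_zero, one_div]
    | succ n ih =>
      have hn := abs_im_lt_pi_div_two (mem_closedBall_zero_iff.1 (hmaps.iterate n h0))
      rw [Function.iterate_succ_apply', ih, Function.iterate_succ_apply',
        multStep_exp_div hz (hn.trans (by linarith [Real.pi_pos]))]
  simp_rw [horbit]
  exact ((continuous_exp.tendsto x).comp (tendsto_iterate_of_lipschitzOnWith hκ hmaps hlip h0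
    (mem_closedBall_zero_iff.2 hx) hfix)).div_const z

lemma IsPickExponent.im_ofReal (hL : IsPickExponent Q L) {m : ℝ} (hm : 1 - (m : ℂ) ∈ slitPlane) :
    (L m).im = 0 :=
  conj_eq_iff_im.1 (by rw [← hL.map_conj _ hm, conj_ofReal])

lemma IsPickExponent.exists_cauchyTransform_eq_exp_div (hL : IsPickExponent Q L) (hQ : 0 ≤ Q) :
    ∃ R : ℝ, ∃ μ : ProbabilityMeasure (Set.Icc 0 R), ∀ z x : ℂ, R < ‖z‖ → ‖x‖ ≤ 1 / 2 →
      -L (exp x / z) = x → cauchyTransform (μ : Measure (Set.Icc 0 R)) z = exp x / z := by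
  obtain ⟨θ, hθ0, hθ1, hθQ⟩ : ∃ θ : ℝ, 0 < θ ∧ θ ≤ 1 ∧ θ * Q ≤ 1 - θ := by
    refine ⟨(Q + 1)⁻¹, by positivity, inv_le_one_of_one_le₀ (by linarith), le_of_eq ?_⟩
    field_simp
    ring
  obtain ⟨R, hR2, κ, hκ, hstep⟩ := hL.exists_contracting_logStep hθ0 hθ1
  have hR : 0 < R := two_pos.trans_le hR2
  have hz0 {z : ℂ} (hz : R < ‖z‖) : z ≠ 0 := norm_pos_iff.1 (hR.trans hz)
  have hIcc : Set.Icc 0 R ⊆ Metric.closedBall 0 R := by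
    rw [Real.closedBall_eq_Icc]
    exact Set.Icc_subset_Icc (by linarith) (by linarith)
  let D (z : ℂ) : Set ℂ := (fun x => exp x / z) '' Metric.closedBall 0 (1 / 2)
  suffices h : ∃ μ : ProbabilityMeasure (Set.Icc 0 R), ∀ z ∈ realCompl (Set.Icc 0 R), ∀ m,
      Tendsto (fun n => (multStep θ L z)^[n] z⁻¹) atTop (𝓝 m) →
        cauchyTransform (μ : Measure (Set.Icc 0 R)) z = m by
    obtain ⟨μ, hμ⟩ := h
    refine ⟨R, μ, fun z x hz hx hfix => hμ z (mem_realCompl_of_lt_norm hIcc hz) _ ?_⟩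
    refine tendsto_iterate_multStep hκ (hz0 hz) (hstep z hz).1 (hstep z hz).2 hx ?_
    rw [logStep, neg_eq_iff_eq_neg.1 hfix]
    ring
  refine exists_cauchyTransform_eq_of_tendsto_iterate hR ⟨le_rfl, hR.le⟩ hIcc (D := D)
    (fun z _ => ⟨0, by simp, by simp⟩) (fun z hz => ?_) fun ν hν =>
      hL.isCauchyType_multStep hθ0 hθ1 hθQ hR.le _ fun t ht => ?_
  · rintro _ ⟨x, hx, rfl⟩
    have hxim := abs_im_lt_pi_div_two (mem_closedBall_zero_iff.1 hx)
    exact ⟨_, (hstep z hz).1 hx,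
      (multStep_exp_div (hz0 hz) (hxim.trans (by linarith [Real.pi_pos]))).symm⟩
  · have ht' : R < ‖(t : ℂ)‖ := by rwa [norm_real, Real.norm_of_nonneg (hR.trans ht).le]
    obtain ⟨x, hx, hxt⟩ := hν t ht'
    exact hxt ▸ mul_exp_div_mem_slitPlane hR2 ht' (mem_closedBall_zero_iff.1 hx)

theorem IsPickExponent.isFreeCumulantFun (hL : IsPickExponent Q L) (hQ : 0 ≤ Q) :
    IsFreeCumulantFun fun m => Real.exp (-(L m).re) := by
  obtain ⟨R, μ, hμ⟩ := hL.exists_cauchyTransform_eq_exp_div hQ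
  have hLcont : ContinuousAt (fun m : ℝ => L m) 0 :=
    (hL.differentiableOn.differentiableAt
      (ofReal_zero ▸ setOf_one_sub_mem_slitPlane_mem_nhds)).continuousAt.comp
        continuous_ofReal.continuousAt
  have hPcont : ContinuousAt (fun m : ℝ => Real.exp (-(L m).re)) 0 :=
    Real.continuous_exp.continuousAt.comp (continuous_re.continuousAt.comp hLcont).neg
  have hP0 : Real.exp (-(L (0 : ℝ)).re) = 1 := by simp [hL.map_zero]
  refine ⟨hPcont, hP0, Set.Icc 0 R, isCompact_Icc, μ, ?_⟩
  have hslit : ∀ᶠ m : ℝ in 𝓝 0, 1 - (m : ℂ) ∈ slitPlane :=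
    continuous_ofReal.continuousAt (ofReal_zero ▸ setOf_one_sub_mem_slitPlane_mem_nhds)
  have hsmall : ∀ᶠ m : ℝ in 𝓝 0, ‖L m‖ < 1 / 2 :=
    hLcont.norm.eventually_lt_const (by simp [hL.map_zero])
  filter_upwards [hslit.filter_mono nhdsWithin_le_nhds, hsmall.filter_mono nhdsWithin_le_nhds,
    eventually_lt_norm_ofReal_div hPcont hP0 R] with m hm hLm hRm
  have hreal : ((L m).re : ℂ) = L m := ext rfl (hL.im_ofReal hm).symm
  have hdiv : exp (-L m) / ((Real.exp (-(L m).re) / m : ℝ) : ℂ) = m := by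
    push_cast
    rw [hreal, div_div_cancel₀ (exp_ne_zero _)]
  rw [hμ _ (-L m) hRm (by rw [norm_neg]; exact hLm.le) (by rw [hdiv]), hdiv]

end LogStep

section LogRatio

variable {σ Q q : ℝ} {u : ℂ} {L : ℂ → ℂ}

lemma arg_le_arg_of_im_mul_conj_nonneg {x y : ℂ} (hx : 0 < x.im) (hy : 0 < y.im)
    (hxy : 0 ≤ (y * conj x).im) : x.arg ≤ y.arg := by
  have hx' := arg_mem_Ioo_of_im_pos hx
  have harg := arg_mul_of_im_pos_of_im_neg hy (u := conj x) (by simpa using hx)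
  rw [← arg_nonneg_iff, harg, arg_conj, if_neg hx'.2.ne] at hxy
  linarith

lemma one_sub_mul_mem_slitPlane (h0 : 0 ≤ σ) (h1 : σ ≤ 1) (hu : 1 - u ∈ slitPlane) :
    1 - σ * u ∈ slitPlane := by
  have h := starConvex_one_slitPlane.add_smul_mem (y := -u) (by rwa [← sub_eq_add_neg]) h0 h1
  rwa [real_smul, mul_neg, ← sub_eq_add_neg] at h

lemma arg_one_sub_mul_le (h0 : 0 ≤ σ) (h1 : σ ≤ 1) (hu : u.im < 0) :
    (1 - σ * u).arg ≤ (1 - u).arg := by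
  have him : 0 < (1 - u).im := by simpa using hu
  rcases h0.lt_or_eq with h | rfl
  · refine arg_le_arg_of_im_mul_conj_nonneg ?_ him ?_
    · simpa using mul_neg_of_pos_of_neg h hu
    · have h' : ((1 - u) * conj (1 - σ * u)).im = (1 - σ) * -u.im := by
        simp only [map_sub, map_one, map_mul, conj_ofReal, mul_im, sub_re, sub_im, one_re, one_im,
          mul_re, ofReal_re, ofReal_im, conj_re, conj_im]
        ring
      rw [h']
      exact mul_nonneg (sub_nonneg.2 h1) (neg_nonneg.2 hu.le)
  · rw [ofReal_zero, zero_mul, sub_zero, arg_one]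
    exact arg_nonneg_iff.2 him.le

lemma arg_one_sub_le (hu : u.im < 0) : (1 - u).arg ≤ Real.pi + u.arg := by
  rw [add_comm, ← arg_neg_eq_arg_add_pi_of_im_neg hu]
  refine arg_le_arg_of_im_mul_conj_nonneg (by simpa using hu) (by simpa using hu) ?_
  have h : (-u * conj (1 - u)).im = -u.im := by
    simp only [map_sub, map_one, mul_im, sub_re, sub_im, neg_re, neg_im, one_re, one_im, conj_re,
      conj_im]
    ring
  rw [h]
  exact neg_nonneg.2 hu.le

lemma isPickExponent_log_sub_log (h0 : 0 ≤ σ) (h1 : σ ≤ 1) :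
    IsPickExponent 1 fun u => log (1 - u) - log (1 - σ * u) where
  differentiableOn := by
    refine DifferentiableOn.sub (DifferentiableOn.clog (by fun_prop) fun u hu => hu) ?_
    exact DifferentiableOn.clog (by fun_prop) fun u hu => one_sub_mul_mem_slitPlane h0 h1 hu
  map_conj u hu := by
    rw [map_sub, ← log_conj_of_mem_slitPlane hu,
      ← log_conj_of_mem_slitPlane (one_sub_mul_mem_slitPlane h0 h1 hu)]
    simp
  map_zero := by simp
  im_nonneg u hu := by
    rw [sub_im, log_im, log_im, sub_nonneg]
    exact arg_one_sub_mul_le h0 h1 hu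
  im_le u hu := by
    have h : 0 ≤ (1 - σ * u).arg :=
      arg_nonneg_iff.2 (by simpa using mul_nonpos_of_nonneg_of_nonpos h0 hu.le)
    rw [sub_im, log_im, log_im, one_mul]
    linarith [arg_one_sub_le hu]

lemma IsPickExponent.const_mul (hL : IsPickExponent Q L) (hq : 0 ≤ q) :
    IsPickExponent (q * Q) fun u => q * L u where
  differentiableOn := hL.differentiableOn.const_mul _
  map_conj u hu := by rw [hL.map_conj u hu, map_mul, conj_ofReal]
  map_zero := by rw [hL.map_zero, mul_zero]
  im_nonneg u hu := by
    rw [im_ofReal_mul]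
    exact mul_nonneg hq (hL.im_nonneg u hu)
  im_le u hu := by
    rw [im_ofReal_mul, mul_assoc]
    exact mul_le_mul_of_nonneg_left (hL.im_le u hu) hq

lemma IsPickExponent.sum {ι : Type*} {s : Finset ι} {Q : ι → ℝ} {L : ι → ℂ → ℂ}
    (hL : ∀ i ∈ s, IsPickExponent (Q i) (L i)) :
    IsPickExponent (∑ i ∈ s, Q i) fun u => ∑ i ∈ s, L i u where
  differentiableOn := DifferentiableOn.fun_sum fun i hi => (hL i hi).differentiableOn
  map_conj u hu := by
    rw [map_sum]
    exact Finset.sum_congr rfl fun i hi => (hL i hi).map_conj u hu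
  map_zero := Finset.sum_eq_zero fun i hi => (hL i hi).map_zero
  im_nonneg u hu := by
    rw [im_sum]
    exact Finset.sum_nonneg fun i hi => (hL i hi).im_nonneg u hu
  im_le u hu := by
    rw [im_sum, Finset.sum_mul]
    exact Finset.sum_le_sum fun i hi => (hL i hi).im_le u hu

theorem isFreeCumulantFun_prod_rpow {ι : Type*} {s : Finset ι} {σ q : ι → ℝ}
    (h0 : ∀ i ∈ s, 0 ≤ σ i) (h1 : ∀ i ∈ s, σ i ≤ 1) (hq : ∀ i ∈ s, 0 ≤ q i) :
    IsFreeCumulantFun fun m => ∏ i ∈ s, ((1 - σ i * m) / (1 - m)) ^ q i := by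
  have hL := IsPickExponent.sum fun i hi =>
    (isPickExponent_log_sub_log (h0 i hi) (h1 i hi)).const_mul (hq i hi)
  refine (hL.isFreeCumulantFun (Finset.sum_nonneg fun i hi => by simpa using hq i hi)).congr ?_
  filter_upwards [eventually_lt_nhds one_pos, eventually_gt_nhds (neg_lt_zero.2 one_pos)]
    with m hm hm'
  have hm1 : 0 < 1 - m := sub_pos.2 hm
  rw [re_sum, ← Finset.sum_neg_distrib, Real.exp_sum]
  refine Finset.prod_congr rfl fun i hi => ?_
  have hσm : 0 < 1 - σ i * m := by nlinarith [h0 i hi, h1 i hi]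
  rw [Real.rpow_def_of_pos (div_pos hσm hm1), Real.log_div hσm.ne' hm1.ne']
  have hlog : log (1 - m) - log (1 - σ i * m) =
      ((Real.log (1 - m) - Real.log (1 - σ i * m) : ℝ) : ℂ) := by
    push_cast [ofReal_log hm1.le, ofReal_log hσm.le]
    rfl
  rw [hlog, ← ofReal_mul, ofReal_re]
  ring_nf

end LogRatio

section ConstructionsOnCauchyTransforms

variable {K : Set ℝ} {R R' B : ℝ} {z u v : ℂ}

lemma Icc_neg_eq_closedBall (R : ℝ) : Set.Icc (-R) R = Metric.closedBall 0 R := by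
  rw [Real.closedBall_eq_Icc, zero_sub, zero_add]

lemma im_ne_zero_or_lt_norm (hz : z ∈ realCompl (Set.Icc (-R) R)) : z.im ≠ 0 ∨ R < ‖z‖ := by
  refine or_iff_not_imp_left.2 fun him => ?_
  have hre : (z.re : ℂ) = z := ext rfl (not_not.1 him).symm
  rwa [← hre, ofReal_mem_realCompl, Icc_neg_eq_closedBall, mem_closedBall_zero_iff, not_le,
    ← norm_real, hre] at hz

lemma mem_realCompl_of_mem_realCompl_Icc (hR : K ⊆ Metric.closedBall 0 R) (hRR' : R ≤ R')
    (hz : z ∈ realCompl (Set.Icc (-R') R')) : z ∈ realCompl K :=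
  mem_realCompl.2 fun x hx => mem_realCompl.1 hz x <|
    Icc_neg_eq_closedBall R' ▸ Metric.closedBall_subset_closedBall hRR' (hR hx)

lemma norm_cauchyTransform_lt_one (μ : Measure K) [IsProbabilityMeasure μ]
    (hR : K ⊆ Metric.closedBall 0 R) (hz : R + 1 < ‖z‖) : ‖cauchyTransform μ z‖ < 1 :=
  (norm_cauchyTransform_le μ hR (by linarith)).trans_lt (inv_lt_one_of_one_lt₀ (by linarith))

lemma lt_norm_sub_ofReal_mul (hB : 0 ≤ B) (hz : R + 2 + 2 * B < ‖z‖) (hu : ‖u‖ ≤ 1) :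
    R + 2 + B < ‖z - B * u‖ := by
  have h := norm_sub_norm_le z (B * u)
  rw [norm_mul, norm_real, Real.norm_of_nonneg hB] at h
  linarith [mul_le_mul_of_nonneg_left hu hB]

lemma norm_cauchyTransform_sub_mul_le_one (μ : Measure K) [IsProbabilityMeasure μ]
    (hR : K ⊆ Metric.closedBall 0 R) (hB : 0 ≤ B) (hz : R + 2 + 2 * B < ‖z‖) (hu : ‖u‖ ≤ 1) :
    ‖cauchyTransform μ (z - B * u)‖ ≤ 1 :=
  (norm_cauchyTransform_lt_one μ hR (by linarith [lt_norm_sub_ofReal_mul hB hz hu])).le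

variable [CompactSpace K]

lemma im_mul_im_cauchyTransform_neg (μ : Measure K) [IsProbabilityMeasure μ] (hz : z.im ≠ 0) :
    z.im * (cauchyTransform μ z).im < 0 := by
  rcases hz.lt_or_gt with h | h
  · have h' := cauchyTransform_im_neg μ (z := conj z) (by simpa using h)
    rw [cauchyTransform_conj, conj_im, neg_lt_zero] at h'
    exact mul_neg_of_neg_of_pos h h'
  · exact mul_neg_of_pos_of_neg h (cauchyTransform_im_neg μ h)

lemma im_sub_mul_cauchyTransform_ne_zero (μ : Measure K) [IsProbabilityMeasure μ] (hB : 0 ≤ B)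
    (hz : z.im ≠ 0) : (z - B * cauchyTransform μ z).im ≠ 0 := by
  intro h
  rw [sub_im, im_ofReal_mul, sub_eq_zero] at h
  have h1 := mul_nonpos_of_nonneg_of_nonpos hB (im_mul_im_cauchyTransform_neg μ hz).le
  have h2 : z.im * z.im = B * (z.im * (cauchyTransform μ z).im) := by
    rw [mul_left_comm, ← h]
  exact (mul_self_pos.2 hz).not_ge (h2.trans_le h1)

lemma isCauchyType_div_one_sub_cauchyTransform (μ : Measure K) [IsProbabilityMeasure μ]
    (hR : K ⊆ Metric.closedBall 0 R) : IsCauchyType (Set.Icc (-(R + 1)) (R + 1)) fun z =>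
      cauchyTransform μ z / (1 - cauchyTransform μ z) := by
  have hG := isCauchyType_cauchyTransform μ
  have hne {z : ℂ} (hz : z ∈ realCompl (Set.Icc (-(R + 1)) (R + 1))) :
      1 - cauchyTransform μ z ≠ 0 := by
    rw [sub_ne_zero]
    intro h
    rcases im_ne_zero_or_lt_norm hz with hz | hz
    · simpa [← h] using im_mul_im_cauchyTransform_neg μ hz
    · simpa [← h] using norm_cauchyTransform_lt_one μ hR hz
  have hdiff := hG.differentiableOn.mono fun z =>
    mem_realCompl_of_mem_realCompl_Icc hR (R' := R + 1) (by linarith)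
  refine ⟨hdiff.div (hdiff.const_sub 1) fun z hz => hne hz, fun z _ => ?_, fun z hz => ?_, ?_⟩
  · rw [cauchyTransform_conj, map_div₀, map_sub, map_one]
  · have h : cauchyTransform μ z / (1 - cauchyTransform μ z) = (1 - cauchyTransform μ z)⁻¹ - 1 := by
      have := hne (mem_realCompl_of_im_ne_zero hz.ne')
      field
    rw [h, sub_im, inv_im, sub_im, one_im, zero_sub, neg_neg, sub_zero]
    exact div_nonpos_of_nonpos_of_nonneg (cauchyTransform_im_neg μ hz).le (normSq_nonneg _)
  · have h := hG.tendsto_mul.div (hG.tendsto_zero.const_sub 1) (by simp)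
    rw [sub_zero, div_one] at h
    exact h.congr fun z => mul_div_assoc _ _ _

lemma isCauchyType_inv_sub_cauchyTransform (μ : Measure K) [IsProbabilityMeasure μ] (hR0 : 0 ≤ R)
    (hR : K ⊆ Metric.closedBall 0 R) : IsCauchyType (Set.Icc (-(R + 1)) (R + 1)) fun z =>
      (z - cauchyTransform μ z)⁻¹ := by
  have hG := isCauchyType_cauchyTransform μ
  have hne {z : ℂ} (hz : z ∈ realCompl (Set.Icc (-(R + 1)) (R + 1))) :
      z - cauchyTransform μ z ≠ 0 := by
    intro h
    rcases im_ne_zero_or_lt_norm hz with hz | hz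
    · refine im_sub_mul_cauchyTransform_ne_zero μ zero_le_one hz ?_
      rw [ofReal_one, one_mul, h, zero_im]
    · have := norm_cauchyTransform_lt_one μ hR hz
      rw [← sub_eq_zero.1 h] at this
      linarith
  have hdiff := hG.differentiableOn.mono fun z =>
    mem_realCompl_of_mem_realCompl_Icc hR (R' := R + 1) (by linarith)
  refine ⟨(differentiableOn_id.sub hdiff).inv fun z hz => hne hz, fun z _ => ?_, fun z hz => ?_, ?_⟩
  · rw [cauchyTransform_conj, map_inv₀, map_sub]
  · rw [inv_im, sub_im]
    refine div_nonpos_of_nonpos_of_nonneg ?_ (normSq_nonneg _)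
    linarith [cauchyTransform_im_neg μ hz]
  · have h := ((hG.tendsto_zero.mul tendsto_inv₀_cobounded).const_sub 1).inv₀ (by simp)
    rw [mul_zero, sub_zero, inv_one] at h
    refine h.congr' ?_
    filter_upwards [eventually_ne_cobounded (0 : ℂ)] with z hz
    rw [← div_eq_mul_inv, one_sub_div hz, inv_div, div_eq_mul_inv]

lemma isCauchyType_cauchyTransform_sub_mul (μ : Measure K) [IsProbabilityMeasure μ]
    (hR : K ⊆ Metric.closedBall 0 R) (hB : 0 ≤ B) (hR' : R' = R + 2 + 2 * B)
    (ν : Measure (Set.Icc (-R') R')) [IsProbabilityMeasure ν]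
    (hν : ∀ z, R' < ‖z‖ → ‖cauchyTransform ν z‖ ≤ 1) :
    IsCauchyType (Set.Icc (-R') R') fun z => cauchyTransform μ (z - B * cauchyTransform ν z) := by
  have hG := isCauchyType_cauchyTransform μ
  have hH := isCauchyType_cauchyTransform ν
  have hlarge {z : ℂ} (hz : R' < ‖z‖) : R + 2 + B < ‖z - B * cauchyTransform ν z‖ :=
    lt_norm_sub_ofReal_mul hB (hR' ▸ hz) (hν z hz)
  have hmem (z : ℂ) (hz : z ∈ realCompl (Set.Icc (-R') R')) :
      z - B * cauchyTransform ν z ∈ realCompl K := by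
    rcases im_ne_zero_or_lt_norm hz with hz | hz
    · exact mem_realCompl_of_im_ne_zero (im_sub_mul_cauchyTransform_ne_zero ν hB hz)
    · exact mem_realCompl_of_lt_norm hR (by linarith [hlarge hz])
  refine ⟨hG.differentiableOn.comp (differentiableOn_id.sub (hH.differentiableOn.const_mul _)) hmem,
    fun z _ => ?_, fun z hz => (cauchyTransform_im_neg μ ?_).le, ?_⟩
  · rw [← cauchyTransform_conj, map_sub, map_mul, conj_ofReal, ← cauchyTransform_conj]
  · rw [sub_im, im_ofReal_mul]
    linarith [mul_nonpos_of_nonneg_of_nonpos hB (cauchyTransform_im_neg ν hz).le]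
  · have hw : Tendsto (fun z => z - B * cauchyTransform ν z) (cobounded ℂ) (cobounded ℂ) := by
      refine tendsto_norm_atTop_iff_cobounded.1 (tendsto_atTop_mono' _ ?_
        (tendsto_atTop_add_const_right _ (-B) tendsto_norm_cobounded_atTop))
      filter_upwards [tendsto_norm_cobounded_atTop.eventually_gt_atTop R'] with z hz
      have h := norm_sub_norm_le z (B * cauchyTransform ν z)
      rw [norm_mul, norm_real, Real.norm_of_nonneg hB] at h
      linarith [mul_le_mul_of_nonneg_left (hν z hz) hB]
    have h := (hG.tendsto_mul.comp hw).add
      ((hH.tendsto_zero.const_mul (B : ℂ)).mul (hG.tendsto_zero.comp hw))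
    rw [mul_zero, add_zero] at h
    refine h.congr fun z => ?_
    simp only [Function.comp_apply]
    ring

lemma norm_cauchyTransform_sub_mul_sub_le (μ : Measure K) [IsProbabilityMeasure μ]
    (hR : K ⊆ Metric.closedBall 0 R) (hB : 0 ≤ B) (hz : R + 2 + 2 * B < ‖z‖) (hu : ‖u‖ ≤ 1)
    (hv : ‖v‖ ≤ 1) :
    ‖cauchyTransform μ (z - B * u) - cauchyTransform μ (z - B * v)‖ ≤ 1 / 2 * ‖u - v‖ := by
  have hu' := lt_norm_sub_ofReal_mul hB hz hu
  have hv' := lt_norm_sub_ofReal_mul hB hz hv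
  have hdiff : ‖z - B * u - (z - B * v)‖ = B * ‖u - v‖ := by
    rw [sub_sub_sub_cancel_left, ← mul_sub, norm_mul, norm_real, Real.norm_of_nonneg hB,
      norm_sub_rev]
  calc ‖cauchyTransform μ (z - B * u) - cauchyTransform μ (z - B * v)‖
      ≤ B * ‖u - v‖ / ((‖z - B * u‖ - R) * (‖z - B * v‖ - R)) :=
        hdiff ▸ norm_cauchyTransform_sub_le μ hR (by linarith) (by linarith)
    _ ≤ B * ‖u - v‖ / ((2 + B) * 2) := by
        gcongr <;> linarith
    _ = B / (2 + B) * (1 / 2 * ‖u - v‖) := by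
        have : 2 + B ≠ 0 := by positivity
        field
    _ ≤ 1 * (1 / 2 * ‖u - v‖) := by
        gcongr
        exact div_le_one_of_le₀ (by linarith) (by linarith)
    _ = 1 / 2 * ‖u - v‖ := one_mul _

theorem exists_cauchyTransform_eq_of_eq_sub_mul (μ : Measure K) [IsProbabilityMeasure μ]
    (hB : 0 ≤ B) : ∃ R : ℝ, ∃ ν : ProbabilityMeasure (Set.Icc (-R) R), ∀ z m : ℂ, R < ‖z‖ →
      ‖m‖ ≤ 1 → cauchyTransform μ (z - B * m) = m →
        cauchyTransform (ν : Measure (Set.Icc (-R) R)) z = m := by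
  obtain ⟨R, hR0, hR⟩ :=
    (isCompact_iff_compactSpace.2 ‹CompactSpace K›).isBounded.subset_closedBall_lt 0 0
  let R' := R + 2 + 2 * B
  have hmaps {z : ℂ} (hz : R' < ‖z‖) : Set.MapsTo (fun u => cauchyTransform μ (z - B * u))
      (Metric.closedBall 0 1) (Metric.closedBall 0 1) := fun u hu =>
    mem_closedBall_zero_iff.2
      (norm_cauchyTransform_sub_mul_le_one μ hR hB hz (mem_closedBall_zero_iff.1 hu))
  have hlip {z : ℂ} (hz : R' < ‖z‖) : LipschitzOnWith (1 / 2)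
      (fun u => cauchyTransform μ (z - B * u)) (Metric.closedBall 0 1) :=
    LipschitzOnWith.of_dist_le_mul fun u hu v hv => by
      rw [mem_closedBall_zero_iff] at hu hv
      simpa [dist_eq_norm] using norm_cauchyTransform_sub_mul_sub_le μ hR hB hz hu hv
  have hinv {z : ℂ} (hz : R' < ‖z‖) : z⁻¹ ∈ Metric.closedBall (0 : ℂ) 1 := by
    rw [mem_closedBall_zero_iff, norm_inv]
    exact inv_le_one_of_one_le₀ (by linarith)
  obtain ⟨ν, hν⟩ := exists_cauchyTransform_eq_of_tendsto_iterate (α := -R') (β := R') (by linarith)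
    ⟨by linarith, by linarith⟩ (Icc_neg_eq_closedBall R').le (fun z hz => hinv hz)
    (fun z hz => hmaps hz) fun ν hν => isCauchyType_cauchyTransform_sub_mul μ hR hB rfl _
      fun z hz => mem_closedBall_zero_iff.1 (hν z hz)
  refine ⟨R', ν, fun z m hz hm hfix => ?_⟩
  refine hν z (mem_realCompl_of_lt_norm (Icc_neg_eq_closedBall R').le hz) m ?_
  exact tendsto_iterate_of_lipschitzOnWith (by norm_num) (hmaps hz) (hlip hz) (hinv hz)
    (mem_closedBall_zero_iff.2 hm) hfix

end ConstructionsOnCauchyTransforms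

section FreeCumulantFun

variable {P V : ℝ → ℝ}

theorem IsFreeCumulantFun.one_add_mul_comp (hP : IsFreeCumulantFun P) :
    IsFreeCumulantFun fun m => (1 + m) * P (m / (1 + m)) := by
  obtain ⟨hcont, hP0, K, hK, μ, hμ⟩ := hP
  have : CompactSpace K := isCompact_iff_compactSpace.1 hK
  obtain ⟨R, hR0, hR⟩ := hK.isBounded.subset_closedBall_lt 0 0
  obtain ⟨ν, hν⟩ := (isCauchyType_div_one_sub_cauchyTransform (μ : Measure K)
    hR).exists_cauchyTransform_eq (by linarith)
  have hφ : HasDerivAt (fun m : ℝ => m / (1 + m)) 1 0 := by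
    simpa using (hasDerivAt_id' (0 : ℝ)).fun_div ((hasDerivAt_id' (0 : ℝ)).const_add 1) (by simp)
  have hφ' : Tendsto (fun m : ℝ => m / (1 + m)) (𝓝[≠] 0) (𝓝[≠] 0) := by
    simpa using hφ.tendsto_nhdsNE one_ne_zero
  have hcont' : ContinuousAt (fun m => (1 + m) * P (m / (1 + m))) 0 :=
    (continuousAt_const.add continuousAt_id).mul
      (hcont.comp_of_eq hφ.continuousAt (by simp))
  refine ⟨hcont', by simp [hP0], _, isCompact_Icc, ν, ?_⟩
  filter_upwards [hφ'.eventually hμ, eventually_lt_norm_ofReal_div hcont' (by simp [hP0]) (R + 1),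
    self_mem_nhdsWithin, (eventually_gt_nhds (neg_lt_zero.2 one_pos)).filter_mono
      nhdsWithin_le_nhds] with m hm hRm (hm0 : m ≠ 0) hm1
  have hm1' : 1 + m ≠ 0 := by linarith
  have hdiv : (1 + m) * P (m / (1 + m)) / m = P (m / (1 + m)) / (m / (1 + m)) := by field
  rw [hν _ (mem_realCompl_of_lt_norm (Icc_neg_eq_closedBall _).le hRm), hdiv, hm]
  norm_cast
  field

lemma isFreeCumulantFun_one_add_mul (a : ℝ) : IsFreeCumulantFun fun m => 1 + a * m := by
  let δ : ProbabilityMeasure ({a} : Set ℝ) := ⟨Measure.dirac ⟨a, rfl⟩, inferInstance⟩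
  refine ⟨by fun_prop, by simp, {a}, isCompact_singleton, δ, ?_⟩
  filter_upwards [self_mem_nhdsWithin] with m (hm : m ≠ 0)
  refine (cauchyTransform_dirac _ _).trans ?_
  norm_cast
  field

theorem IsFreeCumulantFun.comp_const_mul_add (hP : IsFreeCumulantFun P) (t a : ℝ) :
    IsFreeCumulantFun fun m => P (t * m) + a * m := by
  obtain ⟨hcont, hP0, K, hK, μ, hμ⟩ := hP
  rcases eq_or_ne t 0 with rfl | ht
  · simpa [hP0] using isFreeCumulantFun_one_add_mul a
  let φ (x : K) : (fun x => a + t * x) '' K := ⟨a + t * x, x, x.2, rfl⟩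
  have hφ : Measurable φ := by fun_prop
  have htm : Tendsto (fun m => t * m) (𝓝[≠] 0) (𝓝[≠] 0) := by
    simpa using (hasDerivAt_const_mul t).tendsto_nhdsNE (x := 0) ht
  refine ⟨(hcont.comp_of_eq (by fun_prop) (mul_zero t)).add (by fun_prop), by simp [hP0], _,
    hK.image (by fun_prop), μ.map hφ.aemeasurable, ?_⟩
  filter_upwards [htm.eventually hμ, self_mem_nhdsWithin] with m hm (hm0 : m ≠ 0)
  have hdiv : ((P (t * m) + a * m) / m : ℝ) = (a + t * (P (t * m) / (t * m) : ℝ) : ℂ) := by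
    norm_cast
    field
  rw [hdiv, ProbabilityMeasure.toMeasure_map, cauchyTransform_map_affine _ hφ fun _ => rfl, hm]
  norm_cast
  field

theorem IsFreeCumulantFun.add_const_mul_sq (hP : IsFreeCumulantFun P) {B : ℝ} (hB : 0 ≤ B) :
    IsFreeCumulantFun fun m => P m + B * m ^ 2 := by
  obtain ⟨hcont, hP0, K, hK, μ, hμ⟩ := hP
  have : CompactSpace K := isCompact_iff_compactSpace.1 hK
  obtain ⟨R, ν, hν⟩ := exists_cauchyTransform_eq_of_eq_sub_mul (μ : Measure K) hB
  have hcont' : ContinuousAt (fun m => P m + B * m ^ 2) 0 := hcont.add (by fun_prop)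
  refine ⟨hcont', by simp [hP0], _, isCompact_Icc, ν, ?_⟩
  filter_upwards [hμ, eventually_lt_norm_ofReal_div hcont' (by simp [hP0]) R, self_mem_nhdsWithin,
    nhdsWithin_le_nhds (Metric.closedBall_mem_nhds (0 : ℝ) one_pos)] with m hm hRm (hm0 : m ≠ 0) hm1
  have hdiv : (((P m + B * m ^ 2) / m : ℝ) : ℂ) - B * m = (P m / m : ℝ) := by
    norm_cast
    field
  refine hν _ _ hRm ?_ (hdiv ▸ hm)
  rw [norm_real]
  exact mem_closedBall_zero_iff.1 hm1

theorem exists_cauchyTransform_eq_div (hV : IsFreeCumulantFun fun m => V m + m ^ 2) :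
    ∃ K : Set ℝ, IsCompact K ∧ ∃ ν : ProbabilityMeasure K, ∀ᶠ m in 𝓝[≠] 0,
      cauchyTransform (ν : Measure K) ((V m + m ^ 2) / m : ℝ) = (m / V m : ℝ) := by
  obtain ⟨hcont, hV0, K, hK, μ, hμ⟩ := hV
  have : CompactSpace K := isCompact_iff_compactSpace.1 hK
  obtain ⟨R, hR0, hR⟩ := hK.isBounded.subset_closedBall_lt 0 0
  obtain ⟨ν, hν⟩ := (isCauchyType_inv_sub_cauchyTransform (μ : Measure K) hR0.le
    hR).exists_cauchyTransform_eq (by linarith)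
  refine ⟨_, isCompact_Icc, ν, ?_⟩
  filter_upwards [hμ, eventually_lt_norm_ofReal_div hcont hV0 (R + 1), self_mem_nhdsWithin]
    with m hm hRm (hm0 : m ≠ 0)
  rw [hν _ (mem_realCompl_of_lt_norm (Icc_neg_eq_closedBall _).le hRm), hm]
  norm_cast
  field

end FreeCumulantFun

section CSKKernel

variable {V : ℝ → ℝ}

lemma cskKernel_zero_left (hV0 : V 0 ≠ 0) (x : ℝ) : cskKernel V 0 x = 1 := by
  simp [cskKernel, hV0]

lemma continuousAt_cskKernel (hV : ContinuousAt V 0) (hV0 : V 0 ≠ 0) (x : ℝ) :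
    ContinuousAt (fun p : ℝ × ℝ => cskKernel V p.1 p.2) (0, x) := by
  have hVfst : ContinuousAt (fun p : ℝ × ℝ => V p.1) (0, x) :=
    hV.comp_of_eq continuousAt_fst rfl
  exact hVfst.div (hVfst.add (by fun_prop)) (by simpa using hV0)

lemma continuousOn_cskKernel {m : ℝ} {s : Set ℝ} (h : ∀ x ∈ s, cskKernel V m x ≠ 0) :
    ContinuousOn (cskKernel V m) s :=
  continuousOn_const.div (by fun_prop) fun x hx => (div_ne_zero_iff.1 (h x hx)).2

variable {K : Set ℝ} {ν : Measure K}

lemma integral_cskKernel_eq_one {m : ℝ} (hm : m ≠ 0) (hVm : V m ≠ 0)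
    (h : cauchyTransform ν ((V m + m ^ 2) / m : ℝ) = (m / V m : ℝ)) :
    ∫ x : K, cskKernel V m x ∂ν = 1 := by
  have hker (x : K) : ((((V m + m ^ 2) / m : ℝ) : ℂ) - (x : ℝ))⁻¹
      = (m / V m * cskKernel V m x : ℝ) := by
    rw [← ofReal_sub, ← ofReal_inv, cskKernel, div_sub' hm, inv_div, div_mul_div_cancel₀ hVm]
    congr 2
    ring
  rw [cauchyTransform, integral_congr_ae (.of_forall hker), integral_complex_ofReal,
    integral_const_mul, ofReal_inj] at h
  exact (mul_eq_left₀ (div_ne_zero hm hVm)).1 h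

variable [CompactSpace K]

lemma eventually_cskKernel_mem_Ioo (hV : ContinuousAt V 0) (hV0 : V 0 ≠ 0) :
    ∀ᶠ m in 𝓝 0, ∀ x : K, cskKernel V m x ∈ Set.Ioo 0 2 := by
  have hK : IsCompact K := isCompact_iff_compactSpace.2 inferInstance
  suffices ∀ᶠ m in 𝓝 0, ∀ x ∈ K, cskKernel V m x ∈ Set.Ioo 0 2 from
    this.mono fun m hm x => hm x x.2
  refine hK.eventually_forall_of_forall_eventually fun x _ => ?_
  refine (continuousAt_cskKernel hV hV0 x).eventually (Ioo_mem_nhds ?_ ?_) <;>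
    simp [cskKernel_zero_left hV0]

lemma integrable_mul_cskKernel [IsFiniteMeasure ν] {m : ℝ} (h : ∀ x : K, cskKernel V m x ≠ 0)
    {g : K → ℝ} (hg : Continuous g) : Integrable (fun x : K => g x * cskKernel V m x) ν :=
  integrable_of_continuous <| hg.mul <| continuousOn_iff_continuous_domRestrict.1 <|
    continuousOn_cskKernel fun x hx => h ⟨x, hx⟩

lemma mul_integral_coe_mul_cskKernel [IsFiniteMeasure ν] {m : ℝ}
    (h : ∀ x : K, cskKernel V m x ≠ 0) {g : K → ℝ} (hg : Continuous g) :
    m * ∫ x : K, x * g x * cskKernel V m x ∂ν =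
      (V m + m ^ 2) * ∫ x : K, g x * cskKernel V m x ∂ν - V m * ∫ x, g x ∂ν := by
  rw [← integral_const_mul, ← integral_const_mul, ← integral_const_mul, ← integral_sub
    ((integrable_mul_cskKernel h hg).const_mul _) ((integrable_of_continuous hg).const_mul _)]
  refine integral_congr_ae (.of_forall fun x => ?_)
  have hx : V m + m * (m - x) ≠ 0 := (div_ne_zero_iff.1 (h x)).2
  simp only [cskKernel]
  field

lemma tendsto_integral_mul_cskKernel [IsFiniteMeasure ν] (hV : ContinuousAt V 0) (hV0 : V 0 ≠ 0)
    {g : K → ℝ} (hg : Continuous g) :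
    Tendsto (fun m => ∫ x : K, g x * cskKernel V m x ∂ν) (𝓝 0) (𝓝 (∫ x, g x ∂ν)) := by
  have hIoo := eventually_cskKernel_mem_Ioo (K := K) hV hV0
  refine tendsto_integral_filter_of_dominated_convergence (fun x => |g x| * 2) ?_ ?_
    (integrable_of_continuous (by fun_prop)) (.of_forall fun x => ?_)
  · filter_upwards [hIoo] with m hm
    exact (integrable_mul_cskKernel (fun x => (hm x).1.ne') hg).aestronglyMeasurable
  · filter_upwards [hIoo] with m hm
    refine .of_forall fun x => ?_
    rw [norm_mul, Real.norm_eq_abs, Real.norm_of_nonneg (hm x).1.le]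
    exact mul_le_mul_of_nonneg_left (hm x).2.le (abs_nonneg _)
  · have hcont : ContinuousAt (fun m => g x * cskKernel V m x) 0 :=
      continuousAt_const.mul <|
        (continuousAt_cskKernel hV hV0 x).comp (f := fun m => (m, (x : ℝ))) (by fun_prop)
    simpa [cskKernel_zero_left hV0] using hcont.tendsto

section Moments

variable [IsProbabilityMeasure ν] (hV : ContinuousAt V 0) (hV0 : V 0 ≠ 0)
  (hν : ∀ᶠ m in 𝓝[≠] 0, ∫ x : K, cskKernel V m x ∂ν = 1)

include hV hV0 hν

lemma eventually_integral_coe_mul_cskKernel :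
    ∀ᶠ m in 𝓝[≠] 0, ∫ x : K, x * cskKernel V m x ∂ν = m := by
  filter_upwards [hν, self_mem_nhdsWithin,
    nhdsWithin_le_nhds (eventually_cskKernel_mem_Ioo (K := K) hV hV0)] with m h1 (hm0 : m ≠ 0) hm
  have h := mul_integral_coe_mul_cskKernel (ν := ν) (g := fun _ => 1)
    (fun x => (hm x).1.ne') continuous_const
  simp only [mul_one, one_mul, h1, integral_const, probReal_univ, smul_eq_mul] at h
  exact mul_left_cancel₀ hm0 (by linarith)

lemma integral_coe_eq_zero : ∫ x : K, (x : ℝ) ∂ν = 0 := by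
  have hlim := tendsto_integral_mul_cskKernel (ν := ν) hV hV0 continuous_subtype_val
  refine tendsto_nhds_unique (hlim.mono_left (nhdsWithin_le_nhds (s := {0}ᶜ)))
    ((tendsto_id.mono_left nhdsWithin_le_nhds).congr' ?_)
  exact (eventually_integral_coe_mul_cskKernel hV hV0 hν).mono fun _ h => h.symm

lemma integral_coe_sq_eq : ∫ x : K, (x : ℝ) ^ 2 ∂ν = V 0 := by
  have hlim := tendsto_integral_mul_cskKernel (ν := ν) (g := (· ^ 2)) hV hV0 (by fun_prop)
  have hlim' : Tendsto (fun m => V m + m ^ 2) (𝓝 0) (𝓝 (V 0)) := by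
    simpa using hV.tendsto.add ((continuous_pow 2).tendsto (0 : ℝ))
  refine tendsto_nhds_unique (hlim.mono_left (nhdsWithin_le_nhds (s := {0}ᶜ)))
    ((hlim'.mono_left nhdsWithin_le_nhds).congr' ?_)
  filter_upwards [eventually_integral_coe_mul_cskKernel hV hV0 hν, self_mem_nhdsWithin,
    nhdsWithin_le_nhds (eventually_cskKernel_mem_Ioo (K := K) hV hV0)] with m h1 (hm0 : m ≠ 0) hm
  have h := mul_integral_coe_mul_cskKernel (ν := ν) (fun x => (hm x).1.ne')
    continuous_subtype_val
  simp only [h1, integral_coe_eq_zero hV hV0 hν, ← pow_two] at h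
  exact mul_left_cancel₀ hm0 (by linarith)

end Moments

lemma isCSKVarianceFun_map_coe [IsProbabilityMeasure ν] (hV : AnalyticAt ℝ V 0) (hV0 : 0 < V 0)
    (hν : ∀ᶠ m in 𝓝[≠] 0, ∫ x : K, cskKernel V m x ∂ν = 1) :
    IsCSKVarianceFun (ν.map (↑)) V := by
  have hK : IsCompact K := isCompact_iff_compactSpace.2 ‹_›
  have hemb := MeasurableEmbedding.subtype_coe hK.measurableSet
  have hmom : ∀ᶠ m in 𝓝 0,
      ∫ x : K, cskKernel V m x ∂ν = 1 ∧ ∫ x : K, x * cskKernel V m x ∂ν = m := by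
    rw [← nhdsNE_sup_pure, eventually_sup, eventually_pure]
    refine ⟨hν.and (eventually_integral_coe_mul_cskKernel hV.continuousAt hV0.ne' hν), ?_⟩
    simp [cskKernel_zero_left hV0.ne', integral_coe_eq_zero hV.continuousAt hV0.ne' hν]
  obtain ⟨ε, hε, hball⟩ := Metric.eventually_nhds_iff.1
    (hmom.and (eventually_cskKernel_mem_Ioo (K := K) hV.continuousAt hV0.ne'))
  refine ⟨hV, hV0, ε, hε, fun m hm => ?_⟩
  obtain ⟨⟨h0, h1⟩, hpos⟩ := hball (y := m) (by simpa using hm)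
  refine ⟨hemb.ae_map_iff.2 (.of_forall fun x => (hpos x).1.le), ?_, ?_⟩
  · rw [hemb.integral_map, h0]
  · rw [hemb.integral_map, h1]

lemma isCSKGenerator_map_coe [IsProbabilityMeasure ν] (h1 : ∫ x : K, (x : ℝ) ∂ν = 0)
    (h2 : ∫ x : K, (x : ℝ) ^ 2 ∂ν ≠ 0) : IsCSKGenerator (ν.map (↑)) := by
  have hK : IsCompact K := isCompact_iff_compactSpace.2 ‹_›
  have hemb := MeasurableEmbedding.subtype_coe hK.measurableSet
  obtain ⟨R, hR⟩ := hK.isBounded.subset_closedBall 0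
  rw [← hemb.integral_map fun x => x] at h1
  rw [← hemb.integral_map fun x => x ^ 2] at h2
  refine ⟨Measure.isProbabilityMeasure_map (by fun_prop), ⟨R, ?_⟩, fun a ha => h2 ?_, h1⟩
  · change ∀ᵐ x ∂ν.map (↑), x ∈ Set.Icc (-R) R
    rw [Icc_neg_eq_closedBall]
    exact hemb.ae_map_iff.2 (.of_forall fun x => hR x.2)
  · simp_all

end CSKKernel

theorem memV_of_isFreeCumulantFun {V : ℝ → ℝ} (hV : AnalyticAt ℝ V 0)
    (h : IsFreeCumulantFun fun m => V m + m ^ 2) : memV V := by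
  obtain ⟨K, hK, ν, hν⟩ := exists_cauchyTransform_eq_div h
  have : CompactSpace K := isCompact_iff_compactSpace.1 hK
  have hV0 : V 0 = 1 := by simpa using h.2.1
  have hV0' : V 0 ≠ 0 := by simp [hV0]
  have hker : ∀ᶠ m in 𝓝[≠] 0, ∫ x : K, cskKernel V m x ∂(ν : Measure K) = 1 := by
    filter_upwards [hν, self_mem_nhdsWithin,
      nhdsWithin_le_nhds (hV.continuousAt.eventually_ne hV0')] with m hm hm0 hVm
    exact integral_cskKernel_eq_one hm0 hVm hm
  have hvar := integral_coe_sq_eq hV.continuousAt hV0' hker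
  refine ⟨(ν : Measure K).map (↑),
    isCSKGenerator_map_coe (integral_coe_eq_zero hV.continuousAt hV0' hker) (by rwa [hvar]), ?_,
    isCSKVarianceFun_map_coe hV (by simp [hV0]) hker⟩
  rw [(MeasurableEmbedding.subtype_coe hK.measurableSet).integral_map, hvar, hV0]

section Assembly

variable {ι : Type*} [Fintype ι] {b p : ι → ℝ} {c : ℝ}

lemma analyticAt_prod_one_add_mul_rpow (b p : ι → ℝ) :
    AnalyticAt ℝ (fun m => ∏ j, (1 + b j * m) ^ p j) 0 := by
  refine Finset.univ.analyticAt_fun_prod fun j _ => ?_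
  have hsmooth : ContDiffAt ℝ ⊤ (fun m => (1 + b j * m) ^ p j) 0 :=
    .rpow_const_of_ne (by fun_prop) (by simp)
  exact hsmooth.analyticAt

lemma eventually_forall_one_add_mul_pos {ι : Type*} [Finite ι] (b : ι → ℝ) :
    ∀ᶠ m in 𝓝 (0 : ℝ), ∀ j, 0 < 1 + b j * m := by
  refine eventually_all.2 fun j => ?_
  have hcont : ContinuousAt (fun m => 1 + b j * m) 0 := by fun_prop
  exact hcont.eventually_const_lt (by simp)

lemma isFreeCumulantFun_one_add_mul_prod_rpow_of_le (hb0 : ∀ j, 0 ≤ b j) (hbc : ∀ j, b j ≤ c)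
    (hc : 0 ≤ c) (hp : ∀ j, 0 ≤ p j) :
    IsFreeCumulantFun fun m => (1 + c * m) * ∏ j, (1 + b j * m) ^ p j := by
  have hprod := (isFreeCumulantFun_prod_rpow (s := Finset.univ) (σ := fun j => 1 - b j / c)
    (fun j _ => sub_nonneg.2 (div_le_one_of_le₀ (hbc j) hc))
    (fun j _ => sub_le_self _ (div_nonneg (hb0 j) hc))
    (fun j _ => hp j)).one_add_mul_comp.comp_const_mul_add c 0
  refine hprod.congr ?_
  filter_upwards [eventually_forall_one_add_mul_pos fun _ : Unit => c] with m hm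
  have hm' : 1 + c * m ≠ 0 := (hm ()).ne'
  simp only [zero_mul, add_zero]
  congr! 3 with j
  have hbc0 : b j / c * c = b j :=
    div_mul_cancel_of_imp fun h => le_antisymm (h ▸ hbc j) (hb0 j)
  have hden : 1 - c * m / (1 + c * m) = (1 + c * m)⁻¹ := by field
  rw [hden, ← hbc0]
  field

lemma isFreeCumulantFun_one_add_mul_prod_rpow (hb : ∀ j, 0 ≤ b j) (hc : 0 ≤ c)
    (hp : ∀ j, 0 ≤ p j) (hbp : ∀ j, 1 ≤ p j ∨ b j ≤ c) :
    IsFreeCumulantFun fun m => (1 + c * m) * ∏ j, (1 + b j * m) ^ p j := by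
  classical
  by_cases hbc : ∀ j, b j ≤ c
  · exact isFreeCumulantFun_one_add_mul_prod_rpow_of_le hb hbc hc hp
  obtain ⟨j₁, hj₁⟩ := not_forall.1 hbc
  have : Nonempty ι := ⟨j₁⟩
  obtain ⟨j₀, hj₀⟩ := Finite.exists_max b
  have hcb : c < b j₀ := (not_le.1 hj₁).trans_le (hj₀ j₁)
  have hp₀ : 1 ≤ p j₀ := (hbp j₀).resolve_right hcb.not_ge
  -- The dominant factor trades places with `1 + c * m`, which joins the product with exponent `1`.
  refine (isFreeCumulantFun_one_add_mul_prod_rpow_of_le (ι := Option ι) (c := b j₀)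
    (b := fun i => i.elim c b) (p := fun i => i.elim 1 (p - Pi.single j₀ 1))
    (Option.forall.2 ⟨hc, hb⟩) (Option.forall.2 ⟨hcb.le, hj₀⟩) (hb j₀)
    (Option.forall.2 ⟨zero_le_one, fun j => ?_⟩)).congr ?_
  · obtain rfl | hj := eq_or_ne j j₀ <;> simp [*]
  filter_upwards [eventually_forall_one_add_mul_pos b] with m hm
  have hsingle : ∏ j, (1 + b j * m) ^ (Pi.single j₀ 1 : ι → ℝ) j = 1 + b j₀ * m := by
    rw [Fintype.prod_eq_single j₀ fun j hj => by simp [hj]]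
    simp
  simp only [Fintype.prod_option, Option.elim_none, Option.elim_some, Real.rpow_one, Pi.sub_apply,
    Real.rpow_sub (hm _), Finset.prod_div_distrib, hsingle]
  have := (hm j₀).ne'
  field

theorem memV_perturbed_prod_rpow_comp_const_mul (hb : ∀ j, 0 ≤ b j) (hc : 0 ≤ c) (hp : ∀ j, 0 ≤ p j)
    (hbp : ∀ j, 1 ≤ p j ∨ b j ≤ c) (α : ℝ) {β t : ℝ} (hβ : -1 ≤ β * t ^ 2) :
    memV fun m => α * (t * m) + β * (t * m) ^ 2 +
      (1 + c * (t * m)) * ∏ j, (1 + b j * (t * m)) ^ p j := by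
  refine memV_of_isFreeCumulantFun ?_ ?_
  · exact (by fun_prop : AnalyticAt ℝ (fun m => α * (t * m) + β * (t * m) ^ 2) 0).add
      (.mul (by fun_prop) ((analyticAt_prod_one_add_mul_rpow b p).comp_of_eq
        (by fun_prop : AnalyticAt ℝ (t * ·) 0) (mul_zero t)))
  · refine (((isFreeCumulantFun_one_add_mul_prod_rpow hb hc hp hbp).comp_const_mul_add
      t (α * t)).add_const_mul_sq (B := β * t ^ 2 + 1) (by linarith)).congr (.of_forall fun m => ?_)
    ring

end Assembly

end CSK

/-- Let `bⱼ, pⱼ > 0`, `c > 0`, with `max{pⱼ, c/bⱼ} ≥ 1` for each `j`, and put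
`V(m) = a·m + b·m² + (1+c·m)·∏ⱼ (1+bⱼm)^{pⱼ}`. If `b ≥ −1` then `V ∈ 𝒱`;
if `b ≥ 0` then `V ∈ 𝒱∞`. -/
theorem perturbed_product_rpow_memV (d : ℕ) (hd : 1 ≤ d) (a b c : ℝ) (hc : 0 < c)
    (bb p : Fin d → ℝ) (hbb : ∀ j, 0 < bb j) (hp : ∀ j, 0 < p j)
    (hmax : ∀ j, 1 ≤ max (p j) (c / bb j)) :
    ((-1 : ℝ) ≤ b →
      memV (fun m => a * m + b * m ^ 2 + (1 + c * m) * ∏ j, (1 + bb j * m) ^ (p j))) ∧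
    ((0 : ℝ) ≤ b →
      memVinf (fun m => a * m + b * m ^ 2 + (1 + c * m) * ∏ j, (1 + bb j * m) ^ (p j))) := by
  have hmem (t : ℝ) (ht : -1 ≤ b * t ^ 2) := CSK.memV_perturbed_prod_rpow_comp_const_mul
    (fun j => (hbb j).le) hc.le (fun j => (hp j).le)
    (fun j => (le_max_iff.1 (hmax j)).imp_right (one_le_div (hbb j)).1) a ht
  refine ⟨fun hb => ?_, fun hb t => hmem t ?_⟩
  · simpa only [one_mul] using hmem 1 (by linarith)
  · linarith [mul_nonneg hb (sq_nonneg t)]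
end
end

section
/- Fix real numbers a, b, c and consider the polynomials {Pₙ} defined by P₀(x) = 1, P₁(x) = x, and the 4-step recursion x·P₁(x) = P₂(x) + a·P₁(x) + P₀(x), x·P₂(x) = P₃(x) + a·P₂(x) + b·P₁(x), and x·Pₙ(x) = P_{n+1}(x) + a·Pₙ(x) + b·P_{n−1}(x) + c·P_{n−2}(x) for n ≥ 3. Then the following are equivalent: (1) b³ ≥ 27c²; (2) there exists a probability measure ν on ℝ with all moments finite such that the polynomials {Pₙ} are ν-2-orthogonal. -/
open MeasureTheory

noncomputable section

/-- The polynomials `P` are `ν-d`-orthogonal: `∫ Pₙ dν = 0` for `n ≥ 1` and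
`∫ Pₙ·P_k dν = 0` for all `k ≥ 1` and `n ≥ 2 + (k-1)d`. -/
def NuDOrthogonal (ν : Measure ℝ) (d : ℕ) (P : ℕ → Polynomial ℝ) : Prop :=
  (∀ n : ℕ, 1 ≤ n → (∫ x, (P n).eval x ∂ν) = 0) ∧
  (∀ k : ℕ, 1 ≤ k → ∀ n : ℕ, 2 + (k - 1) * d ≤ n →
    (∫ x, (P n).eval x * (P k).eval x ∂ν) = 0)

/-!
Let `Z(s) = 1/s + a + bs + cs²`, the K-transform of the R-transform `R(s) = a + bs + cs²`.

*Necessity.* If `∫ Pₙ dν = 0` for all `n ≥ 1`, the generating function of the `Pₙ` shows that the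
Cauchy transform `G` of `ν` satisfies `(Z(s) - s) G(Z(s)) = 1` for small `s` with `Im Z(s) > 0`.
By analytic continuation this persists on the connected component of `{Im Z > 0}` containing such
`s`. Differentiating at a critical point of `Z` in that component gives `G(Z(s)) = 0`, which is
absurd. If `b³ < 27c²`, then `Z` has a non-real critical point `q` such that `Im Z > 0` on the
whole open ray from `0` through `q`.

*Sufficiency.* If `b³ ≥ 27c²` and `b > 0`, the level set `Im Z = 0` contains a curve that is a graph
in polar coordinates, joins two real points through the lower half plane, and along which `Z` is
monotone. By Stieltjes inversion it carries a probability measure `μ` with R-transform `R`, so the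
polynomials whose recurrence matrix is the Toeplitz matrix of `R` have `μ`-mean zero. The recurrence
matrix of `P` is that Toeplitz matrix bordered by one row and one column. Accordingly `ν` is the
spectral measure at `(1, 0)` of the operator on `ℂ × L²(μ)` obtained by bordering multiplication by
the variable with the constant function `1`. If `b = c = 0`, take for `μ` the unit mass at `a`.
-/

open Polynomial Finset Filter Topology

section Hessenberg

variable {K : Type*} [CommRing K] {h : ℕ → ℕ → K} {P : ℕ → K[X]}

/-- A monic polynomial sequence with `P₀ = 1` whose recurrence matrix is the lower Hessenberg
matrix with entries `h n k` for `k ≤ n` and ones on the superdiagonal. The values `h n k` with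
`n < k` are ignored. -/
structure IsHessenbergSeq (h : ℕ → ℕ → K) (P : ℕ → K[X]) : Prop where
  zero : P 0 = 1
  X_mul : ∀ n, X * P n = P (n + 1) + ∑ k ∈ range (n + 1), h n k • P k

/-- The recurrence matrix obtained from `h` by prepending a row and a column, both with the single
nonzero entry `1` next to the corner. -/
def border (h : ℕ → ℕ → K) : ℕ → ℕ → K
  | 0, _ => 0
  | n + 1, 0 => if n = 0 then 1 else 0
  | n + 1, k + 1 => h n k

/-- The recurrence matrix which is constant along diagonals, with the coefficients of `R` on and
below the main diagonal. -/
def toeplitz (R : K[X]) (n k : ℕ) : K := R.coeff (n - k)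

namespace IsHessenbergSeq

theorem natDegree_le (hP : IsHessenbergSeq h P) (n : ℕ) : (P n).natDegree ≤ n := by
  induction n using Nat.strong_induction_on with
  | _ n ih =>
    cases n with
    | zero => simp [hP.zero]
    | succ n =>
      rw [← sub_eq_of_eq_add (hP.X_mul n)]
      have hX : (X * P n).natDegree ≤ n + 1 :=
        (natDegree_mul_le_of_le natDegree_X_le (ih n (by lia))).trans_eq (add_comm ..)
      have hsum : (∑ k ∈ range (n + 1), h n k • P k).natDegree ≤ n + 1 :=
        natDegree_sum_le_of_forall_le _ _ fun k hk ↦ (natDegree_smul_le _ _).trans <|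
          (ih k (by grind)).trans (by grind)
      exact (natDegree_sub_le_of_le hX hsum).trans_eq (max_self _)

theorem map_X_pow_succ_mul (hP : IsHessenbergSeq h P) (L : K[X] →ₗ[K] K) (j n : ℕ) :
    L (X ^ (j + 1) * P n) =
      L (X ^ j * P (n + 1)) + ∑ k ∈ range (n + 1), h n k * L (X ^ j * P k) := by
  rw [pow_succ, mul_assoc, hP.X_mul, mul_add, mul_sum, map_add, map_sum]
  simp only [mul_smul_comm, map_smul, smul_eq_mul]

theorem map_X_pow_mul_eq_zero (hP : IsHessenbergSeq h P) {L : K[X] →ₗ[K] K} {d : ℕ}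
    (hband : ∀ n k, k + d < n → h n k = 0) (hcol : ∀ n, 2 ≤ n → h n 0 = 0)
    (hL : ∀ n, 1 ≤ n → L (P n) = 0) (j : ℕ) {n : ℕ} (hn : 1 ≤ n) (hjn : j * d + 2 ≤ n + d) :
    L (X ^ j * P n) = 0 := by
  induction j generalizing n with
  | zero => simpa using hL n hn
  | succ j ih =>
    rw [hP.map_X_pow_succ_mul, ih (by lia) (by lia), zero_add]
    refine sum_eq_zero fun k _ ↦ ?_
    rcases Nat.eq_zero_or_pos k with rfl | hk
    · rw [hcol n (by lia), zero_mul]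
    rcases lt_or_ge (k + d) n with hkn | hkn
    · rw [hband n k hkn, zero_mul]
    · rw [ih hk (by lia), mul_zero]

theorem map_mul_eq_zero (hP : IsHessenbergSeq h P) {L : K[X] →ₗ[K] K} {d : ℕ}
    (hband : ∀ n k, k + d < n → h n k = 0) (hcol : ∀ n, 2 ≤ n → h n 0 = 0)
    (hL : ∀ n, 1 ≤ n → L (P n) = 0) {q : K[X]} {n : ℕ} (hn : 1 ≤ n)
    (hqn : q.natDegree * d + 2 ≤ n + d) : L (q * P n) = 0 := by
  rw [q.as_sum_range_C_mul_X_pow, sum_mul, map_sum]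
  refine sum_eq_zero fun i hi ↦ ?_
  have hid : i * d ≤ q.natDegree * d := Nat.mul_le_mul_right d (by grind)
  rw [mul_assoc, ← smul_eq_C_mul, map_smul,
    hP.map_X_pow_mul_eq_zero hband hcol hL i hn (by lia), smul_zero]

theorem X_mul_succ_of_border (hP : IsHessenbergSeq (border h) P) (n : ℕ) :
    X * P (n + 1) =
      P (n + 2) + ∑ k ∈ range (n + 1), h n k • P (k + 1) + if n = 0 then 1 else 0 := by
  rw [hP.X_mul, sum_range_succ', hP.zero, add_assoc (P (n + 2))]
  simp [border]

theorem one_eq_X_of_border (hP : IsHessenbergSeq (border h) P) : P 1 = X := by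
  simpa [border, hP.zero] using (hP.X_mul 0).symm

end IsHessenbergSeq

theorem border_eq_zero_of_add_lt {d : ℕ} (hd : 1 ≤ d) (hband : ∀ n k, k + d < n → h n k = 0)
    (n k : ℕ) (hkn : k + d < n) : border h n k = 0 := by
  match n, k with
  | n + 1, 0 => exact if_neg (by lia)
  | n + 1, k + 1 => exact hband n k (by lia)

theorem border_zero_right_eq_zero {n : ℕ} (hn : 2 ≤ n) : border h n 0 = 0 := by
  obtain ⟨m, rfl⟩ := Nat.exists_eq_add_of_le' hn
  rfl

theorem toeplitz_eq_zero_of_add_lt {R : K[X]} {d : ℕ} (hR : R.natDegree ≤ d) (n k : ℕ)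
    (hkn : k + d < n) : toeplitz R n k = 0 :=
  coeff_eq_zero_of_natDegree_lt (by lia)

end Hessenberg

section Moments

variable {ν : Measure ℝ} (hν : ∀ n : ℕ, Integrable (fun x : ℝ ↦ x ^ n) ν)
include hν

theorem integrable_eval (p : ℝ[X]) : Integrable (fun x ↦ p.eval x) ν := by
  simp only [eval_eq_sum_range]
  exact integrable_finsetSum _ fun i _ ↦ (hν i).const_mul _

/-- Integration of polynomials against a measure with finite moments, as a linear functional. -/
def polynomialIntegral : ℝ[X] →ₗ[ℝ] ℝ where
  toFun p := ∫ x, p.eval x ∂ν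
  map_add' p q := by
    simpa only [eval_add] using integral_add (integrable_eval hν p) (integrable_eval hν q)
  map_smul' r p := by
    simp only [eval_smul, integral_smul, RingHom.id_apply]

@[simp]
theorem polynomialIntegral_apply (p : ℝ[X]) : polynomialIntegral hν p = ∫ x, p.eval x ∂ν := rfl

theorem nuDOrthogonal_of_isHessenbergSeq {h : ℕ → ℕ → ℝ} {P : ℕ → ℝ[X]}
    (hP : IsHessenbergSeq h P) {d : ℕ} (hband : ∀ n k, k + d < n → h n k = 0)
    (hcol : ∀ n, 2 ≤ n → h n 0 = 0) (h0 : ∀ n, 1 ≤ n → ∫ x, (P n).eval x ∂ν = 0) :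
    NuDOrthogonal ν d P := by
  refine ⟨h0, fun k hk n hn ↦ ?_⟩
  obtain ⟨m, rfl⟩ := Nat.exists_eq_add_of_le' hk
  have hdeg : (P (m + 1)).natDegree * d + 2 ≤ n + d := by
    have := Nat.mul_le_mul_right d (hP.natDegree_le (m + 1))
    grind
  have := hP.map_mul_eq_zero (L := polynomialIntegral hν) hband hcol h0 (by lia) hdeg
  simpa [mul_comm] using this

end Moments

section KTransform

theorem ae_abs_lt_of_integral_pow_le {ν : Measure ℝ} [IsFiniteMeasure ν]
    (hν : ∀ n : ℕ, Integrable (fun x : ℝ ↦ x ^ n) ν) {C r : ℝ} (hC : 0 ≤ C) (hCr : C < r)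
    (hmom : ∀ n : ℕ, ∫ x, x ^ (2 * n) ∂ν ≤ C ^ (2 * n)) : ∀ᵐ x ∂ν, |x| < r := by
  have hr : 0 < r := hC.trans_lt hCr
  have hmarkov : ∀ n : ℕ, ν.real {x | r ≤ |x|} ≤ ((C / r) ^ 2) ^ n := fun n ↦ by
    rw [← pow_mul, div_pow, le_div_iff₀ (by positivity), mul_comm]
    refine le_trans (mul_le_mul_of_nonneg_left (measureReal_mono fun x hx ↦ ?_) (by positivity)) <|
      (mul_meas_ge_le_integral_of_nonneg (.of_forall fun x ↦ (even_two_mul n).pow_nonneg x)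
        (hν (2 * n)) (r ^ (2 * n))).trans (hmom n)
    exact (pow_le_pow_left₀ hr.le hx _).trans_eq ((even_two_mul n).pow_abs x)
  have hlt : (C / r) ^ 2 < 1 := pow_lt_one₀ (by positivity) ((div_lt_one hr).2 hCr) two_ne_zero
  have hle : ν.real {x | r ≤ |x|} ≤ 0 :=
    ge_of_tendsto' (tendsto_pow_atTop_nhds_zero_of_lt_one (by positivity) hlt) hmarkov
  have hzero := (measureReal_eq_zero_iff).1 (hle.antisymm measureReal_nonneg)
  simpa [ae_iff] using hzero

namespace IsHessenbergSeq

variable {h : ℕ → ℕ → ℝ} {P : ℕ → ℝ[X]} {B : ℝ}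

theorem abs_map_X_pow_mul_le (hP : IsHessenbergSeq h P)
    (hB : ∀ n, ∑ k ∈ range (n + 1), |h n k| ≤ B) {L : ℝ[X] →ₗ[ℝ] ℝ} (hL1 : L 1 = 1)
    (hL : ∀ n, 1 ≤ n → L (P n) = 0) (j n : ℕ) : |L (X ^ j * P n)| ≤ (1 + B) ^ j := by
  induction j generalizing n with
  | zero =>
    rcases Nat.eq_zero_or_pos n with rfl | hn
    · simp [hP.zero, hL1]
    · simp [hL n hn]
  | succ j ih =>
    have hpow : 0 ≤ (1 + B) ^ j := (abs_nonneg _).trans (ih n)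
    rw [hP.map_X_pow_succ_mul]
    calc |L (X ^ j * P (n + 1)) + ∑ k ∈ range (n + 1), h n k * L (X ^ j * P k)|
        ≤ (1 + B) ^ j + ∑ k ∈ range (n + 1), |h n k| * (1 + B) ^ j := by
          refine (abs_add_le _ _).trans (add_le_add (ih _) ((abs_sum_le_sum_abs _ _).trans ?_))
          gcongr with k
          grw [abs_mul, ih k]
      _ ≤ (1 + B) ^ j + B * (1 + B) ^ j := by
          rw [← sum_mul]
          gcongr
          exact hB n
      _ = (1 + B) ^ (j + 1) := by ring

theorem abs_eval_le (hP : IsHessenbergSeq h P) (hB : ∀ n, ∑ k ∈ range (n + 1), |h n k| ≤ B)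
    {x r : ℝ} (hx : |x| ≤ r) (hr : 1 ≤ r + B) (n : ℕ) : |(P n).eval x| ≤ (r + B) ^ n := by
  induction n using Nat.strong_induction_on with
  | _ n ih =>
    cases n with
    | zero => simp [hP.zero]
    | succ n =>
      have hrec : (P (n + 1)).eval x = x * (P n).eval x - ∑ k ∈ range (n + 1), h n k *
          (P k).eval x := by
        have := congrArg (eval x) (hP.X_mul n)
        simp only [eval_mul, eval_X, eval_add, eval_finsetSum, eval_smul, smul_eq_mul] at this
        linarith
      rw [hrec]
      calc |x * (P n).eval x - ∑ k ∈ range (n + 1), h n k * (P k).eval x|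
          ≤ r * (r + B) ^ n + ∑ k ∈ range (n + 1), |h n k| * (r + B) ^ n := by
            refine (abs_sub _ _).trans (add_le_add ?_ ((abs_sum_le_sum_abs _ _).trans ?_))
            · rw [abs_mul]
              exact mul_le_mul hx (ih n n.lt_succ_self) (abs_nonneg _) ((abs_nonneg x).trans hx)
            · gcongr with k hk
              rw [abs_mul]
              gcongr
              exact (ih k (by grind)).trans (pow_le_pow_right₀ hr (by grind))
        _ ≤ r * (r + B) ^ n + B * (r + B) ^ n := by
            rw [← sum_mul]
            gcongr
            exact hB n
        _ = (r + B) ^ (n + 1) := by ring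

theorem exists_ae_abs_eval_le (hP : IsHessenbergSeq h P)
    (hB : ∀ n, ∑ k ∈ range (n + 1), |h n k| ≤ B) {ν : Measure ℝ} [IsProbabilityMeasure ν]
    (hν : ∀ n : ℕ, Integrable (fun x : ℝ ↦ x ^ n) ν)
    (h0 : ∀ n, 1 ≤ n → ∫ x, (P n).eval x ∂ν = 0) :
    ∃ E : ℝ, 0 ≤ E ∧ ∀ᵐ x ∂ν, ∀ n, |(P n).eval x| ≤ E ^ n := by
  have hB0 : 0 ≤ B := (sum_nonneg fun k _ ↦ abs_nonneg (h 0 k)).trans (hB 0)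
  have hmom : ∀ n : ℕ, ∫ x, x ^ (2 * n) ∂ν ≤ (1 + B) ^ (2 * n) := fun n ↦ by
    have := hP.abs_map_X_pow_mul_le hB (L := polynomialIntegral hν) (by simp) h0 (2 * n) 0
    simpa [hP.zero] using (le_abs_self _).trans this
  refine ⟨1 + B + 1 + B, by positivity, ?_⟩
  filter_upwards [ae_abs_lt_of_integral_pow_le hν (by positivity) (lt_add_one _) hmom] with x hx
  exact hP.abs_eval_le hB hx.le (by linarith)

end IsHessenbergSeq

theorem sum_abs_border_le {h : ℕ → ℕ → ℝ} {B : ℝ}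
    (hB : ∀ n, ∑ k ∈ range (n + 1), |h n k| ≤ B) (n : ℕ) :
    ∑ k ∈ range (n + 1), |border h n k| ≤ B + 1 := by
  have hB0 : 0 ≤ B := (sum_nonneg fun k _ ↦ abs_nonneg (h 0 k)).trans (hB 0)
  cases n with
  | zero => simpa [border] using hB0.trans (le_add_of_nonneg_right zero_le_one)
  | succ n =>
    rw [sum_range_succ']
    refine add_le_add (hB n) ?_
    simp only [border]
    split_ifs <;> simp

theorem sum_abs_toeplitz_le (R : ℝ[X]) (n : ℕ) :
    ∑ k ∈ range (n + 1), |toeplitz R n k| ≤ ∑ i ∈ R.support, |R.coeff i| := by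
  have hreflect : ∑ k ∈ range (n + 1), |toeplitz R n k| = ∑ i ∈ range (n + 1), |R.coeff i| :=
    sum_range_reflect (fun i ↦ |R.coeff i|) (n + 1)
  rw [hreflect]
  calc ∑ i ∈ range (n + 1), |R.coeff i|
      ≤ ∑ i ∈ range (n + 1) ∪ R.support, |R.coeff i| :=
        sum_le_sum_of_subset_of_nonneg subset_union_left fun i _ _ ↦ abs_nonneg _
    _ = ∑ i ∈ R.support, |R.coeff i| :=
        (sum_subset subset_union_right fun i _ hi ↦ by simp [notMem_support_iff.1 hi]).symm

/-- The K-transform of free probability attached to the R-transform `R`: where a measure has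
R-transform `R`, it is the compositional inverse of the Cauchy transform. -/
def kTransform (R : ℝ[X]) (s : ℂ) : ℂ := s⁻¹ + aeval s R

theorem hasSum_aeval_mul_pow_of_border_toeplitz {R : ℝ[X]} {P : ℕ → ℝ[X]}
    (hP : IsHessenbergSeq (border (toeplitz R)) P) {x s : ℂ} (hs : s ≠ 0)
    (hx : kTransform R s ≠ x) (hsum : Summable fun n ↦ ‖aeval x (P (n + 1)) * s ^ n‖) :
    HasSum (fun n ↦ aeval x (P (n + 1)) * s ^ n) ((x / s - 1) / (kTransform R s - x)) := by
  set p : ℕ → ℂ := fun n ↦ aeval x (P (n + 1))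
  obtain ⟨T, hT⟩ := hsum.of_norm
  have hR : HasSum (fun n ↦ (R.coeff n : ℂ) * s ^ n) (aeval s R) := by
    rw [aeval_eq_sum_range]
    simp only [Complex.real_smul]
    exact hasSum_sum_of_ne_finset_zero fun n hn ↦ by
      simp [coeff_eq_zero_of_natDegree_lt (p := R) (n := n) (by grind)]
  have hRnorm : Summable fun n ↦ ‖(R.coeff n : ℂ) * s ^ n‖ :=
    summable_of_ne_finset_zero (s := R.support) fun n hn ↦ by simp [notMem_support_iff.1 hn]
  have hconv : HasSum (fun n ↦ (∑ k ∈ range (n + 1), toeplitz R n k * p k) * s ^ n)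
      (T * aeval s R) := by
    rw [← hT.tsum_eq, ← hR.tsum_eq]
    refine (hasSum_sum_range_mul_of_summable_norm hsum hRnorm).congr_fun fun n ↦ ?_
    rw [sum_mul]
    refine sum_congr rfl fun k hk ↦ ?_
    rw [← Nat.sub_add_cancel (Nat.lt_succ_iff.1 (mem_range.1 hk)), pow_add, toeplitz,
      Nat.add_sub_cancel]
    ring
  have hshift : HasSum (fun n ↦ p (n + 1) * s ^ n) ((T - x) / s) := by
    have := ((hasSum_nat_add_iff' 1).2 hT).div_const s
    simp only [sum_range_one, pow_zero, mul_one, zero_add, hP.one_eq_X_of_border, aeval_X] at this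
    refine this.congr_fun fun n ↦ ?_
    rw [pow_succ, ← mul_assoc, mul_div_cancel_right₀ _ hs]
  have hone : HasSum (fun n ↦ (if n = 0 then 1 else 0 : ℂ) * s ^ n) 1 := by
    convert hasSum_ite_eq (0 : ℕ) (1 : ℂ) using 2 with n
    rcases n with _ | n <;> simp
  have hrec : HasSum (fun n ↦ x * (p n * s ^ n)) ((T - x) / s + T * aeval s R + 1) := by
    refine ((hshift.add hconv).add hone).congr_fun fun n ↦ ?_
    have := congrArg (aeval x) (hP.X_mul_succ_of_border n)
    simp only [map_mul, aeval_X, map_add, map_sum, map_smul] at this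
    rw [← mul_assoc, this]
    simp only [Complex.real_smul, apply_ite (aeval x), map_one, map_zero]
    ring
  have hxT : x * T = (T - x) / s + T * aeval s R + 1 := (hT.mul_left x).unique hrec
  suffices (x / s - 1) / (kTransform R s - x) = T from this ▸ hT
  rw [div_eq_iff (sub_ne_zero.2 hx), kTransform]
  linear_combination hxT

theorem ne_zero_of_im_kTransform_pos {R : ℝ[X]} {s : ℂ} (hs : 0 < (kTransform R s).im) :
    s ≠ 0 := by
  rintro rfl
  simp [kTransform, aeval_def, eval₂_at_zero] at hs

theorem hasDerivAt_kTransform (R : ℝ[X]) {s : ℂ} (hs : s ≠ 0) :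
    HasDerivAt (kTransform R) (-(s ^ 2)⁻¹ + aeval s (derivative R)) s :=
  (hasDerivAt_inv hs).add (R.hasDerivAt_aeval s)

theorem isOpen_im_kTransform_pos (R : ℝ[X]) : IsOpen {s | 0 < (kTransform R s).im} := by
  refine isOpen_iff_eventually.2 fun s hs ↦ ?_
  have hcont := (hasDerivAt_kTransform R (ne_zero_of_im_kTransform_pos hs)).continuousAt
  exact (Complex.continuous_im.continuousAt.comp hcont).eventually_const_lt hs

theorem analyticAt_kTransform (R : ℝ[X]) {s : ℂ} (hs : 0 < (kTransform R s).im) :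
    AnalyticAt ℂ (kTransform R) s :=
  (analyticAt_inv (ne_zero_of_im_kTransform_pos hs)).add <|
    DifferentiableOn.analyticAt (s := Set.univ) R.differentiable_aeval.differentiableOn univ_mem

theorem analyticAt_resolventTransform (ν : Measure ℝ) [IsFiniteMeasure ν] {z : ℂ}
    (hz : 0 < z.im) : AnalyticAt ℂ (resolventTransform ν) z := by
  refine DifferentiableOn.analyticAt (s := {z | 0 < z.im}) (fun w hw ↦ ?_)
    ((isOpen_lt continuous_const Complex.continuous_im).mem_nhds hz)
  refine (hasDerivAt_resolventTransform w ?_).differentiableAt.differentiableWithinAt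
  rintro ⟨x, -, rfl⟩
  simp at hw

theorem integral_aeval_ofReal (ν : Measure ℝ) (p : ℝ[X]) :
    ∫ x : ℝ, aeval (x : ℂ) p ∂ν = (∫ x, p.eval x ∂ν : ℝ) :=
  (integral_congr_ae (.of_forall fun x ↦ aeval_algebraMap_apply_eq_algebraMap_eval x p)).trans
    integral_ofReal

section

variable {R : ℝ[X]} {P : ℕ → ℝ[X]} (hP : IsHessenbergSeq (border (toeplitz R)) P)
  {ν : Measure ℝ} [IsProbabilityMeasure ν] (hν : ∀ n : ℕ, Integrable (fun x : ℝ ↦ x ^ n) ν)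
  (h0 : ∀ n, 1 ≤ n → ∫ x, (P n).eval x ∂ν = 0)
include hP hν h0

theorem eventually_integral_div_kTransform_sub_eq_zero :
    ∀ᶠ s in 𝓝[≠] 0, 0 < (kTransform R s).im →
      ∫ x : ℝ, (x / s - 1) / (kTransform R s - x) ∂ν = 0 := by
  obtain ⟨E, hE0, hE⟩ := hP.exists_ae_abs_eval_le (sum_abs_border_le (sum_abs_toeplitz_le R)) hν h0
  have hsmall : ∀ᶠ s : ℂ in 𝓝[≠] 0, E * ‖s‖ < 1 :=
    nhdsWithin_le_nhds <| (isOpen_lt (by fun_prop) continuous_const).mem_nhds (by simp)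
  filter_upwards [hsmall, self_mem_nhdsWithin] with s hsE hs him
  have hne : ∀ x : ℝ, kTransform R s ≠ x := fun x hx ↦ by simp [hx] at him
  have hgeom : Summable fun n ↦ E * (E * ‖s‖) ^ n :=
    (summable_geometric_of_lt_one (by positivity) hsE).mul_left _
  have hbound : ∀ᵐ x : ℝ ∂ν, ∀ n, ‖aeval (x : ℂ) (P (n + 1)) * s ^ n‖ ≤ E * (E * ‖s‖) ^ n := by
    filter_upwards [hE] with x hx n
    have hnorm : ‖aeval (x : ℂ) (P (n + 1))‖ = |(P (n + 1)).eval x| :=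
      (congrArg _ (aeval_algebraMap_apply_eq_algebraMap_eval x _)).trans (Complex.norm_real _)
    rw [norm_mul, norm_pow, hnorm, mul_pow, ← mul_assoc, ← pow_succ']
    gcongr
    exact hx (n + 1)
  have hsum : HasSum (fun n ↦ ∫ x : ℝ, aeval (x : ℂ) (P (n + 1)) * s ^ n ∂ν)
      (∫ x : ℝ, (x / s - 1) / (kTransform R s - x) ∂ν) := by
    refine hasSum_integral_of_dominated_convergence (fun n _ ↦ E * (E * ‖s‖) ^ n)
      (fun n ↦ ?_) (fun n ↦ ?_) (.of_forall fun _ ↦ hgeom) (integrable_const _) ?_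
    · exact Continuous.aestronglyMeasurable (by fun_prop)
    · filter_upwards [hbound] with x hx using hx n
    · filter_upwards [hbound] with x hx
      exact hasSum_aeval_mul_pow_of_border_toeplitz hP hs (hne x)
        (hgeom.of_nonneg_of_le (fun _ ↦ norm_nonneg _) hx)
  refine hsum.unique (hasSum_zero.congr_fun fun n ↦ ?_)
  rw [integral_mul_const, integral_aeval_ofReal, h0 _ n.succ_pos, Complex.ofReal_zero, zero_mul]

theorem eventually_kTransform_sub_mul_resolventTransform :
    ∀ᶠ s in 𝓝[≠] 0, 0 < (kTransform R s).im →
      (kTransform R s - s) * resolventTransform ν (kTransform R s) = -1 := by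
  filter_upwards [eventually_integral_div_kTransform_sub_eq_zero hP hν h0, self_mem_nhdsWithin]
    with s hzero hs him
  have hs0 : s ≠ 0 := hs
  set z := kTransform R s
  have hne : ∀ x : ℝ, z ≠ x := fun x hx ↦ by simp [hx] at him
  have hint : Integrable (fun x : ℝ ↦ resolvent z x) ν := integrable_resolvent <| by
    rintro ⟨x, -, hx⟩
    exact hne x hx.symm
  have hsplit : ∀ x : ℝ, (x / s - 1) / (z - x) = -(s⁻¹ + (z - s) / s * resolvent z x) := fun x ↦ by
    have hzx : z - x ≠ 0 := sub_ne_zero.2 (hne x)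
    have hxz : (x : ℂ) - z ≠ 0 := sub_ne_zero.2 (hne x).symm
    simp only [resolvent, Ring.inverse_eq_inv', Complex.coe_algebraMap]
    field_simp
    ring
  have h := hzero him
  simp only [hsplit, integral_neg, neg_eq_zero] at h
  rw [integral_add (integrable_const _) (hint.const_mul _), integral_const_mul,
    ← resolventTransform_apply, integral_const, probReal_univ, one_smul] at h
  field_simp at h
  linear_combination h

theorem eqOn_kTransform_sub_mul_resolventTransform {U : Set ℂ} (hU : IsPreconnected U)
    (hpos : U ⊆ {s | 0 < (kTransform R s).im}) (hcl : 0 ∈ closure U) :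
    Set.EqOn (fun s ↦ (kTransform R s - s) * resolventTransform ν (kTransform R s))
      (fun _ ↦ -1) U := by
  have hanalytic : AnalyticOnNhd ℂ
      (fun s ↦ (kTransform R s - s) * resolventTransform ν (kTransform R s)) U := fun s hs ↦
    ((analyticAt_kTransform R (hpos hs)).sub analyticAt_id).mul
      ((analyticAt_resolventTransform ν (hpos hs)).fun_comp (analyticAt_kTransform R (hpos hs)))
  have hfreq : ∃ᶠ s in 𝓝[≠] 0, s ∈ U := by
    rw [frequently_nhdsWithin_iff]
    exact (mem_closure_iff_frequently.1 hcl).mono fun s hs ↦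
      ⟨hs, ne_zero_of_im_kTransform_pos (hpos hs)⟩
  obtain ⟨s, hsU, hs⟩ := (hfreq.and_eventually (eventually_nhdsNE_eventually_nhds_iff.2
    (eventually_kTransform_sub_mul_resolventTransform hP hν h0))).exists
  refine hanalytic.eqOn_of_preconnected_of_eventuallyEq analyticOnNhd_const hU hsU ?_
  filter_upwards [hs, (isOpen_im_kTransform_pos R).mem_nhds (hpos hsU)] with w hw hwpos
  exact hw hwpos

theorem deriv_kTransform_ne_zero {U : Set ℂ} (hU : IsPreconnected U)
    (hpos : U ⊆ {s | 0 < (kTransform R s).im}) (hcl : 0 ∈ closure U) {q : ℂ} (hq : q ∈ U) :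
    deriv (kTransform R) q ≠ 0 := fun hderiv ↦ by
  set V := connectedComponentIn {s | 0 < (kTransform R s).im} q
  have hUV : U ⊆ V := hU.subset_connectedComponentIn hq hpos
  have hVpos : V ⊆ {s | 0 < (kTransform R s).im} := connectedComponentIn_subset _ _
  have hconst := eqOn_kTransform_sub_mul_resolventTransform hP hν h0
    isPreconnected_connectedComponentIn hVpos (closure_mono hUV hcl)
  have hVnhds : V ∈ 𝓝 q := (isOpen_im_kTransform_pos R).connectedComponentIn.mem_nhds (hUV hq)
  have hK : HasDerivAt (kTransform R) 0 q :=
    hderiv ▸ (analyticAt_kTransform R (hpos hq)).differentiableAt.hasDerivAt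
  have hS := (analyticAt_resolventTransform ν (hpos hq)).differentiableAt.hasDerivAt
  have hmul := ((hK.sub (hasDerivAt_id q)).mul (hS.comp q hK)).unique
    ((hasDerivAt_const q (-1 : ℂ)).congr_of_eventuallyEq (hconst.eventuallyEq_of_mem hVnhds))
  have hzero : resolventTransform ν (kTransform R q) = 0 := by simpa using hmul
  simpa [hzero] using hconst (hUV hq)

end

end KTransform

section SpectralMeasure

theorem exists_isFiniteMeasure_forall_integral_eq {X : Type*} [TopologicalSpace X] [CompactSpace X]
    [T2Space X] [MeasurableSpace X] [BorelSpace X] (Λ : C(X, ℝ) →ₚ[ℝ] ℝ) :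
    ∃ μ : Measure X, IsFiniteMeasure μ ∧ ∀ f : C(X, ℝ), ∫ x, f x ∂μ = Λ f := by
  let Φ : CompactlySupportedContinuousMap X ℝ →ₚ[ℝ] ℝ := PositiveLinearMap.mk₀
    { toFun f := Λ f.toContinuousMap
      map_add' f g := map_add Λ f.toContinuousMap g.toContinuousMap
      map_smul' r f := map_smul Λ r f.toContinuousMap }
    fun f hf ↦ map_nonneg Λ (show 0 ≤ f.toContinuousMap from hf)
  exact ⟨RealRMK.rieszMeasure Φ, inferInstance, fun f ↦
    RealRMK.integral_rieszMeasure Φ (CompactlySupportedContinuousMap.continuousMapEquiv f)⟩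

variable {H : Type*} [NormedAddCommGroup H] [InnerProductSpace ℂ H] [CompleteSpace H]

theorem exists_spectralMeasure {A : H →L[ℂ] H} (hA : IsSelfAdjoint A) (e : H) :
    ∃ μ : Measure (spectrum ℝ A), IsFiniteMeasure μ ∧
      ∀ f : C(spectrum ℝ A, ℝ), ∫ x, f x ∂μ = (inner ℂ e (cfcHom hA f e)).re := by
  have : CompactSpace (spectrum ℝ A) := isCompact_iff_compactSpace.mp (spectrum.isCompact A)
  let Λ : C(spectrum ℝ A, ℝ) →ₚ[ℝ] ℝ := PositiveLinearMap.mk₀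
    { toFun f := (inner ℂ e (cfcHom hA f e)).re
      map_add' f g := by simp
      map_smul' r f := by simp [map_smul, inner_smul_right_eq_smul] }
    fun f hf ↦ ContinuousLinearMap.IsPositive.re_inner_nonneg_right
      ((ContinuousLinearMap.nonneg_iff_isPositive _).1 ((cfcHom_nonneg_iff hA).2 hf)) e
  exact exists_isFiniteMeasure_forall_integral_eq Λ

theorem exists_isProbabilityMeasure_integral_eval {A : H →L[ℂ] H} (hA : IsSelfAdjoint A) {e : H}
    (he : ‖e‖ = 1) :
    ∃ ν : Measure ℝ, IsProbabilityMeasure ν ∧ (∀ n : ℕ, Integrable (fun x ↦ x ^ n) ν) ∧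
      ∀ p : ℝ[X], ∫ x, p.eval x ∂ν = (inner ℂ e (aeval A p e)).re := by
  have : CompactSpace (spectrum ℝ A) := isCompact_iff_compactSpace.mp (spectrum.isCompact A)
  obtain ⟨μ, hμ, hμA⟩ := exists_spectralMeasure hA e
  have hval : MeasurableEmbedding (Subtype.val : spectrum ℝ A → ℝ) :=
    .subtype_coe (spectrum.isCompact A).measurableSet
  have hone : μ.real Set.univ = 1 := by simpa [he] using hμA 1
  have : IsProbabilityMeasure μ := ⟨(ENNReal.toReal_eq_one_iff _).1 hone⟩
  refine ⟨μ.map Subtype.val, Measure.isProbabilityMeasure_map hval.measurable.aemeasurable,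
    fun n ↦ hval.integrable_map_iff.2 ?_, fun p ↦ ?_⟩
  · exact (continuous_subtype_val.pow n).integrable_of_hasCompactSupport (.of_compactSpace _)
  · rw [hval.integral_map, ← cfc_polynomial p A hA, cfc_apply p.eval A hA]
    exact hμA ⟨fun x ↦ p.eval (x : ℝ), by fun_prop⟩

end SpectralMeasure

section BorderedOperator

variable {H : Type*} [NormedAddCommGroup H] [InnerProductSpace ℂ H]

/-- The operator `(α, f) ↦ (⟪u, f⟫, α u + M f)` on `ℂ ⊕ H`, which borders the operator `M` on `H`
by the vector `u` in the same way as `border` enlarges a recurrence matrix. -/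
def borderCLM (u : H) (M : H →L[ℂ] H) : WithLp 2 (ℂ × H) →L[ℂ] WithLp 2 (ℂ × H) :=
  (WithLp.prodContinuousLinearEquiv 2 ℂ ℂ H).symm.toContinuousLinearMap ∘L
    ((innerSL ℂ u ∘L .snd ℂ ℂ H).prod
      ((ContinuousLinearMap.fst ℂ ℂ H).smulRight u + M ∘L .snd ℂ ℂ H)) ∘L
    (WithLp.prodContinuousLinearEquiv 2 ℂ ℂ H).toContinuousLinearMap

theorem borderCLM_toLp (u : H) (M : H →L[ℂ] H) (α : ℂ) (f : H) :
    borderCLM u M (WithLp.toLp 2 (α, f)) = WithLp.toLp 2 (inner ℂ u f, α • u + M f) := rfl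

theorem isSelfAdjoint_borderCLM [CompleteSpace H] (u : H) {M : H →L[ℂ] H} (hM : IsSelfAdjoint M) :
    IsSelfAdjoint (borderCLM u M) := by
  rw [ContinuousLinearMap.isSelfAdjoint_iff_isSymmetric] at hM ⊢
  rintro ⟨α, f⟩ ⟨β, g⟩
  have hfg : inner ℂ (M f) g = inner ℂ f (M g) := hM f g
  simp only [ContinuousLinearMap.coe_coe, borderCLM_toLp, WithLp.prod_inner_apply, inner_add_left,
    inner_add_right, inner_smul_left, inner_smul_right, RCLike.inner_apply, inner_conj_symm, hfg]
  ring

theorem IsHessenbergSeq.apply_aeval_apply {E : Type*} [NormedAddCommGroup E] [NormedSpace ℂ E]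
    {h : ℕ → ℕ → ℝ} {P : ℕ → ℝ[X]} (hP : IsHessenbergSeq h P) (A : E →L[ℂ] E) (v : E) (n : ℕ) :
    A (aeval A (P n) v) =
      aeval A (P (n + 1)) v + ∑ k ∈ range (n + 1), (h n k : ℂ) • aeval A (P k) v := by
  have hPn := congr(aeval A $(hP.X_mul n) v)
  simpa [mul_apply_eq_comp, _root_.sum_apply] using hPn

theorem aeval_borderCLM_apply {h : ℕ → ℕ → ℝ} {P Q : ℕ → ℝ[X]}
    (hP : IsHessenbergSeq (border h) P) (hQ : IsHessenbergSeq h Q) {u : H} (hu : ‖u‖ = 1)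
    {M : H →L[ℂ] H} (horth : ∀ n, 1 ≤ n → inner ℂ u (aeval M (Q n) u) = 0) (n : ℕ) :
    aeval (borderCLM u M) (P (n + 1)) (WithLp.toLp 2 (1, 0)) =
      WithLp.toLp 2 (0, aeval M (Q n) u) := by
  induction n using Nat.strong_induction_on with
  | _ n ih =>
  cases n with
  | zero => simp [hP.one_eq_X_of_border, hQ.zero, borderCLM_toLp]
  | succ n =>
    have hPn := hP.apply_aeval_apply (borderCLM u M) (WithLp.toLp 2 (1, 0)) (n + 1)
    have hsum : ∑ k ∈ range (n + 2), ((border h (n + 1) k : ℝ) : ℂ) •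
          aeval (borderCLM u M) (P k) (WithLp.toLp 2 (1, 0)) =
        WithLp.toLp 2 (if n = 0 then 1 else 0,
          ∑ k ∈ range (n + 1), (h n k : ℂ) • aeval M (Q k) u) := by
      rw [sum_range_succ', sum_congr rfl fun k hk ↦ by rw [ih k (by grind)]]
      apply WithLp.ofLp_injective 2
      by_cases hn : n = 0 <;> ext <;> simp [border, hP.zero, hn, Prod.fst_sum, Prod.snd_sum]
    have hu' : inner ℂ u (aeval M (Q n) u) = if n = 0 then 1 else 0 := by
      split_ifs with hn
      · simp [hn, hQ.zero, hu]
      · exact horth n (by lia)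
    rw [ih n (by lia), borderCLM_toLp, hQ.apply_aeval_apply, hsum, hu'] at hPn
    rw [eq_sub_of_add_eq hPn.symm, ← WithLp.toLp_sub]
    simp

theorem exists_integral_eq_zero_of_border {h : ℕ → ℕ → ℝ} {P Q : ℕ → ℝ[X]} [CompleteSpace H]
    (hP : IsHessenbergSeq (border h) P) (hQ : IsHessenbergSeq h Q) {u : H} (hu : ‖u‖ = 1)
    {M : H →L[ℂ] H} (hM : IsSelfAdjoint M)
    (horth : ∀ n, 1 ≤ n → inner ℂ u (aeval M (Q n) u) = 0) :
    ∃ ν : Measure ℝ, IsProbabilityMeasure ν ∧ (∀ n : ℕ, Integrable (fun x ↦ x ^ n) ν) ∧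
      ∀ n, 1 ≤ n → ∫ x, (P n).eval x ∂ν = 0 := by
  have he : ‖(WithLp.toLp 2 (1, 0) : WithLp 2 (ℂ × H))‖ = 1 := by simp
  obtain ⟨ν, hν, hmom, heval⟩ :=
    exists_isProbabilityMeasure_integral_eval (isSelfAdjoint_borderCLM u hM) he
  refine ⟨ν, hν, hmom, fun n hn ↦ ?_⟩
  obtain ⟨m, rfl⟩ := Nat.exists_eq_add_of_le' hn
  rw [heval, aeval_borderCLM_apply hP hQ hu horth]
  simp

end BorderedOperator

section Multiplication

variable {Ω : Type*} [MeasurableSpace Ω] {μ : Measure Ω}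

/-- Multiplication by an essentially bounded function, as an operator on `L²`. -/
def mulCLM {x : Ω → ℂ} (hx : MemLp x ⊤ μ) : Lp ℂ 2 μ →L[ℂ] Lp ℂ 2 μ :=
  (ContinuousLinearMap.mul ℂ ℂ).holderL μ ⊤ 2 2 hx.toLp

theorem coeFn_mulCLM {x : Ω → ℂ} (hx : MemLp x ⊤ μ) (f : Lp ℂ 2 μ) :
    mulCLM hx f =ᵐ[μ] fun ω ↦ x ω * f ω := by
  filter_upwards [(ContinuousLinearMap.mul ℂ ℂ).coeFn_holder (r := 2) hx.toLp f,
    hx.coeFn_toLp] with ω hω hxω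
  rw [hxω] at hω
  exact hω

variable {x : Ω → ℝ} (hx : MemLp (fun ω ↦ (x ω : ℂ)) ⊤ μ)

include hx in
theorem isSelfAdjoint_mulCLM : IsSelfAdjoint (mulCLM hx) := by
  rw [ContinuousLinearMap.isSelfAdjoint_iff_isSymmetric]
  intro f g
  rw [L2.inner_def, L2.inner_def]
  refine integral_congr_ae ?_
  filter_upwards [coeFn_mulCLM hx f, coeFn_mulCLM hx g] with ω hf hg
  simp only [ContinuousLinearMap.coe_coe, hf, hg, RCLike.inner_apply, map_mul, Complex.conj_ofReal]
  ring

theorem coeFn_aeval_mulCLM (p : ℝ[X]) (f : Lp ℂ 2 μ) :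
    aeval (mulCLM hx) p f =ᵐ[μ] fun ω ↦ ((p.eval (x ω) : ℝ) : ℂ) * f ω := by
  induction p using Polynomial.induction_on with
  | C r =>
    have hr : aeval (mulCLM hx) (C r) f = (r : ℂ) • f := by
      rw [aeval_C]
      rfl
    filter_upwards [Lp.coeFn_smul (r : ℂ) f] with ω hω
    rw [hr, hω, eval_C, Pi.smul_apply, smul_eq_mul]
  | add p q hp hq =>
    rw [map_add, add_apply]
    filter_upwards [hp, hq, Lp.coeFn_add (aeval (mulCLM hx) p f) (aeval (mulCLM hx) q f)]
      with ω hpω hqω hω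
    rw [hω, Pi.add_apply, hpω, hqω, eval_add, Complex.ofReal_add, add_mul]
  | monomial n r ih =>
    rw [pow_succ, ← mul_assoc, mul_comm, map_mul, aeval_X, mul_apply_eq_comp]
    filter_upwards [ih, coeFn_mulCLM hx (aeval (mulCLM hx) (C r * X ^ n) f)] with ω hω hxω
    rw [hxω, hω, eval_mul (p := X), eval_X, Complex.ofReal_mul, mul_assoc]

theorem inner_one_aeval_mulCLM_one [IsProbabilityMeasure μ] (p : ℝ[X]) :
    inner ℂ (Lp.const 2 μ (1 : ℂ)) (aeval (mulCLM hx) p (Lp.const 2 μ 1)) =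
      ((∫ ω, p.eval (x ω) ∂μ : ℝ) : ℂ) := by
  rw [L2.inner_def, ← integral_complex_ofReal]
  refine integral_congr_ae ?_
  filter_upwards [coeFn_aeval_mulCLM hx p (Lp.const 2 μ 1)] with ω hω
  simp [hω]

include hx in
theorem exists_integral_eq_zero_of_border_of_integral_eq_zero [IsProbabilityMeasure μ]
    {h : ℕ → ℕ → ℝ} {P Q : ℕ → ℝ[X]} (hP : IsHessenbergSeq (border h) P) (hQ : IsHessenbergSeq h Q)
    (hμ : ∀ n, 1 ≤ n → ∫ ω, (Q n).eval (x ω) ∂μ = 0) :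
    ∃ ν : Measure ℝ, IsProbabilityMeasure ν ∧ (∀ n : ℕ, Integrable (fun x ↦ x ^ n) ν) ∧
      ∀ n, 1 ≤ n → ∫ x, (P n).eval x ∂ν = 0 := by
  refine exists_integral_eq_zero_of_border hP hQ (u := Lp.const 2 μ (1 : ℂ)) ?_
    (isSelfAdjoint_mulCLM hx) fun n hn ↦ ?_
  · simp [Lp.norm_const]
  · exact (inner_one_aeval_mulCLM_one hx (Q n)).trans (by rw [hμ n hn, Complex.ofReal_zero])

end Multiplication

section Toeplitz

variable {K : Type*} [CommRing K]

/-- The polynomial sequence with recurrence matrix `h`. -/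
def hessenbergSeq (h : ℕ → ℕ → K) : ℕ → K[X]
  | 0 => 1
  | n + 1 => X * hessenbergSeq h n - ∑ k : Fin (n + 1), h n k • hessenbergSeq h k

theorem isHessenbergSeq_hessenbergSeq (h : ℕ → ℕ → K) : IsHessenbergSeq h (hessenbergSeq h) where
  zero := by rw [hessenbergSeq]
  X_mul n := by
    rw [hessenbergSeq, Fin.sum_univ_eq_sum_range (fun k ↦ h n k • hessenbergSeq h k)]
    ring

theorem IsHessenbergSeq.map_eq_ite_of_toeplitz {R : K[X]} {Q : ℕ → K[X]}
    (hQ : IsHessenbergSeq (toeplitz R) Q) {J : ℕ → K[X] →ₗ[K] K} {κ : K} (hzero : J 0 = 0)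
    (hX : ∀ i p, J (i + 1) (X * p) =
      J i p + ∑ j ∈ range (R.natDegree + 1), R.coeff j * J (i + 1 + j) p)
    (hone : ∀ i, J i 1 = if i = 1 then κ else 0) (n i : ℕ) :
    J i (Q n) = if i = n + 1 then κ else 0 := by
  induction n using Nat.strong_induction_on generalizing i with
  | _ n ih =>
  rcases n with - | n
  · rw [hQ.zero, hone]
  rcases i with - | m
  · simp [hzero]
  rw [eq_sub_of_add_eq (hQ.X_mul n).symm, map_sub, hX, map_sum, ih n (by lia), add_sub_assoc,
    sub_eq_zero.2, add_zero]
  · simp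
  have hlhs : ∑ j ∈ range (R.natDegree + 1), R.coeff j * J (m + 1 + j) (Q n) =
      if m ≤ n then R.coeff (n - m) * κ else 0 := by
    rw [sum_congr rfl fun j _ ↦ by rw [ih n (by lia)]]
    split_ifs with hmn
    · rw [sum_eq_single (n - m) (fun j _ hj ↦ by rw [if_neg (by lia), mul_zero])
        fun hj ↦ by rw [coeff_eq_zero_of_natDegree_lt (by grind), zero_mul], if_pos (by lia)]
    · exact sum_eq_zero fun j _ ↦ by rw [if_neg (by lia), mul_zero]
  have hrhs : ∑ k ∈ range (n + 1), J (m + 1) (toeplitz R n k • Q k) =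
      if m ≤ n then R.coeff (n - m) * κ else 0 := by
    rw [sum_congr rfl fun k hk ↦ by rw [map_smul, ih k (by grind), smul_eq_mul, toeplitz]]
    simp
  rw [hlhs, hrhs]

theorem IsHessenbergSeq.eval_succ_eq_zero_of_toeplitz_C {a : K} {Q : ℕ → K[X]}
    (hQ : IsHessenbergSeq (toeplitz (C a)) Q) (n : ℕ) : (Q (n + 1)).eval a = 0 := by
  have hlast : ∑ k ∈ range (n + 1), toeplitz (C a) n k • Q k = a • Q n := by
    rw [sum_range_succ, sum_eq_zero fun k hk ↦ ?_]
    · simp [toeplitz]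
    · rw [toeplitz, coeff_C_of_ne_zero (by grind), zero_smul]
  have := congrArg (eval a) (hQ.X_mul n)
  simpa [hlast] using this

end Toeplitz

section LevelCurve

theorem exists_derivative_eq {K : Type*} [Field K] [CharZero K] (p : K[X]) :
    ∃ q, derivative q = p := by
  induction p using Polynomial.induction_on' with
  | add p q hp hq =>
    obtain ⟨p', rfl⟩ := hp
    obtain ⟨q', rfl⟩ := hq
    exact ⟨p' + q', derivative_add⟩
  | monomial n a =>
    refine ⟨monomial (n + 1) (a / (n + 1)), ?_⟩
    rw [derivative_monomial, Nat.add_sub_cancel]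
    push_cast
    rw [div_mul_cancel₀ _ n.cast_add_one_ne_zero]

theorem im_aeval_ofReal (p : ℝ[X]) (x : ℝ) : (aeval (x : ℂ) p).im = 0 := by
  rw [← Complex.coe_algebraMap, aeval_algebraMap_apply, Complex.coe_algebraMap, Complex.ofReal_im]

/-- The curve `θ ↦ 1 / (r(θ) e^{iθ})`. -/
def polarInv (r : ℝ → ℝ) (θ : ℝ) : ℂ := (r θ * Complex.exp (θ * Complex.I))⁻¹

/-- The curve `polarInv r` on `(0, π)` is a level curve of `kTransform R` on which the latter takes
the real values `x`, traversed so that `x` is nonincreasing. Then `π⁻¹ Im (polarInv r)` is the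
density of a positive measure on the image of `x`, by Stieltjes inversion. -/
structure IsRealLevelCurve (R : ℝ[X]) (r x : ℝ → ℝ) : Prop where
  continuous : Continuous r
  pos : ∀ θ, 0 < r θ
  differentiableAt : ∀ θ ∈ Set.Ioo 0 Real.pi, DifferentiableAt ℝ r θ
  kTransform_eq : ∀ θ, kTransform R (polarInv r θ) = x θ
  deriv_nonpos : ∀ θ ∈ Set.Ioo 0 Real.pi, deriv x θ ≤ 0

theorem polarInv_eq {r : ℝ → ℝ} (θ : ℝ) :
    polarInv r θ = ((r θ)⁻¹ : ℝ) * (Real.cos θ - Real.sin θ * Complex.I) := by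
  rw [polarInv, mul_inv, ← Complex.exp_neg, ← neg_mul, Complex.exp_mul_I]
  simp [sub_eq_add_neg]

theorem im_polarInv (r : ℝ → ℝ) (θ : ℝ) : (polarInv r θ).im = -(Real.sin θ / r θ) := by
  rw [polarInv_eq, Complex.im_ofReal_mul, Complex.sub_im, Complex.ofReal_im, Complex.im_ofReal_mul,
    Complex.I_im, mul_one, zero_sub, mul_neg, div_eq_inv_mul]

theorem im_aeval_polarInv_zero (p : ℝ[X]) (r : ℝ → ℝ) : (aeval (polarInv r 0) p).im = 0 := by
  have : polarInv r 0 = ((r 0)⁻¹ : ℝ) := by simp [polarInv]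
  rw [this, im_aeval_ofReal]

theorem im_aeval_polarInv_pi (p : ℝ[X]) (r : ℝ → ℝ) :
    (aeval (polarInv r Real.pi) p).im = 0 := by
  have : polarInv r Real.pi = (-(r Real.pi)⁻¹ : ℝ) := by simp [polarInv_eq]
  rw [this, im_aeval_ofReal]

theorem hasDerivAt_polarInv {r : ℝ → ℝ} {θ : ℝ} (hr : r θ ≠ 0) (hd : DifferentiableAt ℝ r θ) :
    HasDerivAt (polarInv r)
      (-((deriv r θ / r θ : ℝ) + Complex.I) * polarInv r θ) θ := by
  have hr' : (r θ : ℂ) ≠ 0 := Complex.ofReal_ne_zero.2 hr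
  have hexp : HasDerivAt (fun θ : ℝ ↦ Complex.exp (θ * Complex.I))
      (Complex.exp (θ * Complex.I) * Complex.I) θ := by
    simpa using ((Complex.ofRealCLM.hasDerivAt (x := θ)).mul_const Complex.I).cexp
  refine ((hd.hasDerivAt.ofReal_comp.mul hexp).inv
    (mul_ne_zero hr' (Complex.exp_ne_zero _))).congr_deriv ?_
  have := Complex.exp_ne_zero (θ * Complex.I)
  simp only [polarInv, Pi.mul_apply]
  push_cast
  field_simp

namespace IsRealLevelCurve

variable {R : ℝ[X]} {r x : ℝ → ℝ} (h : IsRealLevelCurve R r x)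
include h

theorem polarInv_ne_zero (θ : ℝ) : polarInv r θ ≠ 0 :=
  inv_ne_zero (mul_ne_zero (Complex.ofReal_ne_zero.2 (h.pos θ).ne') (Complex.exp_ne_zero _))

theorem continuous_polarInv : Continuous (polarInv r) :=
  ((Complex.continuous_ofReal.comp h.continuous).mul (by fun_prop)).inv₀ fun θ ↦
    inv_eq_zero.not.1 (h.polarInv_ne_zero θ)

theorem continuous_value : Continuous x := by
  have : x = fun θ ↦ (kTransform R (polarInv r θ)).re := by ext; simp [h.kTransform_eq]
  rw [this]
  exact Complex.continuous_re.comp <| (h.continuous_polarInv.inv₀ h.polarInv_ne_zero).add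
    (R.continuous_aeval.comp h.continuous_polarInv)

theorem differentiableAt_polarInv {θ : ℝ} (hθ : θ ∈ Set.Ioo 0 Real.pi) :
    DifferentiableAt ℝ (polarInv r) θ :=
  (hasDerivAt_polarInv (h.pos θ).ne' (h.differentiableAt θ hθ)).differentiableAt

theorem hasDerivAt_ofReal {θ : ℝ} (hθ : θ ∈ Set.Ioo 0 Real.pi) :
    HasDerivAt (fun θ ↦ (x θ : ℂ))
      ((-(polarInv r θ ^ 2)⁻¹ + aeval (polarInv r θ) (derivative R)) * deriv (polarInv r) θ) θ := by
  simpa only [Function.comp_def, h.kTransform_eq] using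
    (hasDerivAt_kTransform R (h.polarInv_ne_zero θ)).comp θ
      (h.differentiableAt_polarInv hθ).hasDerivAt

theorem hasDerivAt {θ : ℝ} (hθ : θ ∈ Set.Ioo 0 Real.pi) : HasDerivAt x (deriv x θ) θ := by
  have := Complex.reCLM.hasFDerivAt.comp_hasDerivAt θ (h.hasDerivAt_ofReal hθ)
  exact this.differentiableAt.hasDerivAt

theorem ofReal_deriv {θ : ℝ} (hθ : θ ∈ Set.Ioo 0 Real.pi) :
    ((deriv x θ : ℝ) : ℂ) = (-(polarInv r θ ^ 2)⁻¹ + aeval (polarInv r θ) (derivative R)) *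
      deriv (polarInv r) θ :=
  (h.hasDerivAt hθ).ofReal_comp.unique (h.hasDerivAt_ofReal hθ)

theorem intervalIntegrable_deriv : IntervalIntegrable (deriv x) volume 0 Real.pi := by
  have hneg := intervalIntegral.intervalIntegrable_deriv_of_nonneg (g := -x) (g' := -deriv x)
    (a := 0) (b := Real.pi) h.continuous_value.neg.continuousOn
    (by
      rw [min_eq_left Real.pi_pos.le, max_eq_right Real.pi_pos.le]
      exact fun θ hθ ↦ (h.hasDerivAt hθ).neg)
    (by
      rw [min_eq_left Real.pi_pos.le, max_eq_right Real.pi_pos.le]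
      exact fun θ hθ ↦ neg_nonneg.2 (h.deriv_nonpos θ hθ))
  simpa using hneg.neg

theorem intervalIntegrable_integrand (i : ℕ) (p : ℝ[X]) :
    IntervalIntegrable (fun θ ↦ deriv x θ * ((polarInv r θ ^ i).im * p.eval (x θ))) volume 0
      Real.pi :=
  h.intervalIntegrable_deriv.mul_continuousOn
    ((Complex.continuous_im.comp (h.continuous_polarInv.pow i)).mul
      (p.continuous.comp h.continuous_value)).continuousOn

/-- The functional `p ↦ ∫ p(x) Im (yⁱ) dx` along the level curve `y = polarInv r`. -/
def momentFunctional (i : ℕ) : ℝ[X] →ₗ[ℝ] ℝ where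
  toFun p := ∫ θ in 0..Real.pi, deriv x θ * ((polarInv r θ ^ i).im * p.eval (x θ))
  map_add' p q := by
    simp only [eval_add, mul_add]
    exact intervalIntegral.integral_add (h.intervalIntegrable_integrand i p)
      (h.intervalIntegrable_integrand i q)
  map_smul' s p := by
    simp only [eval_smul, smul_eq_mul, RingHom.id_apply, ← intervalIntegral.integral_const_mul]
    congr! 2
    ring

theorem momentFunctional_apply (i : ℕ) (p : ℝ[X]) : h.momentFunctional i p =
    ∫ θ in 0..Real.pi, deriv x θ * ((polarInv r θ ^ i).im * p.eval (x θ)) := rfl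

theorem momentFunctional_zero : h.momentFunctional 0 = 0 := by
  ext
  simp [momentFunctional_apply]

theorem im_polarInv_pow_succ_mul (i : ℕ) (θ : ℝ) : (polarInv r θ ^ (i + 1)).im * x θ =
    (polarInv r θ ^ i).im +
      ∑ j ∈ range (R.natDegree + 1), R.coeff j * (polarInv r θ ^ (i + 1 + j)).im := by
  have hy := h.polarInv_ne_zero θ
  have hx : polarInv r θ ^ (i + 1) * x θ = polarInv r θ ^ i +
      ∑ j ∈ range (R.natDegree + 1), (R.coeff j : ℂ) * polarInv r θ ^ (i + 1 + j) := by
    rw [← h.kTransform_eq, kTransform, aeval_eq_sum_range, mul_add, mul_sum]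
    congr 1
    · field_simp
      ring
    · exact sum_congr rfl fun j _ ↦ by rw [Complex.real_smul]; ring
  simpa using congrArg Complex.im hx

theorem momentFunctional_succ_X_mul (i : ℕ) (p : ℝ[X]) : h.momentFunctional (i + 1) (X * p) =
    h.momentFunctional i p +
      ∑ j ∈ range (R.natDegree + 1), R.coeff j * h.momentFunctional (i + 1 + j) p := by
  simp only [momentFunctional_apply, ← intervalIntegral.integral_const_mul]
  rw [← intervalIntegral.integral_finsetSum, ← intervalIntegral.integral_add]
  · congr! 2 with θ
    rw [eval_mul, eval_X, ← mul_assoc (Complex.im _), h.im_polarInv_pow_succ_mul, add_mul, mul_add,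
      sum_mul, mul_sum]
    congr! 2
    ring
  · exact h.intervalIntegrable_integrand i p
  · simpa only [Finset.sum_fn] using IntervalIntegrable.sum _ fun j _ ↦
      (h.intervalIntegrable_integrand (i + 1 + j) p).const_mul (R.coeff j)
  · exact fun j _ ↦ (h.intervalIntegrable_integrand _ p).const_mul _

theorem momentFunctional_one_right_eq_mul_pi {i : ℕ} {S : ℝ[X]} {κ : ℝ}
    (hS : ∀ θ ∈ Set.Ioo 0 Real.pi, deriv x θ * (polarInv r θ ^ i).im =
      κ + (deriv (polarInv r) θ * aeval (polarInv r θ) (derivative S)).im) :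
    h.momentFunctional i 1 = κ * Real.pi := by
  have hderiv : ∀ θ ∈ Set.Ioo 0 Real.pi,
      HasDerivAt (fun θ ↦ κ * θ + (aeval (polarInv r θ) S).im)
        (deriv x θ * ((polarInv r θ ^ i).im * eval (x θ) 1)) θ := fun θ hθ ↦ by
    have := Complex.imCLM.hasFDerivAt.comp_hasDerivAt θ
      ((S.hasDerivAt_aeval _).comp θ (h.differentiableAt_polarInv hθ).hasDerivAt)
    rw [eval_one, mul_one, hS θ hθ, mul_comm (deriv (polarInv r) θ)]
    simpa [Complex.mul_im] using ((hasDerivAt_id' θ).const_mul κ).fun_add this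
  have hcont : Continuous fun θ ↦ κ * θ + (aeval (polarInv r θ) S).im :=
    (continuous_const_mul κ).add <|
      Complex.continuous_im.comp (S.continuous_aeval.comp h.continuous_polarInv)
  rw [momentFunctional_apply, intervalIntegral.integral_eq_sub_of_hasDerivAt_of_le Real.pi_pos.le
    hcont.continuousOn hderiv (h.intervalIntegrable_integrand i 1)]
  simp only [im_aeval_polarInv_zero, im_aeval_polarInv_pi]
  ring

theorem momentFunctional_one_right (i : ℕ) :
    h.momentFunctional i 1 = if i = 1 then Real.pi else 0 := by
  rcases i with - | i
  · simp [momentFunctional_zero]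
  have hdx : ∀ θ ∈ Set.Ioo 0 Real.pi, deriv x θ * (polarInv r θ ^ (i + 1)).im =
      (deriv (polarInv r) θ * (-(polarInv r θ ^ i / polarInv r θ) +
        aeval (polarInv r θ) (X ^ (i + 1) * derivative R))).im := fun θ hθ ↦ by
    have hy := h.polarInv_ne_zero θ
    rw [← Complex.im_ofReal_mul, h.ofReal_deriv hθ, map_mul, map_pow, aeval_X]
    congr 1
    field_simp
    ring
  rcases i with - | i
  · obtain ⟨S, hS⟩ := exists_derivative_eq (X ^ 1 * derivative R)
    rw [h.momentFunctional_one_right_eq_mul_pi (S := S) (κ := 1), if_pos rfl, one_mul]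
    intro θ hθ
    have hlog : deriv (polarInv r) θ * -(polarInv r θ ^ 0 / polarInv r θ) =
        (deriv r θ / r θ : ℝ) + Complex.I := by
      rw [(hasDerivAt_polarInv (h.pos θ).ne' (h.differentiableAt θ hθ)).deriv]
      have := h.polarInv_ne_zero θ
      field_simp
    rw [hdx θ hθ, hS, mul_add, hlog, Complex.add_im, Complex.add_im, Complex.ofReal_im,
      Complex.I_im, zero_add]
  · obtain ⟨S, hS⟩ := exists_derivative_eq (X ^ (i + 2) * derivative R - X ^ i)
    rw [h.momentFunctional_one_right_eq_mul_pi (S := S) (κ := 0), if_neg (by lia), zero_mul]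
    intro θ hθ
    rw [hdx θ hθ, hS, zero_add, map_sub, map_pow, aeval_X, pow_succ,
      mul_div_cancel_right₀ _ (h.polarInv_ne_zero θ), neg_add_eq_sub]

theorem im_polarInv_nonpos {θ : ℝ} (hθ : θ ∈ Set.Ioo 0 Real.pi) : (polarInv r θ).im ≤ 0 := by
  rw [im_polarInv, neg_nonpos]
  exact div_nonneg (Real.sin_pos_of_mem_Ioo hθ).le (h.pos θ).le

theorem density_nonneg {θ : ℝ} (hθ : θ ∈ Set.Ioo 0 Real.pi) :
    0 ≤ Real.pi⁻¹ * (deriv x θ * (polarInv r θ).im) :=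
  mul_nonneg (inv_nonneg.2 Real.pi_pos.le) <|
    mul_nonneg_of_nonpos_of_nonpos (h.deriv_nonpos θ hθ) (h.im_polarInv_nonpos hθ)

omit h in
/-- The measure on angles whose image under `x` has density `π⁻¹ |Im (polarInv r)|` with respect to
Lebesgue measure. -/
def angularMeasure (r x : ℝ → ℝ) : Measure ℝ :=
  (volume.restrict (Set.Ioo 0 Real.pi)).withDensity fun θ ↦
    ENNReal.ofReal (Real.pi⁻¹ * (deriv x θ * (polarInv r θ).im))

theorem integral_eval_angularMeasure (p : ℝ[X]) :
    ∫ θ, p.eval (x θ) ∂angularMeasure r x = Real.pi⁻¹ * h.momentFunctional 1 p := by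
  have hmeas : Measurable fun θ ↦ ENNReal.ofReal (Real.pi⁻¹ * (deriv x θ * (polarInv r θ).im)) :=
    (((measurable_deriv x).mul
      (Complex.continuous_im.comp h.continuous_polarInv).measurable).const_mul _).ennreal_ofReal
  rw [angularMeasure, integral_withDensity_eq_integral_toReal_smul hmeas (by simp),
    momentFunctional_apply, intervalIntegral.integral_of_le Real.pi_pos.le,
    integral_Ioc_eq_integral_Ioo, ← integral_const_mul]
  refine setIntegral_congr_fun measurableSet_Ioo fun θ hθ ↦ ?_
  simp only [ENNReal.toReal_ofReal (h.density_nonneg hθ), smul_eq_mul, pow_one]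
  ring

theorem isProbabilityMeasure_angularMeasure : IsProbabilityMeasure (angularMeasure r x) := by
  have hint := ((h.intervalIntegrable_integrand 1 1).const_mul Real.pi⁻¹).1.mono_set
    Set.Ioo_subset_Ioc_self
  have : IsFiniteMeasure (angularMeasure r x) :=
    isFiniteMeasure_withDensity_ofReal (by simpa using hint.hasFiniteIntegral)
  have hone := h.integral_eval_angularMeasure 1
  rw [h.momentFunctional_one_right, if_pos rfl, inv_mul_cancel₀ Real.pi_ne_zero] at hone
  exact isProbabilityMeasure_iff_real.2 (by simpa using hone)

theorem memLp_top_angularMeasure : MemLp (fun θ ↦ (x θ : ℂ)) ⊤ (angularMeasure r x) := by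
  have hcont : Continuous fun θ ↦ (x θ : ℂ) := Complex.continuous_ofReal.comp h.continuous_value
  obtain ⟨C, hC⟩ := isCompact_Icc.exists_bound_of_continuousOn (s := Set.Icc 0 Real.pi)
    hcont.continuousOn
  refine memLp_top_of_bound hcont.aestronglyMeasurable C ?_
  refine (withDensity_absolutelyContinuous _ _).ae_le ?_
  filter_upwards [ae_restrict_mem measurableSet_Ioo] with θ hθ
  exact hC θ (Set.Ioo_subset_Icc_self hθ)

theorem integral_eval_eq_zero {Q : ℕ → ℝ[X]} (hQ : IsHessenbergSeq (toeplitz R) Q) {n : ℕ}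
    (hn : 1 ≤ n) : ∫ θ, (Q n).eval (x θ) ∂angularMeasure r x = 0 := by
  rw [h.integral_eval_angularMeasure, hQ.map_eq_ite_of_toeplitz h.momentFunctional_zero
    h.momentFunctional_succ_X_mul h.momentFunctional_one_right, if_neg (by lia), mul_zero]

theorem exists_integral_eq_zero {P : ℕ → ℝ[X]} (hP : IsHessenbergSeq (border (toeplitz R)) P) :
    ∃ ν : Measure ℝ, IsProbabilityMeasure ν ∧ (∀ n : ℕ, Integrable (fun x ↦ x ^ n) ν) ∧
      ∀ n, 1 ≤ n → ∫ x, (P n).eval x ∂ν = 0 :=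
  have := h.isProbabilityMeasure_angularMeasure
  exists_integral_eq_zero_of_border_of_integral_eq_zero h.memLp_top_angularMeasure hP
    (isHessenbergSeq_hessenbergSeq _) fun _ ↦ h.integral_eval_eq_zero
      (isHessenbergSeq_hessenbergSeq _)

end IsRealLevelCurve

end LevelCurve

section FourStep

/-- The symbol of the four-step recursion: the generating polynomial of the diagonals of its
recurrence matrix. -/
def fourStepSymbol (a b c : ℝ) : ℝ[X] := C a + C b * X + C c * X ^ 2

theorem natDegree_fourStepSymbol_le (a b c : ℝ) : (fourStepSymbol a b c).natDegree ≤ 2 := by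
  rw [fourStepSymbol]
  compute_degree

theorem kTransform_fourStepSymbol (a b c : ℝ) (s : ℂ) :
    kTransform (fourStepSymbol a b c) s = s⁻¹ + (a + b * s + c * s ^ 2) := by
  simp [kTransform, fourStepSymbol]

theorem exists_cubic_parameters {b c : ℝ} (h : b ^ 3 < 27 * c ^ 2) :
    ∃ u v : ℝ, 0 < v ∧ b = 3 * u ^ 2 - v ^ 2 ∧ c = -u * (u ^ 2 + v ^ 2) := by
  have hsurj : Function.Surjective fun u : ℝ ↦ u * (4 * u ^ 2 - b) := by
    have hquad : ∀ {l : Filter ℝ}, Tendsto (fun u ↦ u ^ 2) l atTop →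
        Tendsto (fun u ↦ 4 * u ^ 2 - b) l atTop := fun h ↦
      tendsto_atTop_add_const_right _ (-b) (h.const_mul_atTop four_pos)
    exact Continuous.surjective (by fun_prop)
      (tendsto_id.atTop_mul_atTop₀ (hquad (tendsto_pow_atTop two_ne_zero)))
      (tendsto_id.atBot_mul_atTop₀ (hquad (by
        simpa only [sq, id] using (tendsto_id (α := ℝ)).atBot_mul_atBot₀ tendsto_id)))
  obtain ⟨u, hu⟩ := hsurj (-c)
  have hc : c = b * u - 4 * u ^ 3 := by linarith
  have hdisc : 27 * c ^ 2 - b ^ 3 = (3 * u ^ 2 - b) * (12 * u ^ 2 - b) ^ 2 := by rw [hc]; ring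
  have hδ : 0 < 3 * u ^ 2 - b := pos_of_mul_pos_left (hdisc ▸ sub_pos.2 h) (sq_nonneg _)
  have hv := Real.sq_sqrt hδ.le
  exact ⟨u, √(3 * u ^ 2 - b), Real.sqrt_pos.2 hδ, by linarith, by rw [hv, hc]; ring⟩

theorem exists_deriv_kTransform_eq_zero (a : ℝ) {b c : ℝ} (h : b ^ 3 < 27 * c ^ 2) :
    ∃ q : ℂ, deriv (kTransform (fourStepSymbol a b c)) q = 0 ∧
      ∀ r : ℝ, 0 < r → 0 < (kTransform (fourStepSymbol a b c) (r * q)).im := by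
  obtain ⟨u, v, hv, hb, hc⟩ := exists_cubic_parameters h
  set w : ℂ := ⟨u, v⟩
  have hw : w ≠ 0 := fun hw ↦ hv.ne' (congrArg Complex.im hw)
  refine ⟨w⁻¹, ?_, fun r hr ↦ ?_⟩
  · rw [(hasDerivAt_kTransform _ (inv_ne_zero hw)).deriv]
    have hcubic : w ^ 3 = (3 * u ^ 2 - v ^ 2) * w - 2 * (u * (u ^ 2 + v ^ 2)) := by
      apply Complex.ext <;> simp [w, pow_succ] <;> ring
    have hderiv : aeval w⁻¹ (derivative (fourStepSymbol a b c)) = b + 2 * c * w⁻¹ := by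
      simp [fourStepSymbol, one_add_one_eq_two, mul_assoc, mul_left_comm]
    rw [hderiv, hb, hc]
    push_cast
    field_simp
    linear_combination -hcubic
  · have him : (kTransform (fourStepSymbol a b c) (r * w⁻¹)).im =
        v / (r * (u ^ 2 + v ^ 2)) *
          (u ^ 2 * ((1 - r) ^ 2 * (1 + 2 * r)) + v ^ 2 * (1 + r ^ 2)) := by
      have hm : u ^ 2 + v ^ 2 ≠ 0 := by positivity
      rw [kTransform_fourStepSymbol, hb, hc]
      simp [w, Complex.normSq_apply, pow_two]
      field_simp
      ring
    rw [him]
    positivity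

theorem sq_le_cube_of_integral_eq_zero {a b c : ℝ} {P : ℕ → ℝ[X]}
    (hP : IsHessenbergSeq (border (toeplitz (fourStepSymbol a b c))) P) {ν : Measure ℝ}
    [IsProbabilityMeasure ν] (hν : ∀ n : ℕ, Integrable (fun x : ℝ ↦ x ^ n) ν)
    (h0 : ∀ n, 1 ≤ n → ∫ x, (P n).eval x ∂ν = 0) : 27 * c ^ 2 ≤ b ^ 3 := by
  by_contra! hlt
  obtain ⟨q, hq, hray⟩ := exists_deriv_kTransform_eq_zero a hlt
  have hcont : Continuous fun r : ℝ ↦ (r : ℂ) * q := by fun_prop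
  have hzero : (0 : ℂ) ∈ closure ((fun r : ℝ ↦ (r : ℂ) * q) '' Set.Ioi 0) :=
    image_closure_subset_closure_image hcont ⟨0, by simp⟩
  refine deriv_kTransform_ne_zero hP hν h0 (isPreconnected_Ioi.image _ hcont.continuousOn)
    ?_ hzero ⟨1, Set.mem_Ioi.2 one_pos, by simp⟩ hq
  rintro _ ⟨r, hr, rfl⟩
  exact hray r hr

/-- Viète's trigonometric formula for the largest root of `r³ - 3t²r = 2d`, where `|d| ≤ t³`. -/
def vieteRoot (t d : ℝ) : ℝ := 2 * t * Real.cos (Real.arccos (d / t ^ 3) / 3)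

theorem continuous_vieteRoot (t : ℝ) : Continuous (vieteRoot t) := by
  unfold vieteRoot
  fun_prop

theorem vieteRoot_cube_sub {t d : ℝ} (ht : 0 < t) (hd : |d| ≤ t ^ 3) :
    vieteRoot t d ^ 3 - 3 * t ^ 2 * vieteRoot t d = 2 * d := by
  have hd' : |d / t ^ 3| ≤ 1 := by
    rwa [abs_div, abs_of_pos (pow_pos ht 3), div_le_one (pow_pos ht 3)]
  have hcos := Real.cos_three_mul (Real.arccos (d / t ^ 3) / 3)
  rw [mul_div_cancel₀ _ three_ne_zero, Real.cos_arccos (abs_le.1 hd').1 (abs_le.1 hd').2,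
    div_eq_iff (pow_pos ht 3).ne'] at hcos
  rw [vieteRoot]
  linear_combination -2 * hcos

theorem le_vieteRoot {t : ℝ} (ht : 0 ≤ t) (d : ℝ) : t ≤ vieteRoot t d := by
  have hcos := Real.cos_le_cos_of_nonneg_of_le_pi (by linarith [Real.arccos_nonneg (d / t ^ 3)])
    (by linarith [Real.pi_pos]) (div_le_div_of_nonneg_right (Real.arccos_le_pi (d / t ^ 3))
      zero_le_three)
  rw [Real.cos_pi_div_three] at hcos
  rw [vieteRoot]
  nlinarith

theorem lt_vieteRoot {t d : ℝ} (ht : 0 < t) (hd : |d| < t ^ 3) : t < vieteRoot t d := by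
  refine (le_vieteRoot ht.le d).lt_of_ne fun heq ↦ ?_
  have := vieteRoot_cube_sub ht hd.le
  rw [← heq] at this
  linarith [neg_lt_of_abs_lt hd]

theorem differentiableAt_vieteRoot {t d : ℝ} (ht : 0 < t) (hd : |d| < t ^ 3) :
    DifferentiableAt ℝ (vieteRoot t) d := by
  have hd' : |d / t ^ 3| < 1 := by
    rwa [abs_div, abs_of_pos (pow_pos ht 3), div_lt_one (pow_pos ht 3)]
  have harccos := Real.differentiableAt_arccos.2
    ⟨(neg_lt_of_abs_lt hd').ne', (lt_of_abs_lt hd').ne⟩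
  unfold vieteRoot
  exact (((harccos.comp (f := (· / t ^ 3)) d (by fun_prop)).div_const 3).cos).const_mul _

variable {a b c : ℝ}

theorem kTransform_fourStepSymbol_polarInv {r : ℝ → ℝ} {θ : ℝ} (hr : r θ ≠ 0)
    (hcubic : r θ ^ 3 - b * r θ = 2 * (c * Real.cos θ)) :
    kTransform (fourStepSymbol a b c) (polarInv r θ) =
      ((a + 2 * r θ * Real.cos θ - c / r θ ^ 2 : ℝ) : ℂ) := by
  have hinv : (polarInv r θ)⁻¹ = r θ * (Real.cos θ + Real.sin θ * Complex.I) := by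
    simp [polarInv, Complex.exp_mul_I]
  have hsin := congrArg ((↑) : ℝ → ℂ) (Real.sin_sq_add_cos_sq θ)
  have hcubic' := congrArg ((↑) : ℝ → ℂ) hcubic
  have hr' : (r θ : ℂ) ≠ 0 := Complex.ofReal_ne_zero.2 hr
  rw [kTransform_fourStepSymbol, hinv, polarInv_eq]
  push_cast at hsin hcubic' ⊢
  field_simp
  linear_combination (Complex.sin θ * Complex.I - Complex.cos θ) * hcubic' - c * hsin +
    c * Complex.sin θ ^ 2 * Complex.I_sq

theorem isRealLevelCurve_fourStepSymbol {r : ℝ → ℝ} (hcont : Continuous r) (hpos : ∀ θ, 0 < r θ)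
    (hdiff : ∀ θ ∈ Set.Ioo 0 Real.pi, DifferentiableAt ℝ r θ)
    (hcubic : ∀ θ, r θ ^ 3 - b * r θ = 2 * (c * Real.cos θ))
    (hb : ∀ θ ∈ Set.Ioo 0 Real.pi, b < 3 * r θ ^ 2) :
    IsRealLevelCurve (fourStepSymbol a b c) r
      fun θ ↦ a + 2 * r θ * Real.cos θ - c / r θ ^ 2 where
  continuous := hcont
  pos := hpos
  differentiableAt := hdiff
  kTransform_eq θ := kTransform_fourStepSymbol_polarInv (hpos θ).ne' (hcubic θ)
  deriv_nonpos θ hθ := by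
    have hr := (hdiff θ hθ).hasDerivAt
    have hr0 := hpos θ
    have hcos := Real.hasDerivAt_cos θ
    have hr' : (3 * r θ ^ 2 - b) * deriv r θ = -2 * c * Real.sin θ := by
      have hlhs := (hr.pow 3).sub (hr.const_mul b)
      have hrhs := (hcos.const_mul c).const_mul 2
      have := hlhs.unique (hrhs.congr_of_eventuallyEq (.of_forall hcubic))
      linear_combination this
    have hx := (((hr.const_mul 2).fun_mul hcos).const_add a).fun_sub
      ((hasDerivAt_const θ c).fun_div (hr.fun_pow 2) (pow_pos hr0 2).ne')
    have hfactor : deriv (fun θ ↦ a + 2 * r θ * Real.cos θ - c / r θ ^ 2) θ *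
        ((3 * r θ ^ 2 - b) * r θ ^ 3) = -(Real.sin θ *
          ((r θ * (3 * r θ ^ 2 - b)) ^ 2 + (2 * c * Real.sin θ) ^ 2)) := by
      rw [hx.deriv]
      field_simp
      linear_combination (2 * r θ ^ 4 * Real.cos θ + 2 * c * r θ) * hr' +
        r θ * Real.sin θ * (3 * r θ ^ 3 - b * r θ + 2 * c * Real.cos θ) * hcubic θ +
        4 * r θ * c ^ 2 * Real.sin θ * Real.sin_sq_add_cos_sq θ
    have hprod : 0 < (3 * r θ ^ 2 - b) * r θ ^ 3 :=
      mul_pos (sub_pos.2 (hb θ hθ)) (pow_pos hr0 3)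
    refine nonpos_of_mul_nonpos_left ?_ hprod
    rw [hfactor, neg_nonpos]
    exact mul_nonneg (Real.sin_pos_of_mem_Ioo hθ).le (by positivity)

theorem exists_isRealLevelCurve_vieteRoot {t : ℝ} (ht : 0 < t) (hc : |c| ≤ t ^ 3) :
    ∃ x, IsRealLevelCurve (fourStepSymbol a (3 * t ^ 2) c)
      (fun θ ↦ vieteRoot t (c * Real.cos θ)) x := by
  have hle : ∀ θ, |c * Real.cos θ| ≤ t ^ 3 := fun θ ↦ by
    rw [abs_mul]
    exact (mul_le_of_le_one_right (abs_nonneg c) (Real.abs_cos_le_one θ)).trans hc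
  have hlt : ∀ θ ∈ Set.Ioo 0 Real.pi, |c * Real.cos θ| < t ^ 3 := fun θ hθ ↦ by
    have hcos : |Real.cos θ| < 1 := by
      rw [← sq_lt_one_iff_abs_lt_one]
      nlinarith [Real.sin_sq_add_cos_sq θ, Real.sin_pos_of_mem_Ioo hθ]
    rw [abs_mul]
    rcases eq_or_ne c 0 with rfl | hc0
    · simpa using pow_pos ht 3
    · exact (mul_lt_of_lt_one_right (abs_pos.2 hc0) hcos).trans_le hc
  refine ⟨_, isRealLevelCurve_fourStepSymbol
    ((continuous_vieteRoot t).comp (Real.continuous_cos.const_mul c))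
    (fun θ ↦ ht.trans_le (le_vieteRoot ht.le _)) (fun θ hθ ↦ ?_)
    (fun θ ↦ vieteRoot_cube_sub ht (hle θ)) fun θ hθ ↦ ?_⟩
  · exact (differentiableAt_vieteRoot ht (hlt θ hθ)).comp (f := fun θ ↦ c * Real.cos θ) θ
      (Real.differentiableAt_cos.const_mul c)
  · have := lt_vieteRoot ht (hlt θ hθ)
    gcongr

theorem exists_integral_eq_zero_of_sq_le_cube (h : 27 * c ^ 2 ≤ b ^ 3) {P : ℕ → ℝ[X]}
    (hP : IsHessenbergSeq (border (toeplitz (fourStepSymbol a b c))) P) :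
    ∃ ν : Measure ℝ, IsProbabilityMeasure ν ∧ (∀ n : ℕ, Integrable (fun x ↦ x ^ n) ν) ∧
      ∀ n, 1 ≤ n → ∫ x, (P n).eval x ∂ν = 0 := by
  have hb : 0 ≤ b := (Odd.pow_nonneg_iff (by decide)).1 (le_trans (by positivity) h)
  rcases hb.eq_or_lt with rfl | hb
  · obtain rfl : c = 0 := by nlinarith [sq_nonneg c]
    have hR : fourStepSymbol a 0 0 = C a := by simp [fourStepSymbol]
    have hQ := isHessenbergSeq_hessenbergSeq (toeplitz (C a))
    rw [hR] at hP
    refine exists_integral_eq_zero_of_border_of_integral_eq_zero (μ := .dirac ())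
      (x := fun _ ↦ a) (memLp_const _) hP hQ fun n hn ↦ ?_
    obtain ⟨m, rfl⟩ := Nat.exists_eq_add_of_le' hn
    simp [hQ.eval_succ_eq_zero_of_toeplitz_C]
  · have ht : 0 < √(b / 3) := Real.sqrt_pos.2 (by positivity)
    have hbt : b = 3 * √(b / 3) ^ 2 := by rw [Real.sq_sqrt (by positivity)]; ring
    have hc : |c| ≤ √(b / 3) ^ 3 := by
      refine abs_le_of_sq_le_sq ?_ (by positivity)
      rw [hbt] at h
      linarith
    rw [hbt] at hP
    obtain ⟨x, hx⟩ := exists_isRealLevelCurve_vieteRoot ht hc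
    exact hx.exists_integral_eq_zero hP

theorem isHessenbergSeq_of_fourStepRecursion {a b c : ℝ} {P : ℕ → ℝ[X]} (hP0 : P 0 = 1)
    (hP1 : P 1 = X) (hrec1 : X * P 1 = P 2 + C a * P 1 + P 0)
    (hrec2 : X * P 2 = P 3 + C a * P 2 + C b * P 1)
    (hrecn : ∀ n : ℕ, 3 ≤ n →
      X * P n = P (n + 1) + C a * P n + C b * P (n - 1) + C c * P (n - 2)) :
    IsHessenbergSeq (border (toeplitz (fourStepSymbol a b c))) P where
  zero := hP0
  X_mul n := by
    match n with
    | 0 => simp [border, hP0, hP1]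
    | 1 =>
      have hsum : ∑ k ∈ range 2, border (toeplitz (fourStepSymbol a b c)) 1 k • P k =
          P 0 + C a * P 1 := by
        simp [border, toeplitz, fourStepSymbol, sum_range_succ, smul_eq_C_mul]
      rw [hrec1, hsum]
      ring
    | 2 =>
      have hsum : ∑ k ∈ range 3, border (toeplitz (fourStepSymbol a b c)) 2 k • P k =
          C b * P 1 + C a * P 2 := by
        simp [border, toeplitz, fourStepSymbol, sum_range_succ, smul_eq_C_mul]
      rw [hrec2, hsum]
      ring
    | n + 3 =>
      have hsum : ∑ k ∈ range (n + 1 + 3),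
          border (toeplitz (fourStepSymbol a b c)) (n + 3) k • P k =
            C c * P (n + 1) + C b * P (n + 2) + C a * P (n + 3) := by
        rw [sum_range_succ, sum_range_succ, sum_range_succ, sum_eq_zero fun k hk ↦ ?_]
        · simp [border, toeplitz, fourStepSymbol, smul_eq_C_mul]
        · rw [border_eq_zero_of_add_lt one_le_two (toeplitz_eq_zero_of_add_lt
            (natDegree_fourStepSymbol_le a b c)) _ _ (by grind), zero_smul]
      rw [hrecn (n + 3) (by lia), hsum, Nat.add_sub_cancel_right (n + 1) 2,
        Nat.add_sub_cancel_right (n + 2) 1]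
      ring

end FourStep

/-- Polynomials given by the 4-step recursion (with `P₀ = 1`, `P₁ = x`) are
`ν-2`-orthogonal for some probability measure `ν` with all moments finite
if and only if `b³ ≥ 27c²`. -/
theorem four_step_recursion_orthogonality (a b c : ℝ) (P : ℕ → Polynomial ℝ)
    (hP0 : P 0 = 1) (hP1 : P 1 = Polynomial.X)
    (hrec1 : Polynomial.X * P 1 = P 2 + Polynomial.C a * P 1 + P 0)
    (hrec2 : Polynomial.X * P 2 = P 3 + Polynomial.C a * P 2 + Polynomial.C b * P 1)
    (hrecn : ∀ n : ℕ, 3 ≤ n → Polynomial.X * P n =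
      P (n + 1) + Polynomial.C a * P n + Polynomial.C b * P (n - 1)
        + Polynomial.C c * P (n - 2)) :
    b ^ 3 ≥ 27 * c ^ 2 ↔
      ∃ ν : Measure ℝ, IsProbabilityMeasure ν ∧
        (∀ n : ℕ, Integrable (fun x : ℝ => x ^ n) ν) ∧
        NuDOrthogonal ν 2 P := by
  have hP := isHessenbergSeq_of_fourStepRecursion hP0 hP1 hrec1 hrec2 hrecn
  constructor
  · intro h
    obtain ⟨ν, hν, hmom, hzero⟩ := exists_integral_eq_zero_of_sq_le_cube h hP
    refine ⟨ν, hν, hmom, nuDOrthogonal_of_isHessenbergSeq hmom hP ?_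
      (fun _ ↦ border_zero_right_eq_zero) hzero⟩
    exact border_eq_zero_of_add_lt one_le_two
      (toeplitz_eq_zero_of_add_lt (natDegree_fourStepSymbol_le a b c))
  · rintro ⟨ν, hν, hmom, hzero, -⟩
    exact sq_le_cube_of_integral_eq_zero hP hmom hzero
end
end
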